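/- Fix α ∈ (0,1/2). Suppose there exist constants 0 < c₁ ≤ C₁ and 0 < c₂ < 1/4 such that c₁ ≤ σ̲²(q) ≤ σ̄²(r) ∨ σ̄²(q) ≤ C₁, max{m·b_r, (r/q)·log² p} ≤ C₁·n^{−c₂}, and q·D_n·log^{5/2}(pn) ≤ C₁·n^{1/2−c₂}. Then there exist positive constants c, C depending only on c₁, c₂, C₁ such that: (i) under H₀ (μ_j ≤ 0 for all j), Pr(Ť > ĉ^{BMB}(α)) ≤ α + C·n^{−c}; and (ii) if μ_j = 0 for all j, then |Pr(Ť > ĉ^{BMB}(α)) − α| ≤ C·n^{−c}. -/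

import Mathlib

/-!
The test statistic and its bootstrap version are both compared with maxima of sums of *independent*
large-block sums, and the comparison of those is done by a smoothing argument.

*Independent blocks.* Let `x_1, …, x_m` be independent vectors bounded by `b`, with coordinatewise
variances between `lo` and `v`. The smooth maximum `β⁻¹ log ∑_j exp (β z_j)` is within
`β⁻¹ log p` of the maximum, and a smooth cut-off of it is a smooth proxy for the distribution
function of the maximum. Lindeberg's method, carried out with a fourth order Taylor expansion,
replaces `∑ x_l` by `∑ ε_l x_l` (`ε_l` standard normal): first and second moments agree, the third
moment enters through a bound `τ` on the third mixed moments of the blocks, and the remainder is of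
order `β⁴ b² v` per block (`lindErr`). The fourth order is essential: it is what allows the power
`5/2` of the logarithm, because under mixing the third moments of block sums are of smaller order.
Conditionally on the data, `∑ ε_l x_l` is Gaussian, so its maximum is anti-concentrated (`acErr`);
the proof slices the space into disjoint Cameron–Martin translates of the events on which a
given coordinate is the first maximiser. Applying the same replacement to the pair
`(∑ ε_l x_l, ∑ ε'_l x_l)` bounds the variance of the conditional distribution function of
`max_j ∑ ε_l x_lj`, so the latter concentrates around the unconditional one, and hence around the
distribution function of `max_j ∑ x_lj`.

*Mixing.* The `β`-mixing coefficient controls the total variation distance between the joint law of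
separated blocks and the product of their laws; iterating over the blocks replaces the large blocks
(and the small ones) by independent copies at a cost of order `m b_r`. The same coefficient gives a
covariance inequality, which bounds the third moments of a block sum by splitting off
windows of length comparable to `r` around a given index.

*Conclusion.* The small blocks, the leftover observations and the recentring by the sample mean are
negligible by exponential and Chebyshev inequalities. The approximations then transfer to the
conditional quantile `cBMB` by trapping it between two deterministic quantiles (`size_of_param`).
Under `μ_j ≤ 0` the statistic is dominated by its centred version, which gives the one-sided bound.
With `L = log (p n)` and `y = n ^ (c₂ / 60)`, the choices `β = L^{3/2} y⁶`, `H = 2 √L`, `ε = 1 / y`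
make all error terms at most `ε` as soon as `y` exceeds a constant (`numHyp_of`,
`paramHyp_of_num`); for smaller `n` the bound is trivial.
-/

/-!
Formalization of results from "Testing Many Moment Inequalities"
(Chernozhukov, Chetverikov, Kato).

We model an i.i.d. sample `X_1, …, X_n` of random vectors in `ℝ^p` with common
distribution `Q` by the coordinate process on the product space
`Fin n → (Fin p → ℝ)` equipped with the product measure `sampLaw n Q`.
Conditional bootstrap quantiles (given the data) are represented by taking, for
each realized sample, the quantile of the corresponding bootstrap statistic
under a fresh product measure (standard Gaussian multipliers for the multiplier
bootstrap, uniform resampling indices for the empirical bootstrap).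
-/

open MeasureTheory ProbabilityTheory Filter
open scoped ENNReal NNReal BigOperators Classical

noncomputable section

namespace ManyMoment

/-- Standard normal CDF `Φ`. -/
def Phi (x : ℝ) : ℝ := ((gaussianReal 0 1) (Set.Iic x)).toReal

/-- Standard normal quantile function `Φ⁻¹`. -/
def PhiInv (a : ℝ) : ℝ := sInf {x : ℝ | a ≤ Phi x}

/-- One-step self-normalized (SN) critical value `c^{SN}(a)`. -/
def cSN (n p : ℕ) (a : ℝ) : ℝ :=
  PhiInv (1 - a / (p : ℝ)) / Real.sqrt (1 - PhiInv (1 - a / (p : ℝ)) ^ 2 / (n : ℝ))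

/-- Product of `n` standard Gaussian distributions (law of the multipliers). -/
def gaussPi (n : ℕ) : Measure (Fin n → ℝ) := Measure.pi fun _ => gaussianReal 0 1

/-- Product of `n` uniform distributions on `Fin n` (law of resampling indices). -/
def unifPi (n : ℕ) : Measure (Fin n → Fin n) :=
  Measure.pi fun _ => (n : ℝ≥0∞)⁻¹ • Measure.count

variable {ι : Type*} [Fintype ι]

/-- Sample mean `μ̂_j`. -/
def muHatD (n : ℕ) (d : Fin n → ι → ℝ) (j : ι) : ℝ := (∑ i, d i j) / (n : ℝ)

/-- Sample standard deviation `σ̂_j`. -/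
def sigmaHatD (n : ℕ) (d : Fin n → ι → ℝ) (j : ι) : ℝ :=
  Real.sqrt ((∑ i, (d i j - muHatD n d j) ^ 2) / (n : ℝ))

/-- The test statistic `T = max_j √n μ̂_j / σ̂_j`. -/
def TstatD (n : ℕ) (d : Fin n → ι → ℝ) : ℝ :=
  ⨆ j : ι, Real.sqrt n * muHatD n d j / sigmaHatD n d j

/-- Multiplier bootstrap statistic `W^{MB}` (as a function of the multipliers `e`). -/
def WMBD (n : ℕ) (d : Fin n → ι → ℝ) (e : Fin n → ℝ) : ℝ :=
  ⨆ j : ι, Real.sqrt n * ((∑ i, e i * (d i j - muHatD n d j)) / (n : ℝ)) / sigmaHatD n d j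

/-- One-step multiplier bootstrap critical value: conditional `(1-a)`-quantile of `W^{MB}`
given the data `d`. -/
def cMBD (n : ℕ) (d : Fin n → ι → ℝ) (a : ℝ) : ℝ :=
  sInf {t : ℝ | 1 - a ≤ (gaussPi n {e | WMBD n d e ≤ t}).toReal}

/-- Empirical bootstrap statistic `W^{EB}` (as a function of the resampling indices `k`). -/
def WEBD (n : ℕ) (d : Fin n → ι → ℝ) (k : Fin n → Fin n) : ℝ :=
  ⨆ j : ι, Real.sqrt n * ((∑ i, (d (k i) j - muHatD n d j)) / (n : ℝ)) / sigmaHatD n d j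

/-- One-step empirical bootstrap critical value: conditional `(1-a)`-quantile of `W^{EB}`
given the data `d`. -/
def cEBD (n : ℕ) (d : Fin n → ι → ℝ) (a : ℝ) : ℝ :=
  sInf {t : ℝ | 1 - a ≤ (unifPi n {k | WEBD n d k ≤ t}).toReal}

/-- Multiplier bootstrap statistic restricted to a set `J` of inequalities (0 if `J = ∅`). -/
def WMBDsel (n : ℕ) (J : Finset ι) (d : Fin n → ι → ℝ) (e : Fin n → ℝ) : ℝ :=
  if h : J.Nonempty then
    J.sup' h fun j => Real.sqrt n * ((∑ i, e i * (d i j - muHatD n d j)) / (n : ℝ)) / sigmaHatD n d j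
  else 0

/-- Empirical bootstrap statistic restricted to a set `J` of inequalities (0 if `J = ∅`). -/
def WEBDsel (n : ℕ) (J : Finset ι) (d : Fin n → ι → ℝ) (k : Fin n → Fin n) : ℝ :=
  if h : J.Nonempty then
    J.sup' h fun j => Real.sqrt n * ((∑ i, (d (k i) j - muHatD n d j)) / (n : ℝ)) / sigmaHatD n d j
  else 0

/-- Conditional `lvl`-quantile of the restricted multiplier bootstrap statistic. -/
def quantMBsel (n : ℕ) (J : Finset ι) (d : Fin n → ι → ℝ) (lvl : ℝ) : ℝ :=
  sInf {t : ℝ | lvl ≤ (gaussPi n {e | WMBDsel n J d e ≤ t}).toReal}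

/-- Conditional `lvl`-quantile of the restricted empirical bootstrap statistic. -/
def quantEBsel (n : ℕ) (J : Finset ι) (d : Fin n → ι → ℝ) (lvl : ℝ) : ℝ :=
  sInf {t : ℝ | lvl ≤ (unifPi n {k | WEBDsel n J d k ≤ t}).toReal}

/-- The SN-selected set `Ĵ_{SN} = {j : √n μ̂_j/σ̂_j > -2 c^{SN}(b)}`. -/
def JhatSN (n p : ℕ) (b : ℝ) (d : Fin n → Fin p → ℝ) : Finset (Fin p) :=
  Finset.univ.filter fun j =>
    -2 * cSN n p b < Real.sqrt n * muHatD n d j / sigmaHatD n d j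

/-- `k̂ = |Ĵ_{SN}|`. -/
def khat (n p : ℕ) (b : ℝ) (d : Fin n → Fin p → ℝ) : ℕ := (JhatSN n p b d).card

/-- Two-step SN critical value `c^{SN,2S}(a)` (with selection at level `b`). -/
def cSN2S (n p : ℕ) (a b : ℝ) (d : Fin n → Fin p → ℝ) : ℝ :=
  if khat n p b d = 0 then 0
  else
    PhiInv (1 - (a - 2 * b) / (khat n p b d : ℝ)) /
      Real.sqrt (1 - PhiInv (1 - (a - 2 * b) / (khat n p b d : ℝ)) ^ 2 / (n : ℝ))

/-- The MB-selected set `Ĵ_{MB} = {j : √n μ̂_j/σ̂_j > -2 c^{MB}(b)}`. -/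
def JhatMB (n : ℕ) (b : ℝ) (d : Fin n → ι → ℝ) : Finset ι :=
  Finset.univ.filter fun j =>
    -2 * cMBD n d b < Real.sqrt n * muHatD n d j / sigmaHatD n d j

/-- The EB-selected set `Ĵ_{EB} = {j : √n μ̂_j/σ̂_j > -2 c^{EB}(b)}`. -/
def JhatEB (n : ℕ) (b : ℝ) (d : Fin n → ι → ℝ) : Finset ι :=
  Finset.univ.filter fun j =>
    -2 * cEBD n d b < Real.sqrt n * muHatD n d j / sigmaHatD n d j

/-- Two-step multiplier bootstrap critical value `c^{MB,2S}(a)`: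
conditional `(1-a+2b)`-quantile of the restricted MB statistic. -/
def cMB2S (n : ℕ) (a b : ℝ) (d : Fin n → ι → ℝ) : ℝ :=
  quantMBsel n (JhatMB n b d) d (1 - a + 2 * b)

/-- Two-step empirical bootstrap critical value `c^{EB,2S}(a)`. -/
def cEB2S (n : ℕ) (a b : ℝ) (d : Fin n → ι → ℝ) : ℝ :=
  quantEBsel n (JhatEB n b d) d (1 - a + 2 * b)

/-- Hybrid MB critical value `c^{MB,H}(a)` (SN selection, MB quantile). -/
def cMBH (n p : ℕ) (a b : ℝ) (d : Fin n → Fin p → ℝ) : ℝ :=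
  quantMBsel n (JhatSN n p b d) d (1 - a + 2 * b)

/-- Hybrid EB critical value `c^{EB,H}(a)` (SN selection, EB quantile). -/
def cEBH (n p : ℕ) (a b : ℝ) (d : Fin n → Fin p → ℝ) : ℝ :=
  quantEBsel n (JhatSN n p b d) d (1 - a + 2 * b)

/-- Population mean `μ_j = E[X_{1j}]` under the common distribution `Q`. -/
def popMean (Q : Measure (ι → ℝ)) (j : ι) : ℝ := ∫ x, x j ∂Q

/-- Population standard deviation `σ_j = (Var X_{1j})^{1/2}`. -/
def popSD (Q : Measure (ι → ℝ)) (j : ι) : ℝ := Real.sqrt (variance (fun x => x j) Q)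

/-- Standardized coordinate `Z_{1j} = (X_{1j} - μ_j)/σ_j`. -/
def Znorm (Q : Measure (ι → ℝ)) (j : ι) (x : ι → ℝ) : ℝ := (x j - popMean Q j) / popSD Q j

/-- `M_{n,k} = max_j (E|Z_{1j}|^k)^{1/k}`. -/
def Mnk (Q : Measure (ι → ℝ)) (k : ℕ) : ℝ :=
  ⨆ j : ι, (∫ x, |Znorm Q j x| ^ k ∂Q) ^ ((k : ℝ)⁻¹)

/-- `B_n = (E[max_j Z_{1j}^4])^{1/4}`. -/
def Bn4 (Q : Measure (ι → ℝ)) : ℝ :=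
  (∫ x, ⨆ j : ι, Znorm Q j x ^ 4 ∂Q) ^ ((4 : ℝ)⁻¹)

/-- Law of an i.i.d. sample of size `n` drawn from `Q`. -/
def sampLaw (n : ℕ) (Q : Measure (ι → ℝ)) : Measure (Fin n → ι → ℝ) :=
  Measure.pi fun _ => Q

end ManyMoment

namespace ManyMoment

/-! ### Dependent data: blocks, mixing coefficients, block multiplier bootstrap

The sample `X_1,…,X_n` (possibly dependent, identically distributed) is modeled as the
coordinate process on `Fin n → (Fin p → ℝ)` under a joint law `Pm`. -/

/-- Sum of the coordinates `X_{ij}`, `i ∈ {a+1,…,a+q}` (0-based: `a ≤ i < a+q`). -/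
def blockSum (n p : ℕ) (a q : ℕ) (j : Fin p) (ω : Fin n → Fin p → ℝ) : ℝ :=
  ∑ i : Fin n, if a ≤ (i : ℕ) ∧ (i : ℕ) < a + q then ω i j else 0

/-- `σ̄²(q) = max_j max_I Var(q^{-1/2} Σ_{i∈I} X_{ij})` over blocks `I` of length `q`. -/
def sigmaBarSq (n p : ℕ) (Pm : Measure (Fin n → Fin p → ℝ)) (q : ℕ) : ℝ :=
  ⨆ j : Fin p, ⨆ a : Fin (n - q + 1),
    variance (fun ω => blockSum n p (a : ℕ) q j ω / Real.sqrt q) Pm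

/-- `σ̲²(q) = min_j min_I Var(q^{-1/2} Σ_{i∈I} X_{ij})` over blocks `I` of length `q`. -/
def sigmaLowSq (n p : ℕ) (Pm : Measure (Fin n → Fin p → ℝ)) (q : ℕ) : ℝ :=
  ⨅ j : Fin p, ⨅ a : Fin (n - q + 1),
    variance (fun ω => blockSum n p (a : ℕ) q j ω / Real.sqrt q) Pm

/-- The `β`-dependence coefficient between two sub-σ-fields: half the supremum over finite
measurable partitions of `Σ_i Σ_j |Pm(A_i ∩ B_j) - Pm(A_i)Pm(B_j)|`. -/
def betaDep {Ω : Type*} [MeasurableSpace Ω] (Pm : Measure Ω)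
    (m₁ m₂ : MeasurableSpace Ω) : ℝ :=
  (1 / 2) * sSup {x : ℝ |
    ∃ (I J : ℕ) (A : Fin I → Set Ω) (B : Fin J → Set Ω),
      (∀ i, MeasurableSet[m₁] (A i)) ∧ Pairwise (Function.onFun Disjoint A) ∧
      (⋃ i, A i) = Set.univ ∧
      (∀ j, MeasurableSet[m₂] (B j)) ∧ Pairwise (Function.onFun Disjoint B) ∧
      (⋃ j, B j) = Set.univ ∧
      x = ∑ i, ∑ j, |(Pm (A i ∩ B j)).toReal - (Pm (A i)).toReal * (Pm (B j)).toReal|}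

/-- σ-field generated by the coordinates `X_i`, `i < l` (0-based), i.e. `σ(X_1,…,X_l)`. -/
def sigmaUpTo (n p : ℕ) (l : ℕ) : MeasurableSpace (Fin n → Fin p → ℝ) :=
  ⨆ i : Fin n, ⨆ _ : (i : ℕ) < l, MeasurableSpace.comap (fun ω => ω i) inferInstance

/-- σ-field generated by the coordinates `X_i`, `i ≥ a` (0-based). -/
def sigmaFrom (n p : ℕ) (a : ℕ) : MeasurableSpace (Fin n → Fin p → ℝ) :=
  ⨆ i : Fin n, ⨆ _ : a ≤ (i : ℕ), MeasurableSpace.comap (fun ω => ω i) inferInstance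

/-- The `k`-th `β`-mixing coefficient
`b_k = max_{1 ≤ l ≤ n-k} β(σ(X_1,…,X_l), σ(X_{l+k},…,X_n))`. -/
def bmix (n p : ℕ) (Pm : Measure (Fin n → Fin p → ℝ)) (k : ℕ) : ℝ :=
  ⨆ l : Fin (n - k),
    betaDep Pm (sigmaUpTo n p ((l : ℕ) + 1)) (sigmaFrom n p ((l : ℕ) + k))

/-- Number of large blocks `m = ⌊n/(q+r)⌋`. -/
def nBlocks (n q r : ℕ) : ℕ := n / (q + r)

/-- Centered large-block sum `Σ_{i ∈ I_l} (X_{ij} - μ̂_j)` for the `l`-th large block. -/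
def blockSumC (n p : ℕ) (a q : ℕ) (j : Fin p) (ω : Fin n → Fin p → ℝ) : ℝ :=
  ∑ i : Fin n, if a ≤ (i : ℕ) ∧ (i : ℕ) < a + q then ω i j - muHatD n ω j else 0

/-- Block multiplier bootstrap statistic
`W̌ = max_j (mq)^{-1/2} Σ_l ε_l Σ_{i∈I_l} (X_{ij} - μ̂_j)` as a function of the
block multipliers `e`. -/
def WBMB (n p q r : ℕ) (ω : Fin n → Fin p → ℝ) (e : Fin (nBlocks n q r) → ℝ) : ℝ :=
  ⨆ j : Fin p,
    (∑ l : Fin (nBlocks n q r), e l * blockSumC n p ((l : ℕ) * (q + r)) q j ω) /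
      Real.sqrt ((nBlocks n q r * q : ℕ))

/-- BMB critical value: conditional `(1-a)`-quantile of `W̌` given the data. -/
def cBMB (n p q r : ℕ) (a : ℝ) (ω : Fin n → Fin p → ℝ) : ℝ :=
  sInf {t : ℝ | 1 - a ≤ (gaussPi (nBlocks n q r) {e | WBMB n p q r ω e ≤ t}).toReal}

/-- Non-Studentized statistic `Ť = max_j √n μ̂_j`. -/
def TcheckD (n p : ℕ) (ω : Fin n → Fin p → ℝ) : ℝ :=
  ⨆ j : Fin p, Real.sqrt n * muHatD n ω j

/-- Covariance matrix `(mq)⁻¹ Σ_l E[S_{lj} S_{lk}]` of the block sums (for mean-zero data),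
the covariance of the approximating Gaussian vector `Y̌`. -/
def blockCov (n p q r : ℕ) (Pm : Measure (Fin n → Fin p → ℝ)) (j k : Fin p) : ℝ :=
  ((nBlocks n q r * q : ℕ) : ℝ)⁻¹ *
    ∑ l : Fin (nBlocks n q r),
      ∫ ω, blockSum n p ((l : ℕ) * (q + r)) q j ω *
            blockSum n p ((l : ℕ) * (q + r)) q k ω ∂Pm

end ManyMoment

namespace ManyMoment

section

/-! ### One replacement step of the Lindeberg method -/

/-- Exponentially tilted power sum `∑_j y_j^k exp (z_j + s y_j)`. -/
def expSum {J : Type*} [Fintype J] (z y : J → ℝ) (k : ℕ) (s : ℝ) : ℝ :=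
  ∑ j, y j ^ k * Real.exp (z j + s * y j)

/-- `k`-th moment of `y` under the probability weights proportional to `exp (z_j + s y_j)`. -/
def tMom {J : Type*} [Fintype J] (z y : J → ℝ) (k : ℕ) (s : ℝ) : ℝ :=
  expSum z y k s / expSum z y 0 s

section OneStep
variable {J : Type*} [Fintype J]

lemma expSum_zero_pos [Nonempty J] (z y : J → ℝ) (s : ℝ) : 0 < expSum z y 0 s := by
  unfold expSum
  exact Finset.sum_pos (fun j _ => by positivity) Finset.univ_nonempty

lemma hasDerivAt_expSum (z y : J → ℝ) (k : ℕ) (s : ℝ) :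
    HasDerivAt (expSum z y k) (expSum z y (k + 1) s) s := by
  unfold expSum
  apply HasDerivAt.fun_sum
  intro j _
  have h : HasDerivAt (fun s : ℝ => z j + s * y j) (y j) s := by
    simpa using ((hasDerivAt_id s).mul_const (y j)).const_add (z j)
  have := h.exp.const_mul (y j ^ k)
  exact this.congr_deriv (by ring)

lemma hasDerivAt_tMom [Nonempty J] (z y : J → ℝ) (k : ℕ) (s : ℝ) :
    HasDerivAt (tMom z y k) (tMom z y (k + 1) s - tMom z y k s * tMom z y 1 s) s := by
  have h0 := (expSum_zero_pos z y s).ne'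
  have := (hasDerivAt_expSum z y k s).fun_div (hasDerivAt_expSum z y 0 s) h0
  exact this.congr_deriv (by simp only [tMom]; field_simp)

lemma hasDerivAt_logExpSum [Nonempty J] (z y : J → ℝ) (s : ℝ) :
    HasDerivAt (fun s => Real.log (expSum z y 0 s)) (tMom z y 1 s) s :=
  (hasDerivAt_expSum z y 0 s).log (expSum_zero_pos z y s).ne'

lemma tMom_eq_sum (z y : J → ℝ) (k : ℕ) (s : ℝ) :
    tMom z y k s = ∑ j, (Real.exp (z j + s * y j) / expSum z y 0 s) * y j ^ k := by
  unfold tMom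
  conv_lhs => rw [expSum, Finset.sum_div]
  exact Finset.sum_congr rfl fun j _ => by ring

lemma tMom_zero [Nonempty J] (z y : J → ℝ) (s : ℝ) : tMom z y 0 s = 1 :=
  div_self (expSum_zero_pos z y s).ne'

/-- Cauchy–Schwarz for the tilted moments. -/
lemma tMom_sq_le [Nonempty J] (z y : J → ℝ) (a b k : ℕ) (hk : 2 * k = 2 * a + 2 * b) (s : ℝ) :
    tMom z y k s ^ 2 ≤ tMom z y (2 * a) s * tMom z y (2 * b) s := by
  have hS := expSum_zero_pos z y s
  simp only [tMom_eq_sum]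
  apply Finset.sum_sq_le_sum_mul_sum_of_sq_le_mul
  · intro j _
    have : y j ^ (2 * a) = (y j ^ a) ^ 2 := by ring
    rw [this]; positivity
  · intro j _
    have : y j ^ (2 * b) = (y j ^ b) ^ 2 := by ring
    rw [this]; positivity
  · intro j _
    have : (y j ^ k) ^ 2 = y j ^ (2 * a) * y j ^ (2 * b) := by
      rw [← pow_add, ← pow_mul]; congr 1; omega
    rw [mul_pow, this]; exact le_of_eq (by ring)

lemma tMom_four_le [Nonempty J] (z y : J → ℝ) (s : ℝ) (hs : s ∈ Set.Icc (0 : ℝ) 1) :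
    tMom z y 4 s ≤ Real.exp (2 * ‖y‖) * tMom z y 4 0 := by
  have hS := expSum_zero_pos z y s
  have hS0 := expSum_zero_pos z y 0
  have hy : ∀ j, |s * y j| ≤ ‖y‖ := fun j => by
    rw [abs_mul, abs_of_nonneg hs.1]
    calc s * |y j| ≤ 1 * |y j| := by gcongr; exact hs.2
      _ ≤ ‖y‖ := by rw [one_mul]; exact norm_le_pi_norm y j
  have h4 : expSum z y 4 s ≤ Real.exp ‖y‖ * expSum z y 4 0 := by
    unfold expSum
    rw [Finset.mul_sum]
    apply Finset.sum_le_sum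
    intro j _
    have h1 : Real.exp (z j + s * y j) ≤ Real.exp ‖y‖ * Real.exp (z j + 0 * y j) := by
      rw [← Real.exp_add]
      apply Real.exp_le_exp.2
      have := le_abs_self (s * y j); linarith [hy j]
    have h2 : 0 ≤ y j ^ 4 := by positivity
    nlinarith
  have h0 : expSum z y 0 0 ≤ Real.exp ‖y‖ * expSum z y 0 s := by
    unfold expSum
    rw [Finset.mul_sum]
    apply Finset.sum_le_sum
    intro j _
    have h1 : Real.exp (z j + 0 * y j) ≤ Real.exp ‖y‖ * Real.exp (z j + s * y j) := by
      rw [← Real.exp_add]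
      apply Real.exp_le_exp.2
      have := neg_abs_le (s * y j); linarith [hy j]
    simpa using h1
  have h40 : 0 ≤ expSum z y 4 0 := Finset.sum_nonneg fun j _ => by positivity
  unfold tMom
  rw [← mul_div_assoc, div_le_div_iff₀ hS hS0, two_mul, Real.exp_add]
  have he := Real.exp_pos ‖y‖
  calc expSum z y 4 s * expSum z y 0 0
      ≤ (Real.exp ‖y‖ * expSum z y 4 0) * (Real.exp ‖y‖ * expSum z y 0 s) := by gcongr
    _ = _ := by ring

/-- A function on `[0,1]` vanishing at `0` is bounded by any bound on its derivative. -/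
lemma abs_le_of_deriv_bound {h h' : ℝ → ℝ} {C : ℝ} (hd : ∀ s, HasDerivAt h (h' s) s)
    (h0 : h 0 = 0) (hb : ∀ s ∈ Set.Icc (0 : ℝ) 1, |h' s| ≤ C) :
    ∀ s ∈ Set.Icc (0 : ℝ) 1, |h s| ≤ C := by
  intro s hs
  have hC : 0 ≤ C := le_trans (abs_nonneg _) (hb 0 (by simp))
  have := (convex_Icc (0 : ℝ) 1).norm_image_sub_le_of_norm_hasDerivWithin_le
    (f := h) (f' := h') (C := C) (fun x _ => (hd x).hasDerivWithinAt) (fun x hx => hb x hx)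
    (show (0 : ℝ) ∈ Set.Icc (0 : ℝ) 1 by simp) hs
  rw [h0, sub_zero, sub_zero, Real.norm_eq_abs, Real.norm_eq_abs, abs_of_nonneg hs.1] at this
  nlinarith [hs.2]

/-- Third-order Taylor expansion on `[0,1]` with a crude remainder constant. -/
lemma taylor_four {h h1 h2 h3 h4 : ℝ → ℝ} {C : ℝ} (d0 : ∀ s, HasDerivAt h (h1 s) s)
    (d1 : ∀ s, HasDerivAt h1 (h2 s) s) (d2 : ∀ s, HasDerivAt h2 (h3 s) s)
    (d3 : ∀ s, HasDerivAt h3 (h4 s) s) (hb : ∀ s ∈ Set.Icc (0 : ℝ) 1, |h4 s| ≤ C) :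
    |h 1 - h 0 - (h1 0 + h2 0 / 2 + h3 0 / 6)| ≤ C := by
  have e3 : ∀ s ∈ Set.Icc (0 : ℝ) 1, |h3 s - h3 0| ≤ C :=
    abs_le_of_deriv_bound (h' := h4) (fun s => (d3 s).sub_const _) (by simp) hb
  have e2 : ∀ s ∈ Set.Icc (0 : ℝ) 1, |h2 s - h2 0 - h3 0 * s| ≤ C := by
    refine abs_le_of_deriv_bound (h' := fun s => h3 s - h3 0) (fun s => ?_) (by simp) e3
    have := ((d2 s).sub_const (h2 0)).fun_sub ((hasDerivAt_id' s).const_mul (h3 0))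
    exact this.congr_deriv (by ring)
  have e1 : ∀ s ∈ Set.Icc (0 : ℝ) 1, |h1 s - h1 0 - h2 0 * s - h3 0 / 2 * s ^ 2| ≤ C := by
    refine abs_le_of_deriv_bound (h' := fun s => h2 s - h2 0 - h3 0 * s) (fun s => ?_) (by simp) e2
    have := (((d1 s).sub_const (h1 0)).fun_sub ((hasDerivAt_id' s).const_mul (h2 0))).fun_sub
      ((hasDerivAt_pow 2 s).const_mul (h3 0 / 2))
    exact this.congr_deriv (by norm_num; ring)
  have e0 : ∀ s ∈ Set.Icc (0 : ℝ) 1,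
      |h s - h 0 - h1 0 * s - h2 0 / 2 * s ^ 2 - h3 0 / 6 * s ^ 3| ≤ C := by
    refine abs_le_of_deriv_bound
      (h' := fun s => h1 s - h1 0 - h2 0 * s - h3 0 / 2 * s ^ 2) (fun s => ?_) (by simp) e1
    have := ((((d0 s).sub_const (h 0)).fun_sub ((hasDerivAt_id' s).const_mul (h1 0))).fun_sub
      ((hasDerivAt_pow 2 s).const_mul (h2 0 / 2))).fun_sub ((hasDerivAt_pow 3 s).const_mul (h3 0 / 6))
    exact this.congr_deriv (by norm_num; ring)
  have := e0 1 (by simp)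
  convert this using 2; ring

/-- A smooth real function together with its first four derivatives, all bounded by `K`. -/
structure SmoothCut (K : ℝ) where
  g : ℝ → ℝ
  g1 : ℝ → ℝ
  g2 : ℝ → ℝ
  g3 : ℝ → ℝ
  g4 : ℝ → ℝ
  d0 : ∀ v, HasDerivAt g (g1 v) v
  d1 : ∀ v, HasDerivAt g1 (g2 v) v
  d2 : ∀ v, HasDerivAt g2 (g3 v) v
  d3 : ∀ v, HasDerivAt g3 (g4 v) v
  b1 : ∀ v, |g1 v| ≤ K
  b2 : ∀ v, |g2 v| ≤ K
  b3 : ∀ v, |g3 v| ≤ K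
  b4 : ∀ v, |g4 v| ≤ K
  nonneg : ∀ v, 0 ≤ g v
  le_one : ∀ v, g v ≤ 1

variable {K : ℝ}

/-- The smooth surrogate `g (log ∑_j exp z_j)` of a function of `max_j z_j`. -/
def softF (G : SmoothCut K) (z : J → ℝ) : ℝ := G.g (Real.log (∑ j, Real.exp (z j)))

/-- The Taylor polynomial at `0` (without constant term) of `s ↦ softF G (z + s y)` at `s = 1`. -/
def softT (G : SmoothCut K) (z y : J → ℝ) : ℝ :=
  let κ := Real.log (expSum z y 0 0)
  let M1 := tMom z y 1 0
  let M2 := tMom z y 2 0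
  let M3 := tMom z y 3 0
  G.g1 κ * M1 + (G.g2 κ * M1 ^ 2 + G.g1 κ * (M2 - M1 ^ 2)) / 2 +
    (G.g3 κ * M1 ^ 3 + 3 * G.g2 κ * M1 * (M2 - M1 ^ 2) +
      G.g1 κ * (M3 - 3 * M1 * M2 + 2 * M1 ^ 3)) / 6

lemma softF_taylor [Nonempty J] (G : SmoothCut K) (hK : 0 ≤ K) (z y : J → ℝ) :
    |softF G (z + y) - softF G z - softT G z y| ≤
      100 * K * (Real.exp (2 * ‖y‖) * tMom z y 4 0) := by
  set κ : ℝ → ℝ := fun s => Real.log (expSum z y 0 s) with hκ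
  set M : ℕ → ℝ → ℝ := fun k => tMom z y k with hM
  have dκ : ∀ s, HasDerivAt κ (M 1 s) s := hasDerivAt_logExpSum z y
  have dM : ∀ k s, HasDerivAt (M k) (M (k + 1) s - M k s * M 1 s) s := hasDerivAt_tMom z y
  have dg0 : ∀ s, HasDerivAt (fun s => G.g (κ s)) (G.g1 (κ s) * M 1 s) s :=
    fun s => (G.d0 (κ s)).comp s (dκ s)
  have dg1 : ∀ s, HasDerivAt (fun s => G.g1 (κ s)) (G.g2 (κ s) * M 1 s) s :=
    fun s => (G.d1 (κ s)).comp s (dκ s)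
  have dg2 : ∀ s, HasDerivAt (fun s => G.g2 (κ s)) (G.g3 (κ s) * M 1 s) s :=
    fun s => (G.d2 (κ s)).comp s (dκ s)
  have dg3 : ∀ s, HasDerivAt (fun s => G.g3 (κ s)) (G.g4 (κ s) * M 1 s) s :=
    fun s => (G.d3 (κ s)).comp s (dκ s)
  have key := taylor_four (h := fun s => G.g (κ s)) (h1 := fun s => G.g1 (κ s) * M 1 s)
    (h2 := fun s => G.g2 (κ s) * M 1 s ^ 2 + G.g1 (κ s) * (M 2 s - M 1 s ^ 2))
    (h3 := fun s => G.g3 (κ s) * M 1 s ^ 3 + 3 * G.g2 (κ s) * M 1 s * (M 2 s - M 1 s ^ 2) +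
      G.g1 (κ s) * (M 3 s - 3 * M 1 s * M 2 s + 2 * M 1 s ^ 3))
    (h4 := fun s => G.g4 (κ s) * M 1 s ^ 4 + 6 * G.g3 (κ s) * (M 1 s ^ 2 * (M 2 s - M 1 s ^ 2)) +
      G.g2 (κ s) * (3 * (M 2 s - M 1 s ^ 2) ^ 2 +
        4 * M 1 s * (M 3 s - 3 * M 1 s * M 2 s + 2 * M 1 s ^ 3)) +
      G.g1 (κ s) * (M 4 s - 4 * M 1 s * M 3 s - 3 * M 2 s ^ 2 + 12 * M 1 s ^ 2 * M 2 s
        - 6 * M 1 s ^ 4))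
    (C := 100 * K * (Real.exp (2 * ‖y‖) * tMom z y 4 0)) dg0 ?_ ?_ ?_ ?_
  · convert key using 2
    have e1 : softF G (z + y) = G.g (κ 1) := by
      simp [softF, hκ, expSum]
    have e0 : softF G z = G.g (κ 0) := by
      simp [softF, hκ, expSum]
    rw [e1, e0]; rfl
  · intro s
    have := (dg1 s).fun_mul (dM 1 s)
    exact this.congr_deriv (by ring)
  · intro s
    have := ((dg2 s).fun_mul ((dM 1 s).fun_pow 2)).fun_add ((dg1 s).fun_mul ((dM 2 s).fun_sub ((dM 1 s).fun_pow 2)))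
    exact this.congr_deriv (by push_cast; ring)
  · intro s
    have := (((dg3 s).fun_mul ((dM 1 s).fun_pow 3)).fun_add
      ((((dg2 s).const_mul 3).fun_mul (dM 1 s)).fun_mul ((dM 2 s).fun_sub ((dM 1 s).fun_pow 2)))).fun_add
      ((dg1 s).fun_mul (((dM 3 s).fun_sub (((dM 1 s).const_mul 3).fun_mul (dM 2 s))).fun_add
        (((dM 1 s).fun_pow 3).const_mul 2)))
    exact this.congr_deriv (by push_cast; ring)
  · intro s hs
    refine le_trans ?_ (mul_le_mul_of_nonneg_left (tMom_four_le z y s hs) (by positivity))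
    have q12 : M 1 s ^ 2 ≤ M 2 s := by
      have := tMom_sq_le z y 0 1 1 (by norm_num) s
      simpa [tMom_zero] using this
    have q24 : M 2 s ^ 2 ≤ M 4 s := by
      have := tMom_sq_le z y 0 2 2 (by norm_num) s
      simpa [tMom_zero] using this
    have q3 : M 3 s ^ 2 ≤ M 2 s * M 4 s := by
      have := tMom_sq_le z y 1 2 3 (by norm_num) s
      simpa using this
    generalize M 1 s = x1 at *
    generalize M 2 s = x2 at *
    generalize M 3 s = x3 at *
    have hx4 : tMom z y 4 s = M 4 s := rfl
    rw [hx4]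
    generalize M 4 s = x4 at *
    have x2n : 0 ≤ x2 := le_trans (sq_nonneg _) q12
    have x4n : 0 ≤ x4 := le_trans (sq_nonneg _) q24
    have a1 : |x1 ^ 4| ≤ x4 := by
      rw [abs_of_nonneg (by positivity)]
      calc x1 ^ 4 = (x1 ^ 2) ^ 2 := by ring
        _ ≤ x2 ^ 2 := by gcongr
        _ ≤ x4 := q24
    have a2 : |x1 ^ 2 * x2| ≤ x4 := by
      rw [abs_of_nonneg (by positivity)]
      nlinarith
    have a3 : |x2 ^ 2| ≤ x4 := by rwa [abs_of_nonneg (by positivity)]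
    have a4 : |x1 * x3| ≤ x4 := by
      apply abs_le_of_sq_le_sq _ x4n
      calc (x1 * x3) ^ 2 = x1 ^ 2 * x3 ^ 2 := by ring
        _ ≤ x2 * (x2 * x4) := by gcongr
        _ = x2 ^ 2 * x4 := by ring
        _ ≤ x4 * x4 := by gcongr
        _ = x4 ^ 2 := by ring
    rw [abs_le] at a1 a2 a3 a4
    have B : ∀ a c : ℝ, |a| ≤ K → ∀ N : ℝ, |c| ≤ N * x4 → |a * c| ≤ K * (N * x4) := by
      intro a c ha N hc
      rw [abs_mul]
      exact mul_le_mul ha hc (abs_nonneg _) hK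
    have t1 := B _ (x1 ^ 4) (G.b4 (κ s)) 1 (by rw [abs_le]; constructor <;> linarith)
    have t2 := B _ (x1 ^ 2 * (x2 - x1 ^ 2)) (G.b3 (κ s)) 2 (by
      have : x1 ^ 2 * (x2 - x1 ^ 2) = x1 ^ 2 * x2 - x1 ^ 4 := by ring
      rw [this, abs_le]; constructor <;> linarith)
    have t3 := B _ (3 * (x2 - x1 ^ 2) ^ 2 + 4 * x1 * (x3 - 3 * x1 * x2 + 2 * x1 ^ 3))
      (G.b2 (κ s)) 36 (by
      have : 3 * (x2 - x1 ^ 2) ^ 2 + 4 * x1 * (x3 - 3 * x1 * x2 + 2 * x1 ^ 3) =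
        3 * x2 ^ 2 - 18 * (x1 ^ 2 * x2) + 11 * x1 ^ 4 + 4 * (x1 * x3) := by ring
      rw [this, abs_le]; constructor <;> linarith)
    have t4 := B _ (x4 - 4 * x1 * x3 - 3 * x2 ^ 2 + 12 * x1 ^ 2 * x2 - 6 * x1 ^ 4)
      (G.b1 (κ s)) 26 (by
      have : x4 - 4 * x1 * x3 - 3 * x2 ^ 2 + 12 * x1 ^ 2 * x2 - 6 * x1 ^ 4 =
        x4 - 4 * (x1 * x3) - 3 * x2 ^ 2 + 12 * (x1 ^ 2 * x2) - 6 * x1 ^ 4 := by ring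
      rw [this, abs_le]; constructor <;> linarith)
    rw [abs_le] at t1 t2 t3 t4 ⊢
    have hKx : 0 ≤ K * x4 := by positivity
    constructor <;> nlinarith

end OneStep

end

section

/-! ### Integrated replacement step and the replacement of all summands -/

section Replace
variable {J : Type*} [Fintype J] {Ω Ω' : Type} [MeasurableSpace Ω] [MeasurableSpace Ω']

lemma pow_four_mul_exp_le (x : ℝ) (hx : 0 ≤ x) : x ^ 4 ≤ 24 * Real.exp x := by
  have := Real.pow_div_factorial_le_exp x hx 4
  norm_num [Nat.factorial] at this
  linarith

lemma pow_le_six_exp (x : ℝ) (hx : 0 ≤ x) (k : ℕ) (hk : k ≤ 3) : x ^ k ≤ 6 * Real.exp x := by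
  have := Real.pow_div_factorial_le_exp x hx k
  have he := Real.exp_pos x
  interval_cases k <;> norm_num [Nat.factorial] at this ⊢ <;> linarith [Real.add_one_le_exp x]

/-- Monomials of degree at most three are integrable as soon as `exp (3‖Y‖)` is. -/
lemma integrable_of_le_norm_pow {ν : Measure Ω} [IsProbabilityMeasure ν] {Y : Ω → J → ℝ}
    (hexp : Integrable (fun ω => Real.exp (3 * ‖Y ω‖)) ν) {f : Ω → ℝ} (hf : Measurable f)
    (k : ℕ) (hk : k ≤ 3) (hb : ∀ ω, |f ω| ≤ ‖Y ω‖ ^ k) : Integrable f ν := by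
  refine (hexp.const_mul 6).mono' hf.aestronglyMeasurable (ae_of_all _ fun ω => ?_)
  rw [Real.norm_eq_abs]
  refine (hb ω).trans ((pow_le_six_exp _ (norm_nonneg _) k hk).trans ?_)
  have := norm_nonneg (Y ω)
  gcongr; linarith

lemma integrable_exp_mul_pow_four {ν : Measure Ω} [IsProbabilityMeasure ν] {Y : Ω → J → ℝ}
    (hY : Measurable Y)
    (hexp : Integrable (fun ω => Real.exp (3 * ‖Y ω‖)) ν) (j : J) :
    Integrable (fun ω => Real.exp (2 * ‖Y ω‖) * Y ω j ^ 4) ν := by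
  have hj : Measurable fun ω => Y ω j := (measurable_pi_apply j).comp hY
  refine (hexp.const_mul 24).mono' ((by fun_prop : Measurable _).aestronglyMeasurable)
    (ae_of_all _ fun ω => ?_)
  rw [Real.norm_eq_abs, abs_of_nonneg (by positivity)]
  have h1 : Y ω j ^ 4 ≤ ‖Y ω‖ ^ 4 := by
    have := norm_le_pi_norm (Y ω) j
    calc Y ω j ^ 4 = ‖Y ω j‖ ^ 4 := by
          rw [Real.norm_eq_abs, ← abs_pow, abs_of_nonneg (by positivity : 0 ≤ Y ω j ^ 4)]
      _ ≤ _ := by gcongr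
  have h2 := pow_four_mul_exp_le ‖Y ω‖ (norm_nonneg _)
  have h3 : Real.exp (3 * ‖Y ω‖) = Real.exp (2 * ‖Y ω‖) * Real.exp ‖Y ω‖ := by
    rw [← Real.exp_add]; ring_nf
  rw [h3]
  have := Real.exp_pos (2 * ‖Y ω‖)
  nlinarith

/-- The data needed to compare one random vector `Y` under `ν` with another `Y'` under `ν'`:
moments up to order two agree, third moments differ by at most `T3`, and the exponentially
weighted fourth moments are at most `T4`, `T4'`. -/
structure MomMatch (ν : Measure Ω) (ν' : Measure Ω') (Y : Ω → J → ℝ) (Y' : Ω' → J → ℝ)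
    (T3 T4 T4' : ℝ) : Prop where
  hexp : Integrable (fun ω => Real.exp (3 * ‖Y ω‖)) ν
  hexp' : Integrable (fun ω => Real.exp (3 * ‖Y' ω‖)) ν'
  m1 : ∀ j, ∫ ω, Y ω j ∂ν = ∫ ω, Y' ω j ∂ν'
  m2 : ∀ j k, ∫ ω, Y ω j * Y ω k ∂ν = ∫ ω, Y' ω j * Y' ω k ∂ν'
  m3 : ∀ j k l, |∫ ω, Y ω j * Y ω k * Y ω l ∂ν - ∫ ω, Y' ω j * Y' ω k * Y' ω l ∂ν'| ≤ T3
  m4 : ∀ j, ∫ ω, Real.exp (2 * ‖Y ω‖) * Y ω j ^ 4 ∂ν ≤ T4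
  m4' : ∀ j, ∫ ω, Real.exp (2 * ‖Y' ω‖) * Y' ω j ^ 4 ∂ν' ≤ T4'

lemma integral_trilinear {ν : Measure Ω} (Y : Ω → J → ℝ) (w : J → J → J → ℝ)
    (hi : ∀ j k l, Integrable (fun ω => Y ω j * Y ω k * Y ω l) ν) :
    ∫ ω, ∑ j, ∑ k, ∑ l, w j k l * (Y ω j * Y ω k * Y ω l) ∂ν =
      ∑ j, ∑ k, ∑ l, w j k l * ∫ ω, Y ω j * Y ω k * Y ω l ∂ν := by
  have hw : ∀ j k l, Integrable (fun ω => w j k l * (Y ω j * Y ω k * Y ω l)) ν :=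
    fun j k l => (hi j k l).const_mul _
  rw [integral_finsetSum _ fun j _ => integrable_finsetSum _ fun k _ =>
    integrable_finsetSum _ fun l _ => hw j k l]
  refine Finset.sum_congr rfl fun j _ => ?_
  rw [integral_finsetSum _ fun k _ => integrable_finsetSum _ fun l _ => hw j k l]
  refine Finset.sum_congr rfl fun k _ => ?_
  rw [integral_finsetSum _ fun l _ => hw j k l]
  exact Finset.sum_congr rfl fun l _ => integral_const_mul _ _

lemma abs_trilinear_sub_le (w : J → J → J → ℝ) (A A' : J → J → J → ℝ) {T : ℝ}
    (hw : ∀ j k l, 0 ≤ w j k l) (hs : ∑ j, ∑ k, ∑ l, w j k l = 1)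
    (h : ∀ j k l, |A j k l - A' j k l| ≤ T) :
    |∑ j, ∑ k, ∑ l, w j k l * A j k l - ∑ j, ∑ k, ∑ l, w j k l * A' j k l| ≤ T := by
  have e : ∑ j, ∑ k, ∑ l, w j k l * A j k l - ∑ j, ∑ k, ∑ l, w j k l * A' j k l
      = ∑ j, ∑ k, ∑ l, w j k l * (A j k l - A' j k l) := by
    simp only [mul_sub, Finset.sum_sub_distrib]
  rw [e]
  calc |∑ j, ∑ k, ∑ l, w j k l * (A j k l - A' j k l)|
      ≤ ∑ j, ∑ k, ∑ l, w j k l * T := by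
        refine (Finset.abs_sum_le_sum_abs _ _).trans (Finset.sum_le_sum fun j _ => ?_)
        refine (Finset.abs_sum_le_sum_abs _ _).trans (Finset.sum_le_sum fun k _ => ?_)
        refine (Finset.abs_sum_le_sum_abs _ _).trans (Finset.sum_le_sum fun l _ => ?_)
        rw [abs_mul, abs_of_nonneg (hw j k l)]
        exact mul_le_mul_of_nonneg_left (h j k l) (hw j k l)
    _ = T := by simp only [← Finset.sum_mul, hs, one_mul]

lemma tMom_zero_weights [Nonempty J] (z : J → ℝ) : ∃ w : J → ℝ, (∀ j, 0 ≤ w j) ∧ ∑ j, w j = 1 ∧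
    ∀ (y : J → ℝ) (k : ℕ), tMom z y k 0 = ∑ j, w j * y j ^ k := by
  have hpos : 0 < ∑ i, Real.exp (z i) :=
    Finset.sum_pos (fun j _ => by positivity) Finset.univ_nonempty
  refine ⟨fun j => Real.exp (z j) / ∑ i, Real.exp (z i), fun j => by positivity, ?_, ?_⟩
  · rw [← Finset.sum_div, div_self hpos.ne']
  · intro y k
    rw [tMom_eq_sum]
    simp [expSum]

lemma integral_comb {ν : Measure Ω} {a b x y u : Ω → ℝ} (ha : Integrable a ν)
    (hb : Integrable b ν) (hx : Integrable x ν) (hy : Integrable y ν) (hu : Integrable u ν)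
    (c1 c2 c3 : ℝ) :
    Integrable (fun ω => a ω + b ω + (c1 * x ω + c2 * y ω + c3 * u ω)) ν ∧
    ∫ ω, (a ω + b ω + (c1 * x ω + c2 * y ω + c3 * u ω)) ∂ν =
      (∫ ω, a ω ∂ν) + (∫ ω, b ω ∂ν) +
        (c1 * (∫ ω, x ω ∂ν) + c2 * (∫ ω, y ω ∂ν) + c3 * ∫ ω, u ω ∂ν) := by
  have h1 : Integrable (fun ω => a ω + b ω) ν := ha.add hb
  have h2 : Integrable (fun ω => c1 * x ω + c2 * y ω) ν := (hx.const_mul _).add (hy.const_mul _)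
  have h3 : Integrable (fun ω => c1 * x ω + c2 * y ω + c3 * u ω) ν := h2.add (hu.const_mul _)
  refine ⟨h1.add h3, ?_⟩
  rw [integral_add h1 h3, integral_add ha hb, integral_add h2 (hu.const_mul _),
    integral_add (hx.const_mul _) (hy.const_mul _), integral_const_mul, integral_const_mul,
    integral_const_mul]

lemma softT_integral_diff [Nonempty J] {K : ℝ} (G : SmoothCut K) (hK : 0 ≤ K)
    {ν : Measure Ω} [IsProbabilityMeasure ν] {ν' : Measure Ω'} [IsProbabilityMeasure ν']
    {Y : Ω → J → ℝ} {Y' : Ω' → J → ℝ} (hY : Measurable Y) (hY' : Measurable Y') {T3 T4 T4' : ℝ}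
    (H : MomMatch ν ν' Y Y' T3 T4 T4') (z : J → ℝ) :
    Integrable (fun ω => softT G z (Y ω)) ν ∧ Integrable (fun ω => softT G z (Y' ω)) ν' ∧
    |∫ ω, softT G z (Y ω) ∂ν - ∫ ω, softT G z (Y' ω) ∂ν'| ≤ 3 * K * T3 := by
  obtain ⟨w, hw0, hw1, hw⟩ := tMom_zero_weights z
  set κ := Real.log (∑ i, Real.exp (z i)) with hκ
  -- the polynomial as a combination of a linear, a quadratic and three cubic forms
  have expand : ∀ y : J → ℝ, softT G z y =
      (∑ j, (G.g1 κ * w j) * y j) +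
      (∑ j, ∑ k, (((G.g2 κ - G.g1 κ) / 2) * (w j * w k) + G.g1 κ / 2 * (if j = k then w j else 0)) *
        (y j * y k)) +
      ((G.g3 κ - 3 * G.g2 κ + 2 * G.g1 κ) / 6 *
          (∑ j, ∑ k, ∑ l, (w j * w k * w l) * (y j * y k * y l)) +
       (G.g2 κ - G.g1 κ) / 2 *
          (∑ j, ∑ k, ∑ l, (w j * (if k = l then w k else 0)) * (y j * y k * y l)) +
       G.g1 κ / 6 * (∑ j, ∑ k, ∑ l, (if j = k then if k = l then w j else 0 else 0) *
          (y j * y k * y l))) := by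
    intro y
    have k0 : Real.log (expSum z y 0 0) = κ := by simp [expSum, hκ]
    have c1 : (∑ j, w j * y j) ^ 3 = ∑ j, ∑ k, ∑ l, (w j * w k * w l) * (y j * y k * y l) := by
      rw [pow_succ, sq, Finset.sum_mul_sum, Finset.sum_mul]
      refine Finset.sum_congr rfl fun j _ => ?_
      rw [Finset.sum_mul_sum]
      refine Finset.sum_congr rfl fun k _ => Finset.sum_congr rfl fun l _ => by ring
    have c2 : (∑ j, w j * y j) * (∑ j, w j * y j ^ 2) =
        ∑ j, ∑ k, ∑ l, (w j * (if k = l then w k else 0)) * (y j * y k * y l) := by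
      rw [Finset.sum_mul_sum]
      refine Finset.sum_congr rfl fun j _ => Finset.sum_congr rfl fun k _ => ?_
      simp only [mul_ite, ite_mul, mul_zero, zero_mul, Finset.sum_ite_eq, Finset.mem_univ, if_true]
      ring
    have c3 : (∑ j, w j * y j ^ 3) =
        ∑ j, ∑ k, ∑ l, (if j = k then if k = l then w j else 0 else 0) * (y j * y k * y l) := by
      refine Finset.sum_congr rfl fun j _ => ?_
      rw [Finset.sum_eq_single j]
      · simp only [if_true, ite_mul, zero_mul, Finset.sum_ite_eq, Finset.mem_univ]
        ring
      · intro k _ hk; simp [hk.symm]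
      · simp
    have c4 : ∑ j, ∑ k, (((G.g2 κ - G.g1 κ) / 2) * (w j * w k) +
        G.g1 κ / 2 * (if j = k then w j else 0)) * (y j * y k) =
        (G.g2 κ - G.g1 κ) / 2 * (∑ j, w j * y j) ^ 2 + G.g1 κ / 2 * ∑ j, w j * y j ^ 2 := by
      rw [sq, Finset.sum_mul_sum, Finset.mul_sum, Finset.mul_sum, ← Finset.sum_add_distrib]
      refine Finset.sum_congr rfl fun j _ => ?_
      have : ∀ k, (((G.g2 κ - G.g1 κ) / 2) * (w j * w k) +
        G.g1 κ / 2 * (if j = k then w j else 0)) * (y j * y k) =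
        (G.g2 κ - G.g1 κ) / 2 * ((w j * y j) * (w k * y k)) +
          if j = k then G.g1 κ / 2 * (w j * y j ^ 2) else 0 := by
        intro k
        split_ifs with h
        · subst h; ring
        · ring
      rw [Finset.sum_congr rfl fun k _ => this k, Finset.sum_add_distrib, ← Finset.mul_sum]
      simp
    have c5 : ∑ j, (G.g1 κ * w j) * y j = G.g1 κ * ∑ j, w j * y j := by
      rw [Finset.mul_sum]; exact Finset.sum_congr rfl fun j _ => by ring
    rw [← c1, ← c2, ← c3, c4, c5]
    simp only [softT, k0, hw, pow_one]
    ring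
  -- integrability of the monomials
  have key : ∀ {Ω₀ : Type} [MeasurableSpace Ω₀] (ν₀ : Measure Ω₀) [IsProbabilityMeasure ν₀]
      (Y₀ : Ω₀ → J → ℝ), Measurable Y₀ → Integrable (fun ω => Real.exp (3 * ‖Y₀ ω‖)) ν₀ →
      (∀ j, Integrable (fun ω => Y₀ ω j) ν₀) ∧ (∀ j k, Integrable (fun ω => Y₀ ω j * Y₀ ω k) ν₀) ∧
      (∀ j k l, Integrable (fun ω => Y₀ ω j * Y₀ ω k * Y₀ ω l) ν₀) := by
    intro Ω₀ _ ν₀ _ Y₀ hY₀ he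
    have hm : ∀ j, Measurable fun ω => Y₀ ω j := fun j => (measurable_pi_apply j).comp hY₀
    have hn : ∀ ω j, |Y₀ ω j| ≤ ‖Y₀ ω‖ := fun ω j => norm_le_pi_norm (Y₀ ω) j
    refine ⟨fun j => integrable_of_le_norm_pow he (hm j) 1 (by norm_num) fun ω => ?_,
      fun j k => integrable_of_le_norm_pow he ((hm j).mul (hm k)) 2 (by norm_num) fun ω => ?_,
      fun j k l => integrable_of_le_norm_pow he (((hm j).mul (hm k)).mul (hm l)) 3 (by norm_num)
        fun ω => ?_⟩
    · simpa using hn ω j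
    · rw [abs_mul, sq]; gcongr <;> exact hn ω _
    · rw [abs_mul, abs_mul, pow_succ, sq]; gcongr <;> exact hn ω _
  have formula : ∀ {Ω₀ : Type} [MeasurableSpace Ω₀] (ν₀ : Measure Ω₀) [IsProbabilityMeasure ν₀]
      (Y₀ : Ω₀ → J → ℝ), Measurable Y₀ → Integrable (fun ω => Real.exp (3 * ‖Y₀ ω‖)) ν₀ →
      Integrable (fun ω => softT G z (Y₀ ω)) ν₀ ∧
      ∫ ω, softT G z (Y₀ ω) ∂ν₀ =
      (∑ j, (G.g1 κ * w j) * ∫ ω, Y₀ ω j ∂ν₀) +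
      (∑ j, ∑ k, (((G.g2 κ - G.g1 κ) / 2) * (w j * w k) + G.g1 κ / 2 * (if j = k then w j else 0)) *
        ∫ ω, (Y₀ ω j * Y₀ ω k) ∂ν₀) +
      ((G.g3 κ - 3 * G.g2 κ + 2 * G.g1 κ) / 6 *
          (∑ j, ∑ k, ∑ l, (w j * w k * w l) * ∫ ω, Y₀ ω j * Y₀ ω k * Y₀ ω l ∂ν₀) +
       (G.g2 κ - G.g1 κ) / 2 *
          (∑ j, ∑ k, ∑ l, (w j * (if k = l then w k else 0)) * ∫ ω, Y₀ ω j * Y₀ ω k * Y₀ ω l ∂ν₀) +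
       G.g1 κ / 6 * (∑ j, ∑ k, ∑ l, (if j = k then if k = l then w j else 0 else 0) *
          ∫ ω, Y₀ ω j * Y₀ ω k * Y₀ ω l ∂ν₀)) := by
    intro Ω₀ _ ν₀ _ Y₀ hY₀ he
    obtain ⟨i1, i2, i3⟩ := key ν₀ Y₀ hY₀ he
    have I1 : Integrable (fun ω => ∑ j, (G.g1 κ * w j) * Y₀ ω j) ν₀ :=
      integrable_finsetSum _ fun j _ => (i1 j).const_mul _
    have I2 : ∀ v : J → J → ℝ, Integrable (fun ω => ∑ j, ∑ k, v j k * (Y₀ ω j * Y₀ ω k)) ν₀ :=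
      fun v => integrable_finsetSum _ fun j _ => integrable_finsetSum _ fun k _ =>
        (i2 j k).const_mul _
    have I3 : ∀ v : J → J → J → ℝ,
        Integrable (fun ω => ∑ j, ∑ k, ∑ l, v j k l * (Y₀ ω j * Y₀ ω k * Y₀ ω l)) ν₀ :=
      fun v => integrable_finsetSum _ fun j _ => integrable_finsetSum _ fun k _ =>
        integrable_finsetSum _ fun l _ => (i3 j k l).const_mul _
    have f2 : ∀ v : J → J → ℝ, ∫ ω, ∑ j, ∑ k, v j k * (Y₀ ω j * Y₀ ω k) ∂ν₀ =
        ∑ j, ∑ k, v j k * ∫ ω, Y₀ ω j * Y₀ ω k ∂ν₀ := by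
      intro v
      rw [integral_finsetSum _ fun j _ => integrable_finsetSum _ fun k _ => (i2 j k).const_mul _]
      refine Finset.sum_congr rfl fun j _ => ?_
      rw [integral_finsetSum _ fun k _ => (i2 j k).const_mul _]
      exact Finset.sum_congr rfl fun k _ => integral_const_mul _ _
    have f1 : ∫ ω, ∑ j, (G.g1 κ * w j) * Y₀ ω j ∂ν₀ = ∑ j, (G.g1 κ * w j) * ∫ ω, Y₀ ω j ∂ν₀ := by
      rw [integral_finsetSum _ fun j _ => (i1 j).const_mul _]
      exact Finset.sum_congr rfl fun j _ => integral_const_mul _ _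
    simp only [expand]
    obtain ⟨hI, hE⟩ := integral_comb I1 (I2 fun j k => ((G.g2 κ - G.g1 κ) / 2) * (w j * w k) +
        G.g1 κ / 2 * (if j = k then w j else 0)) (I3 fun j k l => w j * w k * w l)
      (I3 fun j k l => w j * (if k = l then w k else 0))
      (I3 fun j k l => if j = k then if k = l then w j else 0 else 0)
      ((G.g3 κ - 3 * G.g2 κ + 2 * G.g1 κ) / 6) ((G.g2 κ - G.g1 κ) / 2) (G.g1 κ / 6)
    refine ⟨hI, hE.trans ?_⟩
    rw [f1, f2, integral_trilinear _ _ i3, integral_trilinear _ _ i3, integral_trilinear _ _ i3]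
  obtain ⟨i, e⟩ := formula ν Y hY H.hexp
  obtain ⟨i', e'⟩ := formula ν' Y' hY' H.hexp'
  refine ⟨i, i', ?_⟩
  rw [e, e']
  simp only [H.m1, H.m2]
  have d1 := abs_trilinear_sub_le (fun j k l => w j * w k * w l) _ _
    (fun j k l => mul_nonneg (mul_nonneg (hw0 j) (hw0 k)) (hw0 l))
    (by simp only [← Finset.mul_sum, hw1, mul_one]) H.m3
  have d2 := abs_trilinear_sub_le (fun j k l => w j * (if k = l then w k else 0)) _ _
    (fun j k l => mul_nonneg (hw0 j) (by split_ifs; exacts [hw0 k, le_rfl]))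
    (by simp [← Finset.mul_sum, hw1]) H.m3
  have d3 := abs_trilinear_sub_le (fun j k l => if j = k then if k = l then w j else 0 else 0) _ _
    (fun j k l => by split_ifs; exacts [hw0 j, le_rfl, le_rfl])
    (by
      rw [← hw1]
      refine Finset.sum_congr rfl fun j _ => ?_
      rw [Finset.sum_eq_single j]
      · simp
      · intro k _ hk; simp [hk.symm]
      · simp) H.m3
  have hT : 0 ≤ T3 := (abs_nonneg _).trans d1
  set a1 := ∑ j, ∑ k, ∑ l, w j * w k * w l * ∫ ω, Y ω j * Y ω k * Y ω l ∂ν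
  set a2 := ∑ j, ∑ k, ∑ l, w j * w k * w l * ∫ ω, Y' ω j * Y' ω k * Y' ω l ∂ν'
  set b1 := ∑ j, ∑ k, ∑ l, (w j * (if k = l then w k else 0)) * ∫ ω, Y ω j * Y ω k * Y ω l ∂ν
  set b2 := ∑ j, ∑ k, ∑ l, (w j * (if k = l then w k else 0)) * ∫ ω, Y' ω j * Y' ω k * Y' ω l ∂ν'
  set e1 := ∑ j, ∑ k, ∑ l, (if j = k then if k = l then w j else 0 else 0) *
    ∫ ω, Y ω j * Y ω k * Y ω l ∂ν
  set e2 := ∑ j, ∑ k, ∑ l, (if j = k then if k = l then w j else 0 else 0) *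
    ∫ ω, Y' ω j * Y' ω k * Y' ω l ∂ν'
  have r : ∀ A B x y x' y' u u' c1 c2 c3 : ℝ, A + B + (c1 * x + c2 * y + c3 * u) -
      (A + B + (c1 * x' + c2 * y' + c3 * u')) = c1 * (x - x') + c2 * (y - y') + c3 * (u - u') :=
    fun A B x y x' y' u u' c1 c2 c3 => by ring
  rw [r]
  have g1 := abs_le.1 (G.b1 κ)
  have g2 := abs_le.1 (G.b2 κ)
  have g3 := abs_le.1 (G.b3 κ)
  have B : ∀ c x N : ℝ, |c| ≤ N → |x| ≤ T3 → |c * x| ≤ N * T3 := fun c x N hc hx => by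
    rw [abs_mul]; exact mul_le_mul hc hx (abs_nonneg _) ((abs_nonneg _).trans hc)
  have t1 := B ((G.g3 κ - 3 * G.g2 κ + 2 * G.g1 κ) / 6) _ K
    (by rw [abs_le]; constructor <;> linarith) d1
  have t2 := B ((G.g2 κ - G.g1 κ) / 2) _ K (by rw [abs_le]; constructor <;> linarith) d2
  have t3 := B (G.g1 κ / 6) _ K (by rw [abs_le]; constructor <;> linarith) d3
  refine (abs_add_le _ _).trans ?_
  refine (add_le_add_left (abs_add_le _ _) _).trans ?_
  linarith

lemma measurable_softF {K : ℝ} (G : SmoothCut K) : Measurable (softF G : (J → ℝ) → ℝ) := by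
  have : Measurable G.g :=
    (continuous_iff_continuousAt.2 fun v => (G.d0 v).continuousAt).measurable
  unfold softF
  fun_prop

lemma softF_bound {K : ℝ} (G : SmoothCut K) (z : J → ℝ) : ‖softF G z‖ ≤ 1 := by
  rw [Real.norm_eq_abs, softF, abs_of_nonneg (G.nonneg _)]; exact G.le_one _

lemma softF_one_side [Nonempty J] {K : ℝ} (G : SmoothCut K) (hK : 0 ≤ K)
    {ν : Measure Ω} [IsProbabilityMeasure ν]
    {Y : Ω → J → ℝ} (hY : Measurable Y) {T4 : ℝ}
    (hexp : Integrable (fun ω => Real.exp (3 * ‖Y ω‖)) ν)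
    (m4 : ∀ j, ∫ ω, Real.exp (2 * ‖Y ω‖) * Y ω j ^ 4 ∂ν ≤ T4)
    (z : J → ℝ) (hi : Integrable (fun ω => softT G z (Y ω)) ν) :
    |∫ ω, softF G (z + Y ω) ∂ν - softF G z - ∫ ω, softT G z (Y ω) ∂ν| ≤ 100 * K * T4 := by
  obtain ⟨w, hw0, hw1, hw⟩ := tMom_zero_weights z
  have iF : Integrable (fun ω => softF G (z + Y ω)) ν :=
    Integrable.of_bound (((measurable_softF G).comp (by fun_prop)).aestronglyMeasurable) 1
      (ae_of_all _ fun ω => softF_bound G _)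
  have i4 := fun j => integrable_exp_mul_pow_four hY hexp j
  have e : ∫ ω, softF G (z + Y ω) ∂ν - softF G z - ∫ ω, softT G z (Y ω) ∂ν =
      ∫ ω, (softF G (z + Y ω) - softF G z - softT G z (Y ω)) ∂ν := by
    have iF' : Integrable (fun ω => softF G (z + Y ω) - softF G z) ν :=
      iF.sub (integrable_const _)
    rw [integral_sub iF' hi, integral_sub iF (integrable_const _)]
    simp
  rw [e, ← Real.norm_eq_abs]
  have iw : Integrable (fun ω => 100 * K * ∑ j, w j * (Real.exp (2 * ‖Y ω‖) * Y ω j ^ 4)) ν :=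
    (integrable_finsetSum _ fun j _ => (i4 j).const_mul _).const_mul _
  refine (norm_integral_le_of_norm_le iw (ae_of_all _ fun ω => ?_)).trans ?_
  · have := softF_taylor G hK z (Y ω)
    rw [hw, Finset.mul_sum] at this
    rw [Real.norm_eq_abs]
    refine this.trans (le_of_eq ?_)
    congr 1
    exact Finset.sum_congr rfl fun j _ => by ring
  · rw [integral_const_mul, integral_finsetSum _ fun j _ => (i4 j).const_mul _]
    gcongr
    calc ∑ j, ∫ ω, w j * (Real.exp (2 * ‖Y ω‖) * Y ω j ^ 4) ∂ν ≤ ∑ j, w j * T4 := by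
          refine Finset.sum_le_sum fun j _ => ?_
          rw [integral_const_mul]
          exact mul_le_mul_of_nonneg_left (m4 j) (hw0 j)
      _ = T4 := by rw [← Finset.sum_mul, hw1, one_mul]

lemma softF_one_step [Nonempty J] {K : ℝ} (G : SmoothCut K) (hK : 0 ≤ K)
    {ν : Measure Ω} [IsProbabilityMeasure ν] {ν' : Measure Ω'} [IsProbabilityMeasure ν']
    {Y : Ω → J → ℝ} {Y' : Ω' → J → ℝ} (hY : Measurable Y) (hY' : Measurable Y') {T3 T4 T4' : ℝ}
    (H : MomMatch ν ν' Y Y' T3 T4 T4') (z : J → ℝ) :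
    |∫ ω, softF G (z + Y ω) ∂ν - ∫ ω, softF G (z + Y' ω) ∂ν'| ≤ 100 * K * (T3 + T4 + T4') := by
  obtain ⟨i, i', h⟩ := softT_integral_diff G hK hY hY' H z
  have h1 := softF_one_side G hK hY H.hexp H.m4 z i
  have h2 := softF_one_side G hK hY' H.hexp' H.m4' z i'
  obtain ⟨j⟩ := ‹Nonempty J›
  have hT : 0 ≤ K * T3 := mul_nonneg hK ((abs_nonneg _).trans (H.m3 j j j))
  rw [abs_le] at *
  constructor <;> linarith

/-- Replacing all the independent summands one after the other. -/
lemma replace_all {J : Type} {F : (J → ℝ) → ℝ} (hF : Measurable F) (hb : ∀ z, ‖F z‖ ≤ 1)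
    {Y : Ω → J → ℝ} {Y' : Ω' → J → ℝ} (hY : Measurable Y) (hY' : Measurable Y') (m : ℕ) :
    ∀ (ν : Fin m → Measure Ω) (ν' : Fin m → Measure Ω') (E : Fin m → ℝ)
    [∀ l, IsProbabilityMeasure (ν l)] [∀ l, IsProbabilityMeasure (ν' l)],
    (∀ l z, |∫ ω, F (z + Y ω) ∂(ν l) - ∫ ω, F (z + Y' ω) ∂(ν' l)| ≤ E l) → ∀ z,
    |∫ x, F (z + ∑ l, Y (x l)) ∂(Measure.pi ν) - ∫ x, F (z + ∑ l, Y' (x l)) ∂(Measure.pi ν')|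
      ≤ ∑ l, E l := by
  induction m with
  | zero => intro ν ν' E _ _ h z; simp
  | succ m ih =>
    intro ν ν' E _ _ h z
    have split : ∀ {Ω₀ : Type} [MeasurableSpace Ω₀] (ν₀ : Fin (m + 1) → Measure Ω₀)
        [∀ l, IsProbabilityMeasure (ν₀ l)] (Y₀ : Ω₀ → J → ℝ), Measurable Y₀ → 
        ∫ x, F (z + ∑ l, Y₀ (x l)) ∂(Measure.pi ν₀) =
        ∫ x, F (z + Y₀ x.1 + ∑ l, Y₀ (x.2 l))
          ∂((ν₀ 0).prod (Measure.pi fun l : Fin m => ν₀ l.succ)) := by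
      intro Ω₀ _ ν₀ _ Y₀ hY₀
      have mp := measurePreserving_piFinSuccAbove ν₀ 0
      simp only [Fin.succAbove_zero] at mp
      rw [← mp.map_eq, integral_map_equiv]
      refine integral_congr_ae (ae_of_all _ fun x => ?_)
      simp [Fin.sum_univ_succ, add_assoc, MeasurableEquiv.piFinSuccAbove, Fin.insertNthEquiv,
        Fin.tail]
    rw [split ν Y hY, split ν' Y' hY']
    set τ := Measure.pi fun l : Fin m => ν l.succ
    set τ' := Measure.pi fun l : Fin m => ν' l.succ
    have int : ∀ {Ω₀ : Type} [MeasurableSpace Ω₀] (ρ : Measure Ω₀) [IsProbabilityMeasure ρ]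
        (Z : Ω₀ → J → ℝ), Measurable Z → Integrable (fun x => F (Z x)) ρ := by
      intro Ω₀ _ ρ _ Z hZ
      exact Integrable.of_bound (hF.comp hZ).aestronglyMeasurable 1 (ae_of_all _ fun x => hb _)
    have i1 := int ((ν 0).prod τ) (fun x => z + Y x.1 + ∑ l, Y (x.2 l)) (by fun_prop)
    have i2 := int ((ν 0).prod τ') (fun x => z + Y x.1 + ∑ l, Y' (x.2 l)) (by fun_prop)
    have i3 := int ((ν' 0).prod τ') (fun x => z + Y' x.1 + ∑ l, Y' (x.2 l)) (by fun_prop)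
    have s1 : |∫ x, F (z + Y x.1 + ∑ l, Y (x.2 l)) ∂((ν 0).prod τ) -
        ∫ x, F (z + Y x.1 + ∑ l, Y' (x.2 l)) ∂((ν 0).prod τ')| ≤ ∑ l : Fin m, E l.succ := by
      rw [integral_prod _ i1, integral_prod _ i2, ← integral_sub i1.integral_prod_left
        i2.integral_prod_left, ← Real.norm_eq_abs]
      refine (norm_integral_le_of_norm_le_const (C := ∑ l : Fin m, E l.succ)
        (ae_of_all _ fun x => ?_)).trans (by simp)
      exact ih (fun l => ν l.succ) (fun l => ν' l.succ) (fun l => E l.succ)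
        (fun l z => h l.succ z) (z + Y x)
    have s2 : |∫ x, F (z + Y x.1 + ∑ l, Y' (x.2 l)) ∂((ν 0).prod τ') -
        ∫ x, F (z + Y' x.1 + ∑ l, Y' (x.2 l)) ∂((ν' 0).prod τ')| ≤ E 0 := by
      rw [integral_prod_symm _ i2, integral_prod_symm _ i3, ← integral_sub i2.integral_prod_right
        i3.integral_prod_right, ← Real.norm_eq_abs]
      refine (norm_integral_le_of_norm_le_const (C := E 0)
        (ae_of_all _ fun x => ?_)).trans (by simp)
      have := h 0 (z + ∑ l, Y' (x l))
      simpa only [Real.norm_eq_abs, add_right_comm] using this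
    rw [Fin.sum_univ_succ]
    rw [abs_le] at *
    constructor <;> linarith

end Replace

end

section

/-! ### The smooth cut-off and the comparison of distribution functions of maxima -/

lemma smoothTransition_deriv_bound : ∃ K : ℝ, 0 < K ∧ ∀ k, 1 ≤ k → k ≤ 4 → ∀ v,
    |iteratedDeriv k Real.smoothTransition v| ≤ K := by
  have hS : ContDiff ℝ (⊤ : ℕ∞) Real.smoothTransition := Real.smoothTransition.contDiff
  have hsupp : HasCompactSupport (deriv Real.smoothTransition) := by
    refine HasCompactSupport.intro (K := Set.Icc (0 : ℝ) 1) isCompact_Icc fun v hv => ?_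
    rw [Set.mem_Icc, not_and_or, not_le, not_le] at hv
    rcases hv with hv | hv
    · have : Real.smoothTransition =ᶠ[nhds v] fun _ => 0 := by
        filter_upwards [Iio_mem_nhds hv] with x hx
        exact Real.smoothTransition.zero_of_nonpos (le_of_lt hx)
      rw [this.deriv_eq]; simp
    · have : Real.smoothTransition =ᶠ[nhds v] fun _ => 1 := by
        filter_upwards [Ioi_mem_nhds hv] with x hx
        exact Real.smoothTransition.one_of_one_le (le_of_lt hx)
      rw [this.deriv_eq]; simp
  have hs : ∀ k, HasCompactSupport (iteratedDeriv (k + 1) Real.smoothTransition) := by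
    intro k
    induction k with
    | zero => rw [zero_add, iteratedDeriv_one]; exact hsupp
    | succ k ih => rw [iteratedDeriv_succ]; exact ih.deriv
  have hb : ∀ k : ℕ, ∃ K : ℝ, ∀ v, |iteratedDeriv (k + 1) Real.smoothTransition v| ≤ K := by
    intro k
    have hc : Continuous (iteratedDeriv (k + 1) Real.smoothTransition) :=
      hS.continuous_iteratedDeriv (k + 1) (by exact_mod_cast le_top)
    obtain ⟨C, hC⟩ := hc.bounded_above_of_compact_support (hs k)
    exact ⟨C, fun v => by simpa using hC v⟩
  choose K hK using hb
  refine ⟨1 + |K 0| + |K 1| + |K 2| + |K 3|, by positivity, ?_⟩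
  intro k h1 h4 v
  have a0 := abs_nonneg (K 0); have a1 := abs_nonneg (K 1)
  have a2 := abs_nonneg (K 2); have a3 := abs_nonneg (K 3)
  have b0 := le_abs_self (K 0); have b1 := le_abs_self (K 1)
  have b2 := le_abs_self (K 2); have b3 := le_abs_self (K 3)
  interval_cases k
  · linarith [hK 0 v]
  · linarith [hK 1 v]
  · linarith [hK 2 v]
  · linarith [hK 3 v]

/-- An absolute bound for the first four derivatives of the smooth step function. -/
def K0 : ℝ := Classical.choose smoothTransition_deriv_bound

lemma K0_pos : 0 < K0 := (Classical.choose_spec smoothTransition_deriv_bound).1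

lemma K0_bound (k : ℕ) (h1 : 1 ≤ k) (h4 : k ≤ 4) (v : ℝ) :
    |iteratedDeriv k Real.smoothTransition v| ≤ K0 :=
  (Classical.choose_spec smoothTransition_deriv_bound).2 k h1 h4 v

lemma hasDerivAt_smoothTransition (k : ℕ) (v : ℝ) :
    HasDerivAt (iteratedDeriv k Real.smoothTransition)
      (iteratedDeriv (k + 1) Real.smoothTransition v) v := by
  have hS : ContDiff ℝ (⊤ : ℕ∞) Real.smoothTransition := Real.smoothTransition.contDiff
  rw [iteratedDeriv_succ]
  exact ((hS.differentiable_iteratedDeriv k (by exact_mod_cast ENat.natCast_lt_top k)) v).hasDerivAt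

/-- The decreasing cut-off, equal to `1` on `(-∞, 0]` and to `0` on `[L, ∞)`. -/
def cut (L : ℝ) (hL : 1 ≤ L) : SmoothCut (K0 / L) where
  g v := 1 - Real.smoothTransition (v / L)
  g1 v := -(1 / L) * iteratedDeriv 1 Real.smoothTransition (v / L)
  g2 v := -(1 / L ^ 2) * iteratedDeriv 2 Real.smoothTransition (v / L)
  g3 v := -(1 / L ^ 3) * iteratedDeriv 3 Real.smoothTransition (v / L)
  g4 v := -(1 / L ^ 4) * iteratedDeriv 4 Real.smoothTransition (v / L)
  d0 v := by
    have h := hasDerivAt_smoothTransition 0 (v / L)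
    rw [iteratedDeriv_zero] at h
    have h2 : HasDerivAt (fun v : ℝ => v / L) (1 / L) v := (hasDerivAt_id' v).div_const L
    have h3 := (h.comp v h2).const_sub 1
    exact h3.congr_deriv (by ring)
  d1 v := by
    have h := hasDerivAt_smoothTransition 1 (v / L)
    have h2 : HasDerivAt (fun v : ℝ => v / L) (1 / L) v := (hasDerivAt_id' v).div_const L
    have h3 := (h.comp v h2).const_mul (-(1 / L))
    exact h3.congr_deriv (by ring)
  d2 v := by
    have h := hasDerivAt_smoothTransition 2 (v / L)
    have h2 : HasDerivAt (fun v : ℝ => v / L) (1 / L) v := (hasDerivAt_id' v).div_const L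
    have h3 := (h.comp v h2).const_mul (-(1 / L ^ 2))
    exact h3.congr_deriv (by ring)
  d3 v := by
    have h := hasDerivAt_smoothTransition 3 (v / L)
    have h2 : HasDerivAt (fun v : ℝ => v / L) (1 / L) v := (hasDerivAt_id' v).div_const L
    have h3 := (h.comp v h2).const_mul (-(1 / L ^ 3))
    exact h3.congr_deriv (by ring)
  b1 v := by
    rw [abs_mul, abs_neg, abs_of_nonneg (by positivity), div_mul_eq_mul_div, one_mul]
    gcongr; exact K0_bound 1 (by norm_num) (by norm_num) _
  b2 v := by
    rw [abs_mul, abs_neg, abs_of_nonneg (by positivity), div_mul_eq_mul_div, one_mul]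
    gcongr
    · exact K0_pos.le
    · exact K0_bound 2 (by norm_num) (by norm_num) _
    · exact le_self_pow₀ hL (by norm_num)
  b3 v := by
    rw [abs_mul, abs_neg, abs_of_nonneg (by positivity), div_mul_eq_mul_div, one_mul]
    gcongr
    · exact K0_pos.le
    · exact K0_bound 3 (by norm_num) (by norm_num) _
    · exact le_self_pow₀ hL (by norm_num)
  b4 v := by
    rw [abs_mul, abs_neg, abs_of_nonneg (by positivity), div_mul_eq_mul_div, one_mul]
    gcongr
    · exact K0_pos.le
    · exact K0_bound 4 (by norm_num) (by norm_num) _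
    · exact le_self_pow₀ hL (by norm_num)
  nonneg v := by linarith [Real.smoothTransition.le_one (v / L)]
  le_one v := by linarith [Real.smoothTransition.nonneg (v / L)]

lemma measurableSet_forall_le {Ω J : Type} [MeasurableSpace Ω] [Finite J] {f : Ω → J → ℝ}
    (hf : Measurable f) (t : ℝ) : MeasurableSet {x | ∀ j, f x j ≤ t} := by
  rw [Set.ofPred_forall]
  exact MeasurableSet.iInter fun j =>
    measurableSet_le ((measurable_pi_apply j).comp hf) measurable_const

/-- Comparison of the distribution functions of the coordinatewise maxima of two sums of
independent vectors; `β` is the smoothing parameter and the cost in the argument is `2L/β`. -/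
lemma kolm_le {J Ω Ω' : Type} [Fintype J] [Nonempty J] [MeasurableSpace Ω] [MeasurableSpace Ω']
    {Y : Ω → J → ℝ} {Y' : Ω' → J → ℝ} (hY : Measurable Y) (hY' : Measurable Y') {m : ℕ}
    (ν : Fin m → Measure Ω) (ν' : Fin m → Measure Ω')
    [∀ l, IsProbabilityMeasure (ν l)] [∀ l, IsProbabilityMeasure (ν' l)]
    {L β : ℝ} (hL : 1 ≤ L) (hJ : Real.log (Fintype.card J) ≤ L) (hβ : 0 < β)
    {T3 T4 T4' : Fin m → ℝ}
    (H : ∀ l, MomMatch (ν l) (ν' l) (fun ω => β • Y ω) (fun ω => β • Y' ω) (T3 l) (T4 l) (T4' l))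
    (t : ℝ) :
    (Measure.pi ν).real {x | ∀ j, ∑ l, Y (x l) j ≤ t} ≤
      (Measure.pi ν').real {x | ∀ j, ∑ l, Y' (x l) j ≤ t + 2 * (L / β)} +
        100 * (K0 / L) * ∑ l, (T3 l + T4 l + T4' l) := by
  have hL0 : 0 < L := by linarith
  set G := cut L hL
  have hK : 0 ≤ K0 / L := div_nonneg K0_pos.le hL0.le
  set z : J → ℝ := fun _ => -β * t - L with hz
  have main := replace_all (measurable_softF G (J := J)) (softF_bound G) (hY.const_smul β)
    (hY'.const_smul β) m ν ν' (fun l => 100 * (K0 / L) * (T3 l + T4 l + T4' l))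
    (fun l z => softF_one_step G hK (hY.const_smul β) (hY'.const_smul β) (H l) z) z
  rw [← Finset.mul_sum] at main
  have eval : ∀ {Ω₀ : Type} (Y₀ : Ω₀ → J → ℝ) (x : Fin m → Ω₀),
      softF G (z + ∑ l, β • Y₀ (x l)) =
      1 - Real.smoothTransition (Real.log (∑ j, Real.exp (β * (∑ l, Y₀ (x l) j - t) - L)) / L) := by
    intro Ω₀ Y₀ x
    have : ∀ j, (z + ∑ l, β • Y₀ (x l)) j = β * (∑ l, Y₀ (x l) j - t) - L := by
      intro j
      simp only [Pi.add_apply, Finset.sum_apply, Pi.smul_apply, smul_eq_mul, ← Finset.mul_sum, hz]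
      ring
    unfold softF
    simp only [this]
    rfl
  have mY : Measurable fun x : Fin m → Ω => ∑ l, Y (x l) := by fun_prop
  have mY' : Measurable fun x : Fin m → Ω' => ∑ l, Y' (x l) := by fun_prop
  have mS : MeasurableSet {x : Fin m → Ω | ∀ j, ∑ l, Y (x l) j ≤ t} := by
    simpa [Finset.sum_apply] using measurableSet_forall_le mY t
  have mS' : MeasurableSet {x : Fin m → Ω' | ∀ j, ∑ l, Y' (x l) j ≤ t + 2 * (L / β)} := by
    simpa [Finset.sum_apply] using measurableSet_forall_le mY' (t + 2 * (L / β))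
  have int : ∀ {Ω₀ : Type} [MeasurableSpace Ω₀] (ρ : Measure Ω₀) [IsProbabilityMeasure ρ]
        (Z : Ω₀ → J → ℝ), Measurable Z → Integrable (fun x => softF G (Z x)) ρ := by
      intro Ω₀ _ ρ _ Z hZ
      exact Integrable.of_bound ((measurable_softF G).comp hZ).aestronglyMeasurable 1
        (ae_of_all _ fun x => softF_bound G _)
  have lower : (Measure.pi ν).real {x | ∀ j, ∑ l, Y (x l) j ≤ t} ≤
      ∫ x, softF G (z + ∑ l, β • Y (x l)) ∂(Measure.pi ν) := by
    rw [← integral_indicator_one mS]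
    refine integral_mono ((integrable_const (1 : ℝ)).indicator mS)
      (int _ _ (by fun_prop)) fun x => ?_
    by_cases hx : x ∈ {x : Fin m → Ω | ∀ j, ∑ l, Y (x l) j ≤ t}
    · rw [Set.indicator_of_mem hx]
      dsimp only
      rw [eval Y x, Real.smoothTransition.zero_of_nonpos]
      · simp
      · refine div_nonpos_of_nonpos_of_nonneg ?_ hL0.le
        have h1 : ∑ j, Real.exp (β * (∑ l, Y (x l) j - t) - L) ≤
            Fintype.card J * Real.exp (-L) := by
          rw [← nsmul_eq_mul, ← Finset.card_univ]
          refine Finset.sum_le_card_nsmul _ _ _ fun j _ => Real.exp_le_exp.2 ?_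
          have := hx j
          nlinarith
        have h0 : 0 < ∑ j, Real.exp (β * (∑ l, Y (x l) j - t) - L) :=
          Finset.sum_pos (fun j _ => by positivity) Finset.univ_nonempty
        have hc : (0 : ℝ) < Fintype.card J := by exact_mod_cast Fintype.card_pos
        calc _ ≤ Real.log (Fintype.card J * Real.exp (-L)) := Real.log_le_log h0 h1
          _ = Real.log (Fintype.card J) - L := by
            rw [Real.log_mul hc.ne' (Real.exp_pos _).ne', Real.log_exp]; ring
          _ ≤ 0 := by linarith
    · rw [Set.indicator_of_notMem hx]; exact G.nonneg _
  have upper : ∫ x, softF G (z + ∑ l, β • Y' (x l)) ∂(Measure.pi ν') ≤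
      (Measure.pi ν').real {x | ∀ j, ∑ l, Y' (x l) j ≤ t + 2 * (L / β)} := by
    rw [← integral_indicator_one mS']
    refine integral_mono (int _ _ (by fun_prop))
      ((integrable_const (1 : ℝ)).indicator mS') fun x => ?_
    by_cases hx : x ∈ {x : Fin m → Ω' | ∀ j, ∑ l, Y' (x l) j ≤ t + 2 * (L / β)}
    · rw [Set.indicator_of_mem hx]; exact G.le_one _
    · rw [Set.indicator_of_notMem hx]
      dsimp only
      rw [eval Y' x, Real.smoothTransition.one_of_one_le]
      · simp
      · simp only [Set.mem_ofPred_eq, not_forall, not_le] at hx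
        obtain ⟨j, hj⟩ := hx
        rw [one_le_div hL0]
        have h1 : Real.exp L ≤ ∑ j, Real.exp (β * (∑ l, Y' (x l) j - t) - L) := by
          refine le_trans (Real.exp_le_exp.2 ?_) (Finset.single_le_sum
            (f := fun j => Real.exp (β * (∑ l, Y' (x l) j - t) - L))
            (fun j _ => (Real.exp_pos _).le) (Finset.mem_univ j))
          have : β * (2 * (L / β)) ≤ β * (∑ l, Y' (x l) j - t) := by
            gcongr; linarith
          have e : β * (2 * (L / β)) = 2 * L := by field_simp
          linarith
        calc L = Real.log (Real.exp L) := (Real.log_exp L).symm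
          _ ≤ _ := Real.log_le_log (Real.exp_pos _) h1
  have := (abs_le.1 main).2
  simp only [Pi.smul_apply] at this
  linarith

end

section

/-! ### Gaussian anti-concentration for maxima -/

instance (n : ℕ) : IsProbabilityMeasure (gaussPi n) := by unfold gaussPi; infer_instance

lemma gaussPi_exp {m : ℕ} (c : Fin m → ℝ) :
    Integrable (fun e => Real.exp (∑ l, e l * c l)) (gaussPi m) ∧
    ∫ e, Real.exp (∑ l, e l * c l) ∂(gaussPi m) = Real.exp ((∑ l, c l ^ 2) / 2) := by
  simp only [Real.exp_sum]
  have hi : ∀ l : Fin m, Integrable (fun x => Real.exp (x * c l)) (gaussianReal 0 1) := fun l => by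
    simpa [mul_comm] using integrable_exp_mul_gaussianReal (μ := 0) (v := 1) (c l)
  refine ⟨Integrable.fintype_prod (f := fun l x => Real.exp (x * c l)) hi, ?_⟩
  unfold gaussPi
  rw [integral_fintype_prod_eq_prod (fun l x => Real.exp (x * c l)), Finset.sum_div, Real.exp_sum]
  refine Finset.prod_congr rfl fun l _ => ?_
  have := congrFun (mgf_id_gaussianReal (μ := 0) (v := 1)) (c l)
  simp only [mgf, id] at this
  simp only [mul_comm _ (c l)]
  rw [this]; simp

/-- One-dimensional Cameron–Martin formula. -/
lemma gaussianReal_shift (w : ℝ) {s : Set ℝ} (hs : MeasurableSet s) :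
    gaussianReal w 1 s =
      ENNReal.ofReal (∫ x, s.indicator (fun x => Real.exp (w * x - w ^ 2 / 2)) x
        ∂(gaussianReal 0 1)) := by
  rw [gaussianReal_apply_eq_integral _ one_ne_zero, integral_gaussianReal_eq_integral_smul
    one_ne_zero, ← integral_indicator hs]
  congr 1
  refine integral_congr_ae (ae_of_all _ fun x => ?_)
  by_cases hx : x ∈ s
  · simp only [Set.indicator_of_mem hx, gaussianPDFReal, smul_eq_mul]
    rw [mul_assoc (√_)⁻¹, ← Real.exp_add]
    congr 2
    push_cast
    ring
  · simp [Set.indicator_of_notMem hx]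

/-- Cameron–Martin formula for a shift of the standard Gaussian measure. -/
lemma gaussPi_map_add {m : ℕ} (w : Fin m → ℝ) :
    (gaussPi m).map (fun e => e + w) =
      (gaussPi m).withDensity
        (fun e => ENNReal.ofReal (Real.exp (∑ l, (w l * e l - w l ^ 2 / 2)))) := by
  have h1 : (gaussPi m).map (fun e => e + w) = Measure.pi fun l => gaussianReal (w l) 1 := by
    unfold gaussPi
    have := Measure.pi_map_pi (μ := fun _ : Fin m => gaussianReal 0 1)
      (f := fun l x => x + w l) (fun l => by fun_prop)
      (hμ := fun l => by rw [gaussianReal_map_add_const]; infer_instance)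
    simp only [gaussianReal_map_add_const, zero_add] at this
    exact this
  rw [h1]
  refine Measure.pi_eq fun s hs => ?_
  have hi : ∀ l : Fin m, Integrable (fun x => Real.exp (w l * x - w l ^ 2 / 2))
      (gaussianReal 0 1) := fun l => by
    have := (integrable_exp_mul_gaussianReal (μ := 0) (v := 1) (w l)).mul_const
      (Real.exp (- (w l ^ 2 / 2)))
    simpa only [← Real.exp_add, ← sub_eq_add_neg] using this
  have hp : Integrable (fun e : Fin m → ℝ => ∏ l, Real.exp (w l * e l - w l ^ 2 / 2))
      (gaussPi m) := Integrable.fintype_prod (f := fun l x => Real.exp (w l * x - w l ^ 2 / 2)) hi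
  have hS : MeasurableSet (Set.univ.pi s) := MeasurableSet.univ_pi hs
  rw [withDensity_apply _ hS]
  simp only [Real.exp_sum]
  rw [← ofReal_integral_eq_lintegral_ofReal hp.integrableOn
    (ae_of_all _ fun e => Finset.prod_nonneg fun l _ => (Real.exp_pos _).le),
    ← integral_indicator hS]
  have e1 : ∀ e : Fin m → ℝ, (Set.univ.pi s).indicator
      (fun e => ∏ l, Real.exp (w l * e l - w l ^ 2 / 2)) e =
      ∏ l, (s l).indicator (fun x => Real.exp (w l * x - w l ^ 2 / 2)) (e l) := by
    intro e
    by_cases he : e ∈ Set.univ.pi s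
    · rw [Set.indicator_of_mem he]
      exact Finset.prod_congr rfl fun l _ => by rw [Set.indicator_of_mem (he l (Set.mem_univ l))]
    · rw [Set.indicator_of_notMem he]
      simp only [Set.mem_pi, Set.mem_univ, true_imp_iff, not_forall] at he
      obtain ⟨l, hl⟩ := he
      exact (Finset.prod_eq_zero (Finset.mem_univ l) (Set.indicator_of_notMem hl _)).symm
  simp only [e1]
  unfold gaussPi
  rw [integral_fintype_prod_eq_prod
    (fun l x => (s l).indicator (fun x => Real.exp (w l * x - w l ^ 2 / 2)) x),
    ENNReal.ofReal_prod_of_nonneg]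
  · exact Finset.prod_congr rfl fun l _ => (gaussianReal_shift (w l) (hs l)).symm
  · exact fun l _ => integral_nonneg fun x =>
      Set.indicator_nonneg (fun _ _ => (Real.exp_pos _).le) _

/-- If the shift by `w` sends `A` into `B`, and the Cameron–Martin density of the shift is at most
`exp c` on `B`, then `B` is not much smaller than `A`. -/
lemma gaussPi_shift_le {m : ℕ} (w : Fin m → ℝ) {A B : Set (Fin m → ℝ)} (hB : MeasurableSet B)
    (hAB : ∀ e ∈ A, e + w ∈ B) {c : ℝ} (hc : ∀ e ∈ B, ∑ l, (w l * e l - w l ^ 2 / 2) ≤ c) :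
    (gaussPi m).real A ≤ Real.exp c * (gaussPi m).real B := by
  have h1 : gaussPi m A ≤ ENNReal.ofReal (Real.exp c) * gaussPi m B := by
    calc gaussPi m A ≤ gaussPi m ((fun e => e + w) ⁻¹' B) := measure_mono hAB
      _ = (gaussPi m).map (fun e => e + w) B := (Measure.map_apply (by fun_prop) hB).symm
      _ = ∫⁻ e in B, ENNReal.ofReal (Real.exp (∑ l, (w l * e l - w l ^ 2 / 2))) ∂(gaussPi m) := by
        rw [gaussPi_map_add, withDensity_apply _ hB]
      _ ≤ ∫⁻ e in B, ENNReal.ofReal (Real.exp c) ∂(gaussPi m) := by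
        refine setLIntegral_mono measurable_const fun e he => ?_
        exact ENNReal.ofReal_le_ofReal (Real.exp_le_exp.2 (hc e he))
      _ = _ := by rw [setLIntegral_const]
  have h2 := ENNReal.toReal_mono (by finiteness) h1
  rwa [ENNReal.toReal_mul, ENNReal.toReal_ofReal (Real.exp_pos c).le] at h2

lemma gaussPi_tail {m : ℕ} (u : Fin m → ℝ) (hu : ∑ l, u l ^ 2 = 1) {H : ℝ} (hH : 0 ≤ H) :
    (gaussPi m).real {e | H ≤ ∑ l, e l * u l} ≤ Real.exp (-(H ^ 2 / 2)) := by
  obtain ⟨hi, he⟩ := gaussPi_exp (fun l => H * u l)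
  have e1 : ∀ e : Fin m → ℝ, ∑ l, e l * (H * u l) = H * ∑ l, e l * u l := fun e => by
    rw [Finset.mul_sum]; exact Finset.sum_congr rfl fun l _ => by ring
  simp only [e1] at hi he
  have := measure_ge_le_exp_mul_mgf (μ := gaussPi m) (X := fun e => ∑ l, e l * u l) (t := H) H hH hi
  refine this.trans (le_of_eq ?_)
  rw [mgf, he, ← Real.exp_add]
  congr 1
  simp only [mul_pow, ← Finset.mul_sum, hu]
  ring

/-- Anti-concentration of the maximum of finitely many centred Gaussian variables with variances
bounded below. The set where the maximum lies in a short interval is split according to the (first)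
maximising index `j`, and each piece is moved along the direction of `j`; the translates are
pairwise disjoint and, by the Cameron–Martin formula, of comparable measure. -/
lemma anti_conc {m p : ℕ} (a : Fin m → Fin p → ℝ) {σ δ H : ℝ} (hσ : 0 < σ)
    (ha : ∀ j, σ ^ 2 ≤ ∑ l, a l j ^ 2) (hδ : 0 < δ) (hH : 0 ≤ H) (t : ℝ) :
    (gaussPi m).real {e | ∀ j, ∑ l, e l * a l j ≤ t + δ} ≤
      (gaussPi m).real {e | ∀ j, ∑ l, e l * a l j ≤ t} + 5 * (δ / σ) * (H + 1) +
        p * Real.exp (-(H ^ 2 / 2)) := by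
  set γ := gaussPi m
  set d := δ / σ with hd
  have hd0 : 0 < d := div_pos hδ hσ
  by_cases hd1 : 1 < d
  · have h1 : γ.real {e | ∀ j, ∑ l, e l * a l j ≤ t + δ} ≤ 1 := measureReal_le_one
    have h2 : 0 ≤ γ.real {e | ∀ j, ∑ l, e l * a l j ≤ t} := measureReal_nonneg
    have h3 : 0 ≤ p * Real.exp (-(H ^ 2 / 2)) := by positivity
    nlinarith
  push Not at hd1
  -- normalised directions and levels
  set s : Fin p → ℝ := fun j => √(∑ l, a l j ^ 2) with hs
  have hsσ : ∀ j, σ ≤ s j := fun j => Real.le_sqrt_of_sq_le (ha j)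
  have hs0 : ∀ j, 0 < s j := fun j => hσ.trans_le (hsσ j)
  set u : Fin p → Fin m → ℝ := fun j l => a l j / s j with hu
  have hu1 : ∀ j, ∑ l, u j l ^ 2 = 1 := by
    intro j
    simp only [hu, div_pow, ← Finset.sum_div]
    rw [hs, Real.sq_sqrt (Finset.sum_nonneg fun l _ => sq_nonneg _), div_self]
    have := ha j
    have : 0 < σ ^ 2 := by positivity
    linarith
  set h : Fin p → ℝ := fun j => t / s j with hh
  set U : Fin p → (Fin m → ℝ) → ℝ := fun j e => ∑ l, e l * u j l - h j with hU
  have hUm : ∀ j, Measurable (U j) := fun j => by simp only [hU]; fun_prop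
  have hUe : ∀ j e, ∑ l, e l * a l j = s j * U j e + t := by
    intro j e
    have := (hs0 j).ne'
    simp only [hU, hu, hh, mul_sub, Finset.mul_sum]
    rw [mul_div_cancel₀ _ this, sub_add_cancel]
    exact Finset.sum_congr rfl fun l _ => by field_simp
  have hUshift : ∀ i j e (c : ℝ), U i (e + fun l => c * u j l) = U i e + c * ∑ l, u j l * u i l := by
    intro i j e c
    simp only [hU, Pi.add_apply, add_mul, Finset.sum_add_distrib, Finset.mul_sum, mul_assoc]
    ring
  have hcs : ∀ i j, ∑ l, u j l * u i l ≤ 1 := by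
    intro i j
    have : ∀ l, u j l * u i l ≤ (u j l ^ 2 + u i l ^ 2) / 2 := fun l => by
      nlinarith [sq_nonneg (u j l - u i l)]
    calc ∑ l, u j l * u i l ≤ ∑ l, (u j l ^ 2 + u i l ^ 2) / 2 := Finset.sum_le_sum fun l _ => this l
      _ = 1 := by rw [← Finset.sum_div, Finset.sum_add_distrib, hu1, hu1]; norm_num
  have hself : ∀ j, ∑ l, u j l * u j l = 1 := fun j => by simpa only [sq] using hu1 j
  -- the pieces and their translates
  set E : Fin p → ℕ → Set (Fin m → ℝ) := fun j k =>
    {e | (k * d < U j e ∧ U j e ≤ (k + 1) * d) ∧ ∀ i, U i e ≤ U j e ∧ (i < j → U i e < U j e)}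
    with hE
  have hEm : ∀ j k, MeasurableSet (E j k) := by
    intro j k
    simp only [hE]
    refine MeasurableSet.inter ((measurableSet_lt measurable_const (hUm j)).inter
      (measurableSet_le (hUm j) measurable_const)) ?_
    show MeasurableSet {e | ∀ i, U i e ≤ U j e ∧ (i < j → U i e < U j e)}
    rw [Set.ofPred_forall]
    refine MeasurableSet.iInter fun i => (measurableSet_le (hUm i) (hUm j)).inter ?_
    show MeasurableSet {e | i < j → U i e < U j e}
    by_cases hij : i < j
    · simp only [hij, true_imp_iff]; exact measurableSet_lt (hUm i) (hUm j)
    · simp only [hij, false_imp_iff]; exact MeasurableSet.univ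
  have hcover : {e | ∀ j, ∑ l, e l * a l j ≤ t + δ} ⊆
      {e | ∀ j, ∑ l, e l * a l j ≤ t} ∪ ⋃ j ∈ (Finset.univ : Finset (Fin p)), E j 0 := by
    intro e he
    by_cases h0 : ∀ j, ∑ l, e l * a l j ≤ t
    · exact Or.inl h0
    right
    push Not at h0
    obtain ⟨j0, hj0⟩ := h0
    have hj0' : 0 < U j0 e := by
      rw [hUe] at hj0
      have := hs0 j0
      by_contra hc
      push Not at hc
      nlinarith
    obtain ⟨jm, -, hjm⟩ := Finset.exists_max_image Finset.univ (fun j => U j e) ⟨j0, Finset.mem_univ _⟩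
    -- the first maximiser
    set S := Finset.univ.filter fun j => U j e = U jm e
    have hSne : S.Nonempty := ⟨jm, by simp [S]⟩
    set j := S.min' hSne
    have hjS : U j e = U jm e := (Finset.mem_filter.1 (S.min'_mem hSne)).2
    simp only [Set.mem_iUnion]
    refine ⟨j, Finset.mem_univ _, ⟨⟨?_, ?_⟩, fun i => ⟨?_, fun hij => ?_⟩⟩⟩
    · have := hjm j0 (Finset.mem_univ _)
      simp only [Nat.cast_zero, zero_mul]; rw [hjS]; linarith
    · have h1 := he j
      rw [hUe] at h1
      have h2 : s j * U j e ≤ δ := by linarith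
      simp only [Nat.cast_zero, zero_add, one_mul, hd]
      rw [le_div_iff₀ hσ]
      by_cases hn : 0 ≤ U j e
      · nlinarith [hsσ j]
      · nlinarith
    · rw [hjS]; exact hjm i (Finset.mem_univ _)
    · refine lt_of_le_of_ne (by rw [hjS]; exact hjm i (Finset.mem_univ _)) fun heq => ?_
      have : i ∈ S := by simp [S, heq, hjS]
      exact absurd (S.min'_le i this) (not_le.2 hij)
  have hdisj : Set.PairwiseDisjoint (Set.univ : Set (Fin p × ℕ)) fun x => E x.1 x.2 := by
    rintro ⟨j, k⟩ - ⟨j', k'⟩ - hne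
    refine Set.disjoint_left.2 fun e he he' => hne ?_
    obtain ⟨⟨h1, h2⟩, h3⟩ := he
    obtain ⟨⟨h1', h2'⟩, h3'⟩ := he'
    dsimp only at *
    have hjj : j = j' := by
      rcases lt_trichotomy j j' with hlt | heq | hgt
      · exact absurd ((h3' j).2 hlt) (not_lt.2 (h3 j').1)
      · exact heq
      · exact absurd ((h3 j').2 hgt) (not_lt.2 (h3' j).1)
    subst hjj
    have hk : k = k' := by
      have a1 : (k : ℝ) < k' + 1 := by
        have : (k : ℝ) * d < (k' + 1) * d := h1.trans_le h2'
        exact lt_of_mul_lt_mul_right this hd0.le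
      have a2 : (k' : ℝ) < k + 1 := by
        have : (k' : ℝ) * d < (k + 1) * d := h1'.trans_le h2
        exact lt_of_mul_lt_mul_right this hd0.le
      have b1 : k < k' + 1 := by exact_mod_cast a1
      have b2 : k' < k + 1 := by exact_mod_cast a2
      omega
    rw [hk]
  set M := ⌊1 / (d * (H + 1))⌋₊ + 1 with hM
  have hM1 : 1 / (d * (H + 1)) ≤ (M : ℝ) := by
    rw [hM]; push_cast; exact (Nat.lt_floor_add_one _).le
  have hkM : ∀ k ∈ Finset.range M, (k : ℝ) * d * (H + 1) ≤ 1 := by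
    intro k hk
    have : k ≤ ⌊1 / (d * (H + 1))⌋₊ := by
      have := Finset.mem_range.1 hk; omega
    have h2 : (k : ℝ) ≤ 1 / (d * (H + 1)) :=
      le_trans (by exact_mod_cast this) (Nat.floor_le (by positivity))
    rw [le_div_iff₀ (by positivity)] at h2
    linarith
  have hshift : ∀ j, h j ≤ H → ∀ k ∈ Finset.range M,
      γ.real (E j 0) ≤ Real.exp (3 / 2) * γ.real (E j k) := by
    intro j hj k hk
    have hk1 := hkM k hk
    have hkd : 0 ≤ (k : ℝ) * d := by positivity
    refine gaussPi_shift_le (fun l => (k * d) * u j l) (hEm j k) (fun e he => ?_) fun e he => ?_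
    · obtain ⟨⟨h1, h2⟩, h3⟩ := he
      simp only [Nat.cast_zero, zero_mul, zero_add, one_mul] at h1 h2
      refine ⟨?_, fun i => ?_⟩
      · rw [hUshift, hself]
        constructor <;> nlinarith
      · rw [hUshift, hUshift, hself]
        have := mul_le_mul_of_nonneg_left (hcs i j) hkd
        refine ⟨?_, fun hij => ?_⟩
        · linarith [(h3 i).1]
        · linarith [(h3 i).2 hij]
    · have h2 := he.1.2
      have e1 : ∑ l, (k * d * u j l * e l - (k * d * u j l) ^ 2 / 2) =
          k * d * (U j e + h j) - (k * d) ^ 2 / 2 := by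
        rw [Finset.sum_sub_distrib]
        congr 1
        · simp only [hU, sub_add_cancel, Finset.mul_sum]
          exact Finset.sum_congr rfl fun l _ => by ring
        · simp only [mul_pow, ← Finset.sum_div, ← Finset.mul_sum, hu1, mul_one]
      rw [e1]
      have h3 : (k : ℝ) * d * (U j e + h j) ≤ k * d * ((k + 1) * d + H) := by gcongr
      have h4 : (k : ℝ) * d ≤ 1 := by nlinarith
      nlinarith
  -- summing over the faces with a low level
  set P := Finset.univ.filter fun j => h j ≤ H
  have hsum1 : ∑ j ∈ P, γ.real (E j 0) ≤ 5 * d * (H + 1) := by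
    have hle1 : ∑ x ∈ P ×ˢ Finset.range M, γ.real (E x.1 x.2) ≤ 1 := by
      rw [← measureReal_biUnion_finset (fun x _ y _ hxy => hdisj (Set.mem_univ x) (Set.mem_univ y) hxy)
        (fun x _ => hEm x.1 x.2)]
      exact measureReal_le_one
    have hle2 : M * ∑ j ∈ P, γ.real (E j 0) ≤
        Real.exp (3 / 2) * ∑ x ∈ P ×ˢ Finset.range M, γ.real (E x.1 x.2) := by
      rw [Finset.sum_product, Finset.mul_sum, Finset.mul_sum]
      refine Finset.sum_le_sum fun j hj => ?_
      rw [Finset.mul_sum]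
      have := Finset.card_nsmul_le_sum (Finset.range M)
        (fun k => Real.exp (3 / 2) * γ.real (E j k)) (γ.real (E j 0))
        (hshift j (Finset.mem_filter.1 hj).2)
      simpa using this
    have he : Real.exp (3 / 2) ≤ 5 := by
      have h1 := Real.exp_one_lt_d9
      have h2 : Real.exp (3 / 2) ^ 2 = Real.exp 1 ^ 3 := by
        rw [← Real.exp_nat_mul, ← Real.exp_nat_mul]; norm_num
      have h3 : Real.exp 1 ^ 3 ≤ 2.72 ^ 3 := by gcongr; linarith
      nlinarith [Real.exp_pos (3 / 2)]
    have hS : 0 ≤ ∑ j ∈ P, γ.real (E j 0) := Finset.sum_nonneg fun _ _ => measureReal_nonneg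
    have h5 : M * ∑ j ∈ P, γ.real (E j 0) ≤ 5 := by
      have := Real.exp_pos (3 / 2)
      nlinarith
    have h6 : 1 / (d * (H + 1)) * ∑ j ∈ P, γ.real (E j 0) ≤ 5 :=
      le_trans (mul_le_mul_of_nonneg_right hM1 hS) h5
    rw [div_mul_eq_mul_div, one_mul, div_le_iff₀ (by positivity)] at h6
    linarith
  have hsum2 : ∑ j ∈ Pᶜ, γ.real (E j 0) ≤ p * Real.exp (-(H ^ 2 / 2)) := by
    have : ∀ j ∈ Pᶜ, γ.real (E j 0) ≤ Real.exp (-(H ^ 2 / 2)) := by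
      intro j hj
      have hj' : H < h j := by simpa [P] using hj
      refine le_trans (measureReal_mono ?_) (gaussPi_tail (u j) (hu1 j) hH)
      intro e he
      have := he.1.1
      simp only [Nat.cast_zero, zero_mul, hU] at this
      show H ≤ ∑ l, e l * u j l
      linarith
    calc _ ≤ (Pᶜ.card : ℝ) * Real.exp (-(H ^ 2 / 2)) := by
          simpa using Finset.sum_le_card_nsmul _ _ _ this
      _ ≤ _ := by
          gcongr
          exact_mod_cast (Finset.card_le_univ _).trans (by simp)
  calc γ.real {e | ∀ j, ∑ l, e l * a l j ≤ t + δ}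
      ≤ γ.real ({e | ∀ j, ∑ l, e l * a l j ≤ t} ∪ ⋃ j ∈ (Finset.univ : Finset (Fin p)), E j 0) :=
        measureReal_mono hcover
    _ ≤ γ.real {e | ∀ j, ∑ l, e l * a l j ≤ t} +
        γ.real (⋃ j ∈ (Finset.univ : Finset (Fin p)), E j 0) := measureReal_union_le _ _
    _ ≤ γ.real {e | ∀ j, ∑ l, e l * a l j ≤ t} + ∑ j, γ.real (E j 0) := by
        gcongr; exact measureReal_biUnion_finset_le _ _
    _ ≤ _ := by
        rw [← Finset.sum_add_sum_compl P]; linarith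

end

section

/-! ### Moments of Gaussian multiples of bounded vectors -/

/-- A centred law on `ℝ^p` with coordinates bounded by `b`, second moments in `[lo, v]`, and all
mixed third moments bounded by `τ`. -/
structure BlockLaw {p : ℕ} (P : Measure (Fin p → ℝ)) (b v lo τ : ℝ) : Prop where
  mean : ∀ j, ∫ x, x j ∂P = 0
  bdd : ∀ᵐ x ∂P, ∀ j, |x j| ≤ b
  le_v : ∀ j, ∫ x, x j ^ 2 ∂P ≤ v
  ge_lo : ∀ j, lo ≤ ∫ x, x j ^ 2 ∂P
  third : ∀ j k l, |∫ x, x j * x k * x l ∂P| ≤ τ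

/-- The exponential moment `∫ exp (3|e|)` of a standard normal variable. -/
def cExp : ℝ := ∫ e, Real.exp (3 * |e|) ∂(gaussianReal 0 1)

lemma integrable_exp_abs : Integrable (fun e : ℝ => Real.exp (3 * |e|)) (gaussianReal 0 1) :=
  integrable_exp_mul_abs (X := id) (integrable_exp_mul_gaussianReal 3)
    (integrable_exp_mul_gaussianReal (-3))

lemma one_le_cExp : 1 ≤ cExp := by
  unfold cExp
  calc (1 : ℝ) = ∫ _e : ℝ, (1 : ℝ) ∂(gaussianReal 0 1) := by simp
    _ ≤ _ := by
      refine integral_mono (integrable_const _) integrable_exp_abs fun e => ?_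
      exact Real.one_le_exp (by positivity)

lemma gauss_neg : MeasurePreserving (fun e : ℝ => -e) (gaussianReal 0 1) (gaussianReal 0 1) :=
  ⟨measurable_neg, by simpa using gaussianReal_map_neg (μ := 0) (v := 1)⟩

lemma integral_odd {F : Type} [MeasurableSpace F] {g : Measure F} {s : F ≃ᵐ F}
    (hs : MeasurePreserving s g g) {h : F → ℝ} (hodd : ∀ x, h (s x) = -h x) :
    ∫ x, h x ∂g = 0 := by
  have h1 := hs.integral_comp s.measurableEmbedding h
  simp only [hodd, integral_neg] at h1
  linarith

lemma gauss_sq : ∫ e : ℝ, e * e ∂(gaussianReal 0 1) = 1 := by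
  have h := variance_id_gaussianReal (μ := 0) (v := 1)
  rw [variance_eq_integral aemeasurable_id] at h
  simp only [id, integral_id_gaussianReal, sub_zero] at h
  simpa [sq] using h

lemma abs_le_of_norm {J : Type} [Fintype J] {y : J → ℝ} {c : ℝ} (hc : 0 ≤ c) (h : ∀ j, |y j| ≤ c) :
    ‖y‖ ≤ c := (pi_norm_le_iff_of_nonneg hc).2 h

/-- Exponential and weighted fourth moments of the vector `β w_j u_j`, where the `u_j` are bounded
and the independent multipliers `w_j` have exponential moments. -/
lemma mult_moments {J E F : Type} [Fintype J] [MeasurableSpace E] [MeasurableSpace F]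
    {κ : Measure E} [IsProbabilityMeasure κ] {g : Measure F} [IsProbabilityMeasure g]
    {u : J → E → ℝ} {w : J → F → ℝ} {Wf : F → ℝ} (hu : ∀ j, Measurable (u j))
    (hw : ∀ j, Measurable (w j)) (hwW : ∀ j f, |w j f| ≤ Wf f) (hW0 : ∀ f, 0 ≤ Wf f)
    (hWi : Integrable (fun f => Real.exp (3 * Wf f)) g)
    {b v β : ℝ} (hβ : 0 < β) (hb : 0 ≤ b) (hβb : β * b ≤ 1) (hub : ∀ᵐ x ∂κ, ∀ j, |u j x| ≤ b)
    (huv : ∀ j, ∫ x, u j x ^ 2 ∂κ ≤ v) :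
    Integrable (fun z : E × F => Real.exp (3 * ‖β • (fun j => w j z.2 * u j z.1)‖)) (κ.prod g) ∧
    ∀ j, ∫ z : E × F, Real.exp (2 * ‖β • (fun j => w j z.2 * u j z.1)‖) *
        (β • (fun j => w j z.2 * u j z.1)) j ^ 4 ∂(κ.prod g) ≤
      24 * (∫ f, Real.exp (3 * Wf f) ∂g) * (β ^ 4 * b ^ 2 * v) := by
  have hae : ∀ᵐ z ∂(κ.prod g), ∀ j, |u j z.1| ≤ b :=
    (Measure.quasiMeasurePreserving_fst (μ := κ) (ν := g)).ae hub
  have hnorm : ∀ z : E × F, (∀ j, |u j z.1| ≤ b) → ‖β • (fun j => w j z.2 * u j z.1)‖ ≤ Wf z.2 := by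
    intro z hz
    refine abs_le_of_norm (hW0 _) fun j => ?_
    simp only [Pi.smul_apply, smul_eq_mul, abs_mul, abs_of_pos hβ]
    calc β * (|w j z.2| * |u j z.1|) ≤ β * (Wf z.2 * b) := by
          gcongr
          · exact hW0 _
          · exact hwW _ _
          · exact hz j
      _ = (β * b) * Wf z.2 := by ring
      _ ≤ 1 * Wf z.2 := by gcongr; exact hW0 _
      _ = _ := one_mul _
  have hYm : Measurable (fun z : E × F => β • (fun j => w j z.2 * u j z.1)) := by
    refine measurable_pi_iff.2 fun j => ?_
    simp only [Pi.smul_apply, smul_eq_mul]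
    exact (((hw j).comp measurable_snd).mul ((hu j).comp measurable_fst)).const_mul _
  have hWi2 : Integrable (fun z : E × F => Real.exp (3 * Wf z.2)) (κ.prod g) := by
    simpa using (integrable_const (1 : ℝ)).mul_prod (μ := κ) hWi
  refine ⟨?_, fun j => ?_⟩
  · refine hWi2.mono' (Real.measurable_exp.comp (hYm.norm.const_mul 3)).aestronglyMeasurable ?_
    filter_upwards [hae] with z hz
    rw [Real.norm_of_nonneg (Real.exp_nonneg _)]
    gcongr
    exact hnorm z hz
  · have hu2 : Integrable (fun x => u j x ^ 2) κ := by
      refine (integrable_const (b ^ 2)).mono' (by fun_prop) ?_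
      filter_upwards [hub] with x hx
      rw [Real.norm_of_nonneg (sq_nonneg _), ← sq_abs]
      gcongr
      exact hx j
    have hdom : Integrable (fun z : E × F => (β ^ 4 * b ^ 2 * u j z.1 ^ 2) *
        (24 * Real.exp (3 * Wf z.2))) (κ.prod g) :=
      (hu2.const_mul _).mul_prod (hWi.const_mul 24)
    calc _ ≤ ∫ z : E × F, (β ^ 4 * b ^ 2 * u j z.1 ^ 2) * (24 * Real.exp (3 * Wf z.2)) ∂(κ.prod g) := by
          refine integral_mono_of_nonneg (ae_of_all _ fun z => by positivity) hdom ?_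
          filter_upwards [hae] with z hz
          simp only [Pi.smul_apply, smul_eq_mul]
          have h1 := hnorm z hz
          have h2 : |w j z.2| ^ 4 ≤ 24 * Real.exp (Wf z.2) :=
            (pow_le_pow_left₀ (abs_nonneg _) (hwW j z.2) 4).trans (pow_four_mul_exp_le _ (hW0 _))
          have h3 : u j z.1 ^ 4 ≤ b ^ 2 * u j z.1 ^ 2 := by
            have : u j z.1 ^ 2 ≤ b ^ 2 := by rw [← sq_abs]; gcongr; exact hz j
            nlinarith [sq_nonneg (u j z.1)]
          have h4 : w j z.2 ^ 4 ≤ 24 * Real.exp (Wf z.2) := by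
            rwa [← abs_pow, abs_of_nonneg (by positivity)] at h2
          calc _ ≤ Real.exp (2 * Wf z.2) * (β * (w j z.2 * u j z.1)) ^ 4 := by gcongr
            _ = β ^ 4 * (u j z.1 ^ 4) * (Real.exp (2 * Wf z.2) * w j z.2 ^ 4) := by ring
            _ ≤ β ^ 4 * (b ^ 2 * u j z.1 ^ 2) *
                (Real.exp (2 * Wf z.2) * (24 * Real.exp (Wf z.2))) := by gcongr
            _ = _ := by
              rw [show 3 * Wf z.2 = 2 * Wf z.2 + Wf z.2 by ring, Real.exp_add]; ring
      _ = (β ^ 4 * b ^ 2 * ∫ x, u j x ^ 2 ∂κ) * (24 * ∫ f, Real.exp (3 * Wf f) ∂g) := by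
          rw [integral_prod_mul (fun x => β ^ 4 * b ^ 2 * u j x ^ 2)
            (fun f => 24 * Real.exp (3 * Wf f)), integral_const_mul, integral_const_mul]
      _ ≤ (β ^ 4 * b ^ 2 * v) * (24 * ∫ f, Real.exp (3 * Wf f) ∂g) := by
          have : 0 ≤ ∫ f, Real.exp (3 * Wf f) ∂g := integral_nonneg fun _ => Real.exp_nonneg _
          gcongr
          exact huv j
      _ = _ := by ring

variable {p : ℕ} {P : Measure (Fin p → ℝ)} {b v lo τ β : ℝ}

/-- Moment matching between a block and its Gaussian multiple. -/
lemma momMatch_mult [IsProbabilityMeasure P] (H : BlockLaw P b v lo τ) (hβ : 0 < β) (hb : 0 ≤ b)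
    (hβb : β * b ≤ 1) :
    MomMatch P (P.prod (gaussianReal 0 1)) (fun x => β • x)
      (fun z : (Fin p → ℝ) × ℝ => β • (fun j => z.2 * z.1 j)) (β ^ 3 * τ)
      (9 * (β ^ 4 * b ^ 2 * v)) (24 * cExp * (β ^ 4 * b ^ 2 * v)) := by
  have hmm := mult_moments (κ := P) (g := gaussianReal 0 1) (u := fun j x => x j)
    (w := fun (_ : Fin p) e => e) (Wf := fun e => |e|) (fun j => measurable_pi_apply j)
    (fun _ => measurable_id) (fun _ _ => le_rfl) (fun _ => abs_nonneg _) integrable_exp_abs hβ hb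
    hβb H.bdd H.le_v
  have e1 : ∫ e : ℝ, e ∂(gaussianReal 0 1) = 0 :=
    integral_odd (s := MeasurableEquiv.neg ℝ) gauss_neg fun x => rfl
  have e3 : ∫ e : ℝ, e * e * e ∂(gaussianReal 0 1) = 0 :=
    integral_odd (s := MeasurableEquiv.neg ℝ) gauss_neg fun x => by
      simp only [MeasurableEquiv.neg_apply]; ring
  have hn : ∀ x : Fin p → ℝ, (∀ j, |x j| ≤ b) → ‖β • x‖ ≤ 1 := fun x hx => by
    refine abs_le_of_norm zero_le_one fun j => ?_
    simp only [Pi.smul_apply, smul_eq_mul, abs_mul, abs_of_pos hβ]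
    exact (mul_le_mul_of_nonneg_left (hx j) hβ.le).trans hβb
  refine ⟨?_, hmm.1, fun j => ?_, fun j k => ?_, fun j k l => ?_, fun j => ?_, hmm.2⟩
  · refine (integrable_const (Real.exp 3)).mono' (by fun_prop) ?_
    filter_upwards [H.bdd] with x hx
    rw [Real.norm_of_nonneg (Real.exp_nonneg _)]
    gcongr
    linarith [hn x hx]
  · simp only [Pi.smul_apply, smul_eq_mul]
    rw [integral_const_mul, H.mean, integral_const_mul]
    have := integral_prod_mul (μ := P) (ν := gaussianReal 0 1) (fun x => x j) (fun e => e)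
    simp only [mul_comm] at this ⊢
    rw [this, H.mean]; simp
  · have := integral_prod_mul (μ := P) (ν := gaussianReal 0 1)
      (fun x => (β * x j) * (β * x k)) (fun e => e * e)
    rw [gauss_sq, mul_one] at this
    simp only [Pi.smul_apply, smul_eq_mul]
    rw [← this]
    exact integral_congr_ae (ae_of_all _ fun z => by ring)
  · have := integral_prod_mul (μ := P) (ν := gaussianReal 0 1)
      (fun x => (β * x j) * (β * x k) * (β * x l)) (fun e => e * e * e)
    rw [e3, mul_zero] at this
    simp only [Pi.smul_apply, smul_eq_mul]
    have h2 : ∫ z : (Fin p → ℝ) × ℝ, β * (z.2 * z.1 j) * (β * (z.2 * z.1 k)) *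
        (β * (z.2 * z.1 l)) ∂(P.prod (gaussianReal 0 1)) = 0 := by
      refine Eq.trans ?_ this
      exact integral_congr_ae (ae_of_all _ fun z => by ring)
    have h3 : ∫ x : Fin p → ℝ, (β * x j) * (β * x k) * (β * x l) ∂P =
        β ^ 3 * ∫ x, x j * x k * x l ∂P := by
      rw [← integral_const_mul]
      exact integral_congr_ae (ae_of_all _ fun z => by ring)
    rw [h2, h3, sub_zero, abs_mul, abs_of_pos (by positivity)]
    gcongr
    exact H.third j k l
  · have hx2 : Integrable (fun x : Fin p → ℝ => x j ^ 2) P := by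
      refine (integrable_const (b ^ 2)).mono'
        ((measurable_pi_apply j).pow_const 2).aestronglyMeasurable ?_
      filter_upwards [H.bdd] with x hx
      rw [Real.norm_of_nonneg (sq_nonneg _), ← sq_abs]
      gcongr
      exact hx j
    calc _ ≤ ∫ x : Fin p → ℝ, 9 * (β ^ 4 * b ^ 2) * x j ^ 2 ∂P := by
          refine integral_mono_of_nonneg (ae_of_all _ fun z => by positivity) (hx2.const_mul _) ?_
          filter_upwards [H.bdd] with x hx
          have h1 : Real.exp (2 * ‖β • x‖) ≤ 9 := by
            calc Real.exp (2 * ‖β • x‖) ≤ Real.exp (1 + 1) := by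
                  gcongr; linarith [hn x hx]
              _ = Real.exp 1 * Real.exp 1 := Real.exp_add _ _
              _ ≤ 3 * 3 := by
                have := Real.exp_one_lt_three
                gcongr
              _ = 9 := by norm_num
          have h2 : x j ^ 2 ≤ b ^ 2 := by rw [← sq_abs]; gcongr; exact hx j
          have h3 : x j ^ 4 ≤ b ^ 2 * x j ^ 2 := by nlinarith [sq_nonneg (x j)]
          simp only [Pi.smul_apply, smul_eq_mul]
          calc _ ≤ 9 * (β * x j) ^ 4 := by gcongr
            _ = 9 * β ^ 4 * x j ^ 4 := by ring
            _ ≤ 9 * β ^ 4 * (b ^ 2 * x j ^ 2) := by gcongr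
            _ = _ := by ring
      _ = 9 * (β ^ 4 * b ^ 2) * ∫ x, x j ^ 2 ∂P := integral_const_mul _ _
      _ ≤ 9 * (β ^ 4 * b ^ 2) * v := by gcongr; exact H.le_v j
      _ = _ := by ring

/-- The vector `(e x, e' x')`, indexed by two copies of the coordinates. -/
def pairVec (z : ((Fin p → ℝ) × (Fin p → ℝ)) × (ℝ × ℝ)) (j : Fin p ⊕ Fin p) : ℝ :=
  Sum.elim (fun _ => z.2.1) (fun _ => z.2.2) j * Sum.elim (fun i => z.1.1 i) (fun i => z.1.2 i) j

/-- Moment matching for `(e x, e' x')` under two couplings of `x` and `x'` with the same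
marginals: independence of the multipliers kills every moment in which the couplings differ. -/
lemma momMatch_pair {κ κ' : Measure ((Fin p → ℝ) × (Fin p → ℝ))} [IsProbabilityMeasure P]
    [IsProbabilityMeasure κ] [IsProbabilityMeasure κ']
    (h1 : MeasurePreserving Prod.fst κ P) (h2 : MeasurePreserving Prod.snd κ P)
    (h1' : MeasurePreserving Prod.fst κ' P) (h2' : MeasurePreserving Prod.snd κ' P)
    (H : BlockLaw P b v lo τ) (hβ : 0 < β) (hb : 0 ≤ b) (hβb : β * b ≤ 1) :
    MomMatch (κ.prod ((gaussianReal 0 1).prod (gaussianReal 0 1)))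
      (κ'.prod ((gaussianReal 0 1).prod (gaussianReal 0 1))) (fun z => β • pairVec z)
      (fun z => β • pairVec z) 0 (24 * cExp ^ 2 * (β ^ 4 * b ^ 2 * v))
      (24 * cExp ^ 2 * (β ^ 4 * b ^ 2 * v)) := by
  let u : Fin p ⊕ Fin p → (Fin p → ℝ) × (Fin p → ℝ) → ℝ := fun j x =>
    Sum.elim (fun i => x.1 i) (fun i => x.2 i) j
  let w : Fin p ⊕ Fin p → ℝ × ℝ → ℝ := fun j e => Sum.elim (fun _ => e.1) (fun _ => e.2) j
  have hY : ∀ z j, (β • pairVec z) j = β * (w j z.2 * u j z.1) := fun z j => rfl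
  have hu : ∀ j, Measurable (u j) := by rintro (j | j) <;> simp only [u, Sum.elim_inl, Sum.elim_inr] <;> fun_prop
  have hw : ∀ j, Measurable (w j) := by rintro (j | j) <;> simp only [w, Sum.elim_inl, Sum.elim_inr] <;> fun_prop
  have hWi : Integrable (fun e : ℝ × ℝ => Real.exp (3 * (|e.1| + |e.2|)))
      ((gaussianReal 0 1).prod (gaussianReal 0 1)) := by
    simp only [mul_add, Real.exp_add]
    exact integrable_exp_abs.mul_prod integrable_exp_abs
  have hWe : ∫ e : ℝ × ℝ, Real.exp (3 * (|e.1| + |e.2|))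
      ∂((gaussianReal 0 1).prod (gaussianReal 0 1)) = cExp ^ 2 := by
    simp only [mul_add, Real.exp_add]
    rw [integral_prod_mul (fun x : ℝ => Real.exp (3 * |x|)) (fun x : ℝ => Real.exp (3 * |x|))]
    unfold cExp; ring
  have sq_of : ∀ {μ : Measure ((Fin p → ℝ) × (Fin p → ℝ))} {f : (Fin p → ℝ) × (Fin p → ℝ) → (Fin p → ℝ)},
      MeasurePreserving f μ P → ∀ j k, ∫ x, f x j * f x k ∂μ = ∫ x, x j * x k ∂P := by
    intro μ f hf j k
    rw [← hf.map_eq, integral_map hf.measurable.aemeasurable (by fun_prop)]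
  have mm : ∀ μ : Measure ((Fin p → ℝ) × (Fin p → ℝ)), IsProbabilityMeasure μ →
      MeasurePreserving Prod.fst μ P → MeasurePreserving Prod.snd μ P → _ := fun μ hμ ha hb' =>
    mult_moments (κ := μ) (g := (gaussianReal 0 1).prod (gaussianReal 0 1)) (u := u) (w := w)
      (Wf := fun e => |e.1| + |e.2|) (b := b) (v := v) hu hw
      (by rintro (j | j) f <;> simp [w]) (fun _ => by positivity) hWi hβ hb hβb
      (by
        filter_upwards [ha.quasiMeasurePreserving.ae H.bdd, hb'.quasiMeasurePreserving.ae H.bdd]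
          with x hx hx'
        rintro (j | j)
        · exact hx j
        · exact hx' j)
      (by
        rintro (j | j)
        · have := H.le_v j; simp only [sq] at this ⊢
          exact (sq_of ha j j).trans_le this
        · have := H.le_v j; simp only [sq] at this ⊢
          exact (sq_of hb' j j).trans_le this)
  have hs : MeasurePreserving ((MeasurableEquiv.neg ℝ).prodCongr (MeasurableEquiv.neg ℝ))
      ((gaussianReal 0 1).prod (gaussianReal 0 1)) ((gaussianReal 0 1).prod (gaussianReal 0 1)) :=
    gauss_neg.prod gauss_neg
  have hwneg : ∀ j e, w j ((MeasurableEquiv.neg ℝ).prodCongr (MeasurableEquiv.neg ℝ) e) = - w j e := by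
    rintro (j | j) e <;> rfl
  have i1 : ∀ μ : Measure ((Fin p → ℝ) × (Fin p → ℝ)), ∀ [SFinite μ] j,
      ∫ z, (β • pairVec z) j ∂(μ.prod ((gaussianReal 0 1).prod (gaussianReal 0 1))) = 0 := by
    intro μ _ j
    have h := integral_prod_mul (μ := μ) (ν := (gaussianReal 0 1).prod (gaussianReal 0 1))
      (fun x => β * u j x) (w j)
    rw [integral_odd hs (h := w j) (hwneg j), mul_zero] at h
    refine Eq.trans ?_ h
    exact integral_congr_ae (ae_of_all _ fun z => by simp only [hY]; ring)
  have i3 : ∀ μ : Measure ((Fin p → ℝ) × (Fin p → ℝ)), ∀ [SFinite μ] j k l,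
      ∫ z, (β • pairVec z) j * (β • pairVec z) k * (β • pairVec z) l
        ∂(μ.prod ((gaussianReal 0 1).prod (gaussianReal 0 1))) = 0 := by
    intro μ _ j k l
    have h := integral_prod_mul (μ := μ) (ν := (gaussianReal 0 1).prod (gaussianReal 0 1))
      (fun x => β ^ 3 * (u j x * u k x * u l x)) (fun e => w j e * w k e * w l e)
    rw [integral_odd hs (h := fun e => w j e * w k e * w l e)
      (fun x => by simp only [hwneg]; ring), mul_zero] at h
    refine Eq.trans ?_ h
    exact integral_congr_ae (ae_of_all _ fun z => by simp only [hY]; ring)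
  have i2 : ∀ μ : Measure ((Fin p → ℝ) × (Fin p → ℝ)), ∀ [SFinite μ] j k,
      ∫ z, (β • pairVec z) j * (β • pairVec z) k
        ∂(μ.prod ((gaussianReal 0 1).prod (gaussianReal 0 1))) =
      (β ^ 2 * ∫ x, u j x * u k x ∂μ) *
        ∫ e, w j e * w k e ∂((gaussianReal 0 1).prod (gaussianReal 0 1)) := by
    intro μ _ j k
    have h := integral_prod_mul (μ := μ) (ν := (gaussianReal 0 1).prod (gaussianReal 0 1))
      (fun x => β ^ 2 * (u j x * u k x)) (fun e => w j e * w k e)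
    rw [integral_const_mul] at h
    refine Eq.trans ?_ h
    exact integral_congr_ae (ae_of_all _ fun z => by simp only [hY]; ring)
  have e1 : ∫ e : ℝ, e ∂(gaussianReal 0 1) = 0 :=
    integral_odd (s := MeasurableEquiv.neg ℝ) gauss_neg fun x => rfl
  have cross : ∫ e : ℝ × ℝ, e.1 * e.2 ∂((gaussianReal 0 1).prod (gaussianReal 0 1)) = 0 := by
    rw [integral_prod_mul (fun x : ℝ => x) (fun x : ℝ => x), e1, mul_zero]
  refine ⟨(mm κ ‹_› h1 h2).1, (mm κ' ‹_› h1' h2').1, fun j => ?_, ?_, fun j k l => ?_, ?_, ?_⟩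
  · rw [i1, i1]
  · intro j k
    rw [i2, i2]
    rcases j with j | j <;> rcases k with k | k
    · congr 2; exact (sq_of h1 j k).trans (sq_of h1' j k).symm
    · have : ∫ e : ℝ × ℝ, w (Sum.inl j) e * w (Sum.inr k) e
          ∂((gaussianReal 0 1).prod (gaussianReal 0 1)) = 0 := cross
      rw [this, mul_zero, mul_zero]
    · have : ∫ e : ℝ × ℝ, w (Sum.inr j) e * w (Sum.inl k) e
          ∂((gaussianReal 0 1).prod (gaussianReal 0 1)) = 0 := by
        refine Eq.trans ?_ cross; exact integral_congr_ae (ae_of_all _ fun z => mul_comm _ _)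
      rw [this, mul_zero, mul_zero]
    · congr 2; exact (sq_of h2 j k).trans (sq_of h2' j k).symm
  · rw [i3, i3]; simp
  · intro j; rw [← hWe]; exact (mm κ ‹_› h1 h2).2 j
  · intro j; rw [← hWe]; exact (mm κ' ‹_› h1' h2').2 j

end

section

/-! ### Gaussian approximation and bootstrap consistency for independent blocks -/

section IndepBlocks

variable {m p : ℕ}

/-- The conditional distribution function at `t` of the maximum of the multiplier sums
`∑ e_l x_l` given the blocks `x_l`. -/
def condCdf (t : ℝ) (x : Fin m → Fin p → ℝ) : ℝ :=
  (gaussPi m).real {e | ∀ j, ∑ l, e l * x l j ≤ t}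

/-- The unconditional distribution function of the maximum of the multiplier sums. -/
def meanCdf (P : Fin m → Measure (Fin p → ℝ)) (t : ℝ) : ℝ := ∫ x, condCdf t x ∂(Measure.pi P)

lemma condCdf_nonneg (t : ℝ) (x : Fin m → Fin p → ℝ) : 0 ≤ condCdf t x := measureReal_nonneg

lemma condCdf_le_one (t : ℝ) (x : Fin m → Fin p → ℝ) : condCdf t x ≤ 1 := measureReal_le_one

lemma measurableSet_mult (t : ℝ) :
    MeasurableSet {z : (Fin m → Fin p → ℝ) × (Fin m → ℝ) | ∀ j, ∑ l, z.2 l * z.1 l j ≤ t} := by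
  refine measurableSet_forall_le (f := fun z : (Fin m → Fin p → ℝ) × (Fin m → ℝ) =>
    fun j => ∑ l, z.2 l * z.1 l j) ?_ t
  refine measurable_pi_iff.2 fun j => ?_
  refine Finset.measurable_sum _ fun l _ => ?_
  exact ((measurable_pi_apply l).comp measurable_snd).mul
    ((measurable_pi_apply j).comp ((measurable_pi_apply l).comp measurable_fst))

lemma measurable_condCdf (t : ℝ) : Measurable (condCdf t : (Fin m → Fin p → ℝ) → ℝ) :=
  (measurable_measure_prodMk_left (ν := gaussPi m) (measurableSet_mult t)).ennreal_toReal

lemma condCdf_mono (x : Fin m → Fin p → ℝ) {s t : ℝ} (h : s ≤ t) : condCdf s x ≤ condCdf t x :=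
  measureReal_mono fun _ he j => (he j).trans h

lemma integrable_condCdf (μ : Measure (Fin m → Fin p → ℝ)) [IsFiniteMeasure μ] (t : ℝ) :
    Integrable (condCdf t) μ := by
  refine (integrable_const (1 : ℝ)).mono' (measurable_condCdf t).aestronglyMeasurable
    (ae_of_all _ fun x => ?_)
  rw [Real.norm_of_nonneg (condCdf_nonneg t x)]
  exact condCdf_le_one t x

variable (P : Fin m → Measure (Fin p → ℝ)) [∀ l, IsProbabilityMeasure (P l)]

lemma meanCdf_mono {s t : ℝ} (h : s ≤ t) : meanCdf P s ≤ meanCdf P t :=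
  integral_mono (integrable_condCdf _ _) (integrable_condCdf _ _) fun x => condCdf_mono x h

lemma meanCdf_nonneg (t : ℝ) : 0 ≤ meanCdf P t := integral_nonneg fun _ => condCdf_nonneg _ _

lemma meanCdf_le_one (t : ℝ) : meanCdf P t ≤ 1 := by
  calc meanCdf P t ≤ ∫ _x, (1 : ℝ) ∂(Measure.pi P) :=
        integral_mono (integrable_condCdf _ _) (integrable_const _) fun x => condCdf_le_one t x
    _ = 1 := by simp

lemma measureReal_prod_eq {E F : Type} [MeasurableSpace E] [MeasurableSpace F] (κ : Measure E)
    (g : Measure F) [IsProbabilityMeasure κ] [IsProbabilityMeasure g] {S : Set (E × F)}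
    (hS : MeasurableSet S) : (κ.prod g).real S = ∫ x, g.real (Prod.mk x ⁻¹' S) ∂κ := by
  rw [measureReal_def, Measure.prod_apply hS]
  exact (integral_toReal (measurable_measure_prodMk_left hS).aemeasurable
    (ae_of_all _ fun x => measure_lt_top _ _)).symm

lemma mult_real_eq (t : ℝ) :
    (Measure.pi fun l => (P l).prod (gaussianReal 0 1)).real
      {z | ∀ j, ∑ l, (fun j => (z l).2 * (z l).1 j) j ≤ t} = meanCdf P t := by
  have hmp := measurePreserving_arrowProdEquivProdArrow (Fin p → ℝ) ℝ (Fin m) P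
    (fun _ => gaussianReal 0 1)
  have := hmp.measureReal_preimage (s := {z | ∀ j, ∑ l, z.2 l * z.1 l j ≤ t})
    (measurableSet_mult t).nullMeasurableSet
  refine Eq.trans ?_ (this.trans ?_)
  · rfl
  · exact measureReal_prod_eq _ _ (measurableSet_mult t)

lemma pair_real_eq (κ : Fin m → Measure ((Fin p → ℝ) × (Fin p → ℝ)))
    [∀ l, IsProbabilityMeasure (κ l)] (t : ℝ) :
    (Measure.pi fun l => (κ l).prod ((gaussianReal 0 1).prod (gaussianReal 0 1))).real
      {z | ∀ j, ∑ l, pairVec (z l) j ≤ t} =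
    ∫ y, condCdf t (fun l => (y l).1) * condCdf t (fun l => (y l).2) ∂(Measure.pi κ) := by
  have hmp := measurePreserving_arrowProdEquivProdArrow ((Fin p → ℝ) × (Fin p → ℝ)) (ℝ × ℝ) (Fin m)
    κ (fun _ => (gaussianReal 0 1).prod (gaussianReal 0 1))
  let S : Set ((Fin m → (Fin p → ℝ) × (Fin p → ℝ)) × (Fin m → ℝ × ℝ)) :=
    {z | ∀ j, ∑ l, pairVec (z.1 l, z.2 l) j ≤ t}
  have hS : MeasurableSet S := by
    refine measurableSet_forall_le (f := fun z : (Fin m → (Fin p → ℝ) × (Fin p → ℝ)) ×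
      (Fin m → ℝ × ℝ) => fun j => ∑ l, pairVec (z.1 l, z.2 l) j) ?_ t
    refine measurable_pi_iff.2 fun j => ?_
    refine Finset.measurable_sum _ fun l _ => ?_
    rcases j with j | j
    · show Measurable fun z : (Fin m → (Fin p → ℝ) × (Fin p → ℝ)) × (Fin m → ℝ × ℝ) =>
        (z.2 l).1 * (z.1 l).1 j
      fun_prop
    · show Measurable fun z : (Fin m → (Fin p → ℝ) × (Fin p → ℝ)) × (Fin m → ℝ × ℝ) =>
        (z.2 l).2 * (z.1 l).2 j
      fun_prop
  have := hmp.measureReal_preimage hS.nullMeasurableSet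
  refine Eq.trans ?_ (this.trans ((measureReal_prod_eq _ _ hS).trans ?_))
  · rfl
  · refine integral_congr_ae (ae_of_all _ fun y => ?_)
    have hmp2 := measurePreserving_arrowProdEquivProdArrow ℝ ℝ (Fin m)
      (fun _ => gaussianReal 0 1) (fun _ => gaussianReal 0 1)
    let A : Set (Fin m → ℝ) := {e | ∀ j, ∑ l, e l * (y l).1 j ≤ t}
    let B : Set (Fin m → ℝ) := {e | ∀ j, ∑ l, e l * (y l).2 j ≤ t}
    have hAB : ∀ u : Fin m → Fin p → ℝ, MeasurableSet {e : Fin m → ℝ | ∀ j, ∑ l, e l * u l j ≤ t} := by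
      intro u
      refine measurableSet_forall_le (f := fun e : Fin m → ℝ => fun j => ∑ l, e l * u l j) ?_ t
      fun_prop
    have h2 := hmp2.measureReal_preimage (s := A ×ˢ B)
      ((hAB _).prod (hAB _)).nullMeasurableSet
    rw [measureReal_prod_prod] at h2
    refine Eq.trans ?_ h2
    show Measure.real _ _ = Measure.real _ _
    congr 1
    ext w
    constructor
    · intro h
      exact ⟨fun j => h (Sum.inl j), fun j => h (Sum.inr j)⟩
    · rintro ⟨h, h'⟩ (j | j)
      · exact h j
      · exact h' j

/-- Total error of the fourth-order Lindeberg replacement of `m` blocks. -/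
def lindErr (m : ℕ) (L β b v τ : ℝ) : ℝ :=
  100 * (K0 / L) * (m * (β ^ 3 * τ + 48 * cExp ^ 2 * (β ^ 4 * b ^ 2 * v)))

variable {P} {b v lo τ β L : ℝ}

lemma lindErr_ge (hL : 1 ≤ L) (T : ℝ) (hT : T ≤ β ^ 3 * τ + 48 * cExp ^ 2 * (β ^ 4 * b ^ 2 * v)) :
    100 * (K0 / L) * ∑ _l : Fin m, T ≤ lindErr m L β b v τ := by
  unfold lindErr
  have := K0_pos
  rw [Finset.sum_const, Finset.card_univ, Fintype.card_fin, nsmul_eq_mul]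
  gcongr

lemma MomMatch.symm {J Ω Ω' : Type} [Fintype J] [MeasurableSpace Ω] [MeasurableSpace Ω']
    {ν : Measure Ω} {ν' : Measure Ω'} {Y : Ω → J → ℝ} {Y' : Ω' → J → ℝ} {T3 T4 T4' : ℝ}
    (H : MomMatch ν ν' Y Y' T3 T4 T4') : MomMatch ν' ν Y' Y T3 T4' T4 :=
  ⟨H.hexp', H.hexp, fun j => (H.m1 j).symm, fun j k => (H.m2 j k).symm,
    fun j k l => by rw [abs_sub_comm]; exact H.m3 j k l, H.m4', H.m4⟩

lemma mult_const_le (hv : 0 ≤ v) (hβ : 0 < β) :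
    β ^ 3 * τ + 9 * (β ^ 4 * b ^ 2 * v) + 24 * cExp * (β ^ 4 * b ^ 2 * v) ≤
      β ^ 3 * τ + 48 * cExp ^ 2 * (β ^ 4 * b ^ 2 * v) := by
  have h1 := one_le_cExp
  have h2 : (0 : ℝ) ≤ β ^ 4 * b ^ 2 * v := by positivity
  nlinarith [mul_nonneg h2 (sub_nonneg.2 h1), mul_nonneg (mul_nonneg h2 (sub_nonneg.2 h1)) (sub_nonneg.2 h1)]

/-- Standing conditions for the comparison of `m` independent blocks in dimension `p` with
smoothing parameter `β` and logarithmic factor `L`. -/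
structure LindHyp {m p : ℕ} (P : Fin m → Measure (Fin p → ℝ)) (b v lo τ β L : ℝ) : Prop where
  law : ∀ l, BlockLaw (P l) b v lo τ
  hL : 1 ≤ L
  hp : Real.log (2 * p) ≤ L
  hβ : 0 < β
  hb : 0 ≤ b
  hv : 0 ≤ v
  hτ : 0 ≤ τ
  hβb : β * b ≤ 1

lemma LindHyp.log_p_le [NeZero p] (H : LindHyp P b v lo τ β L) :
    Real.log (Fintype.card (Fin p)) ≤ L := by
  have h0 : 0 < (p : ℝ) := by exact_mod_cast Nat.pos_of_ne_zero (NeZero.ne p)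
  rw [Fintype.card_fin]
  refine le_trans (Real.log_le_log h0 (by linarith)) H.hp

lemma sum_le_meanCdf [NeZero p] (H : LindHyp P b v lo τ β L) (t : ℝ) :
    (Measure.pi P).real {x | ∀ j, ∑ l, x l j ≤ t} ≤
      meanCdf P (t + 2 * (L / β)) + lindErr m L β b v τ := by
  have h := kolm_le (Y := fun x : Fin p → ℝ => x)
    (Y' := fun z : (Fin p → ℝ) × ℝ => fun j => z.2 * z.1 j) measurable_id
    (by fun_prop) P (fun l => (P l).prod (gaussianReal 0 1)) H.hL
    H.log_p_le H.hβ
    (fun l => momMatch_mult (H.law l) H.hβ H.hb H.hβb) t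
  rw [mult_real_eq] at h
  refine h.trans ?_
  gcongr
  exact lindErr_ge H.hL _ (mult_const_le H.hv H.hβ)

lemma meanCdf_le_sum [NeZero p] (H : LindHyp P b v lo τ β L) (t : ℝ) :
    meanCdf P t ≤ (Measure.pi P).real {x | ∀ j, ∑ l, x l j ≤ t + 2 * (L / β)} +
      lindErr m L β b v τ := by
  have h := kolm_le (Y' := fun x : Fin p → ℝ => x)
    (Y := fun z : (Fin p → ℝ) × ℝ => fun j => z.2 * z.1 j)
    (by fun_prop) measurable_id (fun l => (P l).prod (gaussianReal 0 1)) P H.hL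
    H.log_p_le H.hβ
    (fun l => (momMatch_mult (H.law l) H.hβ H.hb H.hβb).symm) t
  rw [mult_real_eq] at h
  refine h.trans ?_
  gcongr
  refine lindErr_ge H.hL _ (le_trans (le_of_eq ?_) (mult_const_le H.hv H.hβ))
  ring

/-- The second moment of the conditional distribution function is nearly the square of its mean:
the vectors `(e x, e' x)` and `(e x, e' x')` have the same first three moments. -/
lemma integral_sq_condCdf_le [NeZero p] (H : LindHyp P b v lo τ β L) (t : ℝ) :
    ∫ x, condCdf t x ^ 2 ∂(Measure.pi P) ≤ meanCdf P (t + 2 * (L / β)) ^ 2 +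
      lindErr m L β b v τ := by
  have hdm : Measurable (fun x : Fin p → ℝ => (x, x)) := by fun_prop
  have : ∀ l, IsProbabilityMeasure ((P l).map (fun x => (x, x))) := fun l =>
    Measure.isProbabilityMeasure_map hdm.aemeasurable
  have hfst : ∀ l, MeasurePreserving Prod.fst ((P l).map (fun x => (x, x))) (P l) := fun l =>
    ⟨measurable_fst, by rw [Measure.map_map measurable_fst hdm]; exact Measure.map_id⟩
  have hsnd : ∀ l, MeasurePreserving Prod.snd ((P l).map (fun x => (x, x))) (P l) := fun l =>
    ⟨measurable_snd, by rw [Measure.map_map measurable_snd hdm]; exact Measure.map_id⟩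
  have hpm : Measurable (pairVec : ((Fin p → ℝ) × (Fin p → ℝ)) × (ℝ × ℝ) → Fin p ⊕ Fin p → ℝ) := by
    refine measurable_pi_iff.2 fun j => ?_
    rcases j with j | j
    · show Measurable fun z : ((Fin p → ℝ) × (Fin p → ℝ)) × (ℝ × ℝ) => z.2.1 * z.1.1 j
      fun_prop
    · show Measurable fun z : ((Fin p → ℝ) × (Fin p → ℝ)) × (ℝ × ℝ) => z.2.2 * z.1.2 j
      fun_prop
  have h := kolm_le (Y := pairVec) (Y' := pairVec) hpm hpm
    (fun l => ((P l).map (fun x => (x, x))).prod ((gaussianReal 0 1).prod (gaussianReal 0 1)))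
    (fun l => ((P l).prod (P l)).prod ((gaussianReal 0 1).prod (gaussianReal 0 1))) H.hL
    (by
      rw [Fintype.card_sum, Fintype.card_fin]
      convert H.hp using 2
      push_cast; ring) H.hβ
    (fun l => momMatch_pair (hfst l) (hsnd l) measurePreserving_fst measurePreserving_snd (H.law l)
      H.hβ H.hb H.hβb) t
  rw [pair_real_eq, pair_real_eq] at h
  have e1 : ∫ y, condCdf t (fun l => (y l).1) * condCdf t (fun l => (y l).2)
      ∂(Measure.pi fun l => (P l).map (fun x => (x, x))) = ∫ x, condCdf t x ^ 2 ∂(Measure.pi P) := by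
    rw [← Measure.pi_map_pi (fun l => hdm.aemeasurable), integral_map (by fun_prop)]
    · exact integral_congr_ae (ae_of_all _ fun x => (sq _).symm)
    · refine Measurable.aestronglyMeasurable ?_
      exact ((measurable_condCdf t).comp (by fun_prop)).mul ((measurable_condCdf t).comp (by fun_prop))
  have e2 : ∀ s, ∫ y, condCdf s (fun l => (y l).1) * condCdf s (fun l => (y l).2)
      ∂(Measure.pi fun l => (P l).prod (P l)) = meanCdf P s ^ 2 := by
    intro s
    have hmp := measurePreserving_arrowProdEquivProdArrow (Fin p → ℝ) (Fin p → ℝ) (Fin m) P P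
    have := hmp.integral_comp (MeasurableEquiv.measurableEmbedding _)
      (fun z => condCdf s z.1 * condCdf s z.2)
    rw [integral_prod_mul (condCdf s) (condCdf s)] at this
    rw [sq]
    exact this
  rw [e1, e2] at h
  refine h.trans ?_
  gcongr
  refine lindErr_ge H.hL _ ?_
  have : 0 ≤ β ^ 3 * τ := mul_nonneg (pow_nonneg H.hβ.le 3) H.hτ
  linarith

end IndepBlocks

end

section

/-! ### Exponential inequalities for independent blocks -/

lemma pi_chernoff {m : ℕ} {E : Type} [MeasurableSpace E] (P : Fin m → Measure E)
    [∀ l, IsProbabilityMeasure (P l)] {g : E → ℝ} {c u : ℝ}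
    (hInt : ∀ l, Integrable (fun x => Real.exp (g x)) (P l))
    (hle : ∀ l, ∫ x, Real.exp (g x) ∂(P l) ≤ Real.exp c) :
    (Measure.pi P).real {x | u ≤ ∑ l, g (x l)} ≤ Real.exp (m * c - u) := by
  have hI : Integrable (fun x : Fin m → E => ∏ l, Real.exp (g (x l))) (Measure.pi P) :=
    Integrable.fintype_prod (f := fun _ x => Real.exp (g x)) hInt
  have hle2 : ∫ x : Fin m → E, ∏ l, Real.exp (g (x l)) ∂(Measure.pi P) ≤ Real.exp (m * c) := by
    rw [integral_fintype_prod_eq_prod (fun _ x => Real.exp (g x))]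
    calc _ ≤ ∏ _l : Fin m, Real.exp c :=
          Finset.prod_le_prod (fun l _ => integral_nonneg fun _ => Real.exp_nonneg _)
            fun l _ => hle l
      _ = Real.exp (m * c) := by
          rw [Finset.prod_const, Finset.card_univ, Fintype.card_fin, ← Real.exp_nat_mul]
  have hmk := mul_meas_ge_le_integral_of_nonneg (μ := Measure.pi P)
    (f := fun x : Fin m → E => ∏ l, Real.exp (g (x l)))
    (ae_of_all _ fun x => Finset.prod_nonneg fun l _ => Real.exp_nonneg _) hI (Real.exp u)
  have hset : {x : Fin m → E | u ≤ ∑ l, g (x l)} =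
      {x : Fin m → E | Real.exp u ≤ ∏ l, Real.exp (g (x l))} := by
    ext x
    show u ≤ _ ↔ Real.exp u ≤ _
    rw [← Real.exp_sum, Real.exp_le_exp]
  rw [hset, Real.exp_sub, le_div_iff₀ (Real.exp_pos _), mul_comm]
  exact hmk.trans hle2

section

variable {m p : ℕ} {P : Fin m → Measure (Fin p → ℝ)} [∀ l, IsProbabilityMeasure (P l)]
  {b v lo τ β L : ℝ}

lemma integrable_of_bdd {E : Type} [MeasurableSpace E] {μ : Measure E} [IsFiniteMeasure μ]
    {f : E → ℝ} (hf : Measurable f) {C : ℝ} (h : ∀ᵐ x ∂μ, |f x| ≤ C) : Integrable f μ :=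
  (integrable_const C).mono' hf.aestronglyMeasurable h

/-- Exponential inequality for the maximum of sums of independent centred bounded vectors. -/
lemma sum_tail (hmean : ∀ l j, ∫ x, x j ∂(P l) = 0) (hbdd : ∀ l, ∀ᵐ x ∂(P l), ∀ j, |x j| ≤ b)
    (hv : ∀ l j, ∫ x, x j ^ 2 ∂(P l) ≤ v) {lam u : ℝ} (hl : 0 ≤ lam) (hlb : lam * b ≤ 1) :
    (Measure.pi P).real {x | ∃ j, u ≤ |∑ l, x l j|} ≤
      2 * p * Real.exp (m * (lam ^ 2 * v) - lam * u) := by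
  have key : ∀ s : ℝ, (s = 1 ∨ s = -1) → ∀ j, (Measure.pi P).real {x | lam * u ≤ ∑ l, lam * s * x l j} ≤
      Real.exp (m * (lam ^ 2 * v) - lam * u) := by
    intro s hs j
    have hs2 : s ^ 2 = 1 := by rcases hs with rfl | rfl <;> norm_num
    have hsa : |s| = 1 := by rcases hs with rfl | rfl <;> norm_num
    have hmx : Measurable (fun x : Fin p → ℝ => x j) := measurable_pi_apply j
    have hab : ∀ l, ∀ᵐ x ∂(P l), |lam * s * x j| ≤ 1 := fun l => by
      filter_upwards [hbdd l] with x hx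
      rw [abs_mul, abs_mul, hsa, mul_one, abs_of_nonneg hl]
      exact (mul_le_mul_of_nonneg_left (hx j) hl).trans hlb
    refine pi_chernoff P (g := fun x : Fin p → ℝ => lam * s * x j) (fun l => ?_) (fun l => ?_)
    · refine integrable_of_bdd (by fun_prop) (C := Real.exp 1) ?_
      filter_upwards [hab l] with x hx
      rw [abs_of_pos (Real.exp_pos _)]
      exact Real.exp_le_exp.2 ((le_abs_self _).trans hx)
    · have hx1 : Integrable (fun x : Fin p → ℝ => x j) (P l) :=
        integrable_of_bdd hmx (C := b) ((hbdd l).mono fun x hx => hx j)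
      have hx2 : Integrable (fun x : Fin p → ℝ => x j ^ 2) (P l) :=
        integrable_of_bdd (hmx.pow_const 2) (C := b ^ 2) ((hbdd l).mono fun x hx => by
          rw [abs_of_nonneg (sq_nonneg _), ← sq_abs]
          have := hx j
          gcongr)
      have hI : Integrable (fun x : Fin p → ℝ => 1 + lam * s * x j + lam ^ 2 * x j ^ 2) (P l) :=
        ((integrable_const _).add (hx1.const_mul _)).add (hx2.const_mul _)
      calc _ ≤ ∫ x : Fin p → ℝ, 1 + lam * s * x j + lam ^ 2 * x j ^ 2 ∂(P l) := by
            refine integral_mono_of_nonneg (ae_of_all _ fun x => Real.exp_nonneg _) hI ?_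
            filter_upwards [hab l] with x hx
            have h1 := (abs_le.1 (Real.abs_exp_sub_one_sub_id_le hx)).2
            have h2 : (lam * s * x j) ^ 2 = lam ^ 2 * x j ^ 2 := by
              rw [mul_pow, mul_pow, hs2, mul_one]
            rw [h2] at h1
            linarith
        _ = 1 + lam ^ 2 * ∫ x, x j ^ 2 ∂(P l) := by
            have ha : Integrable (fun x : Fin p → ℝ => 1 + lam * s * x j) (P l) :=
              (integrable_const _).add (hx1.const_mul _)
            rw [integral_add ha (hx2.const_mul _), integral_add (integrable_const _) (hx1.const_mul _),
              integral_const_mul, integral_const_mul, hmean]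
            simp
        _ ≤ 1 + lam ^ 2 * v := by gcongr; exact hv l j
        _ ≤ Real.exp (lam ^ 2 * v) := by rw [add_comm]; exact Real.add_one_le_exp _
  have hsub : {x : Fin m → Fin p → ℝ | ∃ j, u ≤ |∑ l, x l j|} ⊆
      ⋃ j ∈ (Finset.univ : Finset (Fin p)), ({x | lam * u ≤ ∑ l, lam * 1 * x l j} ∪
        {x | lam * u ≤ ∑ l, lam * (-1) * x l j}) := by
    rintro x ⟨j, hj⟩
    simp only [Set.mem_iUnion]
    refine ⟨j, Finset.mem_univ j, ?_⟩
    rcases le_total 0 (∑ l, x l j) with h | h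
    · left
      rw [abs_of_nonneg h] at hj
      show lam * u ≤ _
      rw [← Finset.mul_sum, mul_one]
      gcongr
    · right
      rw [abs_of_nonpos h] at hj
      show lam * u ≤ _
      rw [← Finset.mul_sum]
      calc lam * u ≤ lam * -(∑ l, x l j) := by gcongr
        _ = _ := by ring
  calc _ ≤ _ := measureReal_mono hsub (measure_ne_top _ _)
    _ ≤ ∑ j : Fin p, (Measure.pi P).real ({x | lam * u ≤ ∑ l, lam * 1 * x l j} ∪
        {x | lam * u ≤ ∑ l, lam * (-1) * x l j}) := measureReal_biUnion_finset_le _ _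
    _ ≤ ∑ _j : Fin p, 2 * Real.exp (m * (lam ^ 2 * v) - lam * u) := by
        refine Finset.sum_le_sum fun j _ => (measureReal_union_le _ _).trans ?_
        linarith [key 1 (Or.inl rfl) j, key (-1) (Or.inr rfl) j]
    _ = _ := by
        rw [Finset.sum_const, Finset.card_univ, Fintype.card_fin, nsmul_eq_mul]; ring

/-- Lower tail of the empirical second moments of the blocks. -/
lemma sq_lower_tail (H : ∀ l, BlockLaw (P l) b v lo τ) (hb : 0 < b) (hv : 0 < v) (hlo : 0 ≤ lo)
    (hlv : lo ≤ v) :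
    (Measure.pi P).real {x | ∃ j, ∑ l, x l j ^ 2 ≤ m * lo / 2} ≤
      p * Real.exp (-(m * lo ^ 2 / (16 * b ^ 2 * v))) := by
  set lam : ℝ := lo / (4 * b ^ 2 * v) with hlam
  have hl : 0 ≤ lam := by positivity
  have hlb : lam * b ^ 2 ≤ 1 := by
    rw [hlam, div_mul_eq_mul_div, div_le_one (by positivity)]
    nlinarith [sq_nonneg b, mul_le_mul_of_nonneg_left hlv (sq_nonneg b), mul_nonneg (sq_nonneg b) hv.le]
  have key : ∀ j, (Measure.pi P).real {x | -(lam * (m * lo / 2)) ≤ ∑ l, -(lam * x l j ^ 2)} ≤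
      Real.exp (-(m * lo ^ 2 / (16 * b ^ 2 * v))) := by
    intro j
    have hmx : Measurable (fun x : Fin p → ℝ => x j) := measurable_pi_apply j
    have hsq : ∀ l, ∀ᵐ x ∂(P l), x j ^ 2 ≤ b ^ 2 := fun l => (H l).bdd.mono fun x hx => by
      rw [← sq_abs]; have := hx j; gcongr
    refine (pi_chernoff P (g := fun x : Fin p → ℝ => -(lam * x j ^ 2))
      (c := -(lam * lo) + lam ^ 2 * b ^ 2 * v) (fun l => ?_) (fun l => ?_)).trans
        (le_of_eq ?_)
    · refine integrable_of_bdd (by fun_prop) (C := 1) (ae_of_all _ fun x => ?_)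
      rw [abs_of_pos (Real.exp_pos _)]
      exact Real.exp_le_one_iff.2 (by have := mul_nonneg hl (sq_nonneg (x j)); linarith)
    · have hx2 : Integrable (fun x : Fin p → ℝ => x j ^ 2) (P l) :=
        integrable_of_bdd (hmx.pow_const 2) (C := b ^ 2) ((hsq l).mono fun x hx => by
          rwa [abs_of_nonneg (sq_nonneg _)])
      have hI : Integrable (fun x : Fin p → ℝ => 1 + (-lam + lam ^ 2 * b ^ 2) * x j ^ 2) (P l) :=
        (integrable_const _).add (hx2.const_mul _)
      calc _ ≤ ∫ x : Fin p → ℝ, 1 + (-lam + lam ^ 2 * b ^ 2) * x j ^ 2 ∂(P l) := by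
            refine integral_mono_of_nonneg (ae_of_all _ fun x => Real.exp_nonneg _) hI ?_
            filter_upwards [hsq l] with x hx
            have hx0 := sq_nonneg (x j)
            have h3 : lam * x j ^ 2 ≤ 1 := (mul_le_mul_of_nonneg_left hx hl).trans hlb
            have h1 := (abs_le.1 (Real.abs_exp_sub_one_sub_id_le (x := -(lam * x j ^ 2)) (by
              rw [abs_neg, abs_of_nonneg (mul_nonneg hl hx0)]; exact h3))).2
            have h2 : (-(lam * x j ^ 2)) ^ 2 ≤ lam ^ 2 * b ^ 2 * x j ^ 2 := by
              calc (-(lam * x j ^ 2)) ^ 2 = lam ^ 2 * x j ^ 2 * x j ^ 2 := by ring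
                _ ≤ lam ^ 2 * b ^ 2 * x j ^ 2 := by gcongr
            show Real.exp _ ≤ _
            linarith
        _ = 1 + (-lam + lam ^ 2 * b ^ 2) * ∫ x, x j ^ 2 ∂(P l) := by
            rw [integral_add (integrable_const _) (hx2.const_mul _), integral_const_mul]
            simp
        _ ≤ (-(lam * lo) + lam ^ 2 * b ^ 2 * v) + 1 := by
            have h1 := mul_le_mul_of_nonneg_left ((H l).ge_lo j) hl
            have h2 := mul_le_mul_of_nonneg_left ((H l).le_v j) (by positivity : 0 ≤ lam ^ 2 * b ^ 2)
            linarith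
        _ ≤ _ := Real.add_one_le_exp _
    · congr 1
      rw [hlam]
      field_simp
      ring
  have hsub : {x : Fin m → Fin p → ℝ | ∃ j, ∑ l, x l j ^ 2 ≤ m * lo / 2} ⊆
      ⋃ j ∈ (Finset.univ : Finset (Fin p)),
        {x | -(lam * (m * lo / 2)) ≤ ∑ l, -(lam * x l j ^ 2)} := by
    rintro x ⟨j, hj⟩
    simp only [Set.mem_iUnion]
    refine ⟨j, Finset.mem_univ j, ?_⟩
    show -(lam * (m * lo / 2)) ≤ _
    rw [Finset.sum_neg_distrib, ← Finset.mul_sum]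
    exact neg_le_neg (mul_le_mul_of_nonneg_left hj hl)
  calc _ ≤ _ := measureReal_mono hsub (measure_ne_top _ _)
    _ ≤ ∑ j : Fin p, (Measure.pi P).real
        {x | -(lam * (m * lo / 2)) ≤ ∑ l, -(lam * x l j ^ 2)} := measureReal_biUnion_finset_le _ _
    _ ≤ ∑ _j : Fin p, Real.exp (-(m * lo ^ 2 / (16 * b ^ 2 * v))) :=
        Finset.sum_le_sum fun j _ => key j
    _ = _ := by rw [Finset.sum_const, Finset.card_univ, Fintype.card_fin, nsmul_eq_mul]

/-- Bound for the increments of `meanCdf` over intervals of length `δ`, using the level `H` in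
the Gaussian anti-concentration inequality. -/
def acErr (m p : ℕ) (b v lo H δ : ℝ) : ℝ :=
  5 * (δ / √(m * lo / 2)) * (H + 1) + p * Real.exp (-(H ^ 2 / 2)) +
    p * Real.exp (-(m * lo ^ 2 / (16 * b ^ 2 * v)))

lemma acErr_nonneg {H δ : ℝ} (hH : 0 ≤ H) (hδ : 0 ≤ δ) : 0 ≤ acErr m p b v lo H δ := by
  unfold acErr; positivity

lemma meanCdf_add_le (hlaw : ∀ l, BlockLaw (P l) b v lo τ) (hm : 0 < m) (hb : 0 < b) (hv : 0 < v)
    (hlo : 0 < lo) (hlv : lo ≤ v) {H δ : ℝ} (hH : 0 ≤ H) (hδ : 0 < δ) (t : ℝ) :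
    meanCdf P (t + δ) ≤ meanCdf P t + acErr m p b v lo H δ := by
  set bad : Set (Fin m → Fin p → ℝ) := {x | ∃ j, ∑ l, x l j ^ 2 ≤ m * lo / 2} with hbad
  have hbm : MeasurableSet bad := by
    have : bad = ⋃ j : Fin p, {x | ∑ l, x l j ^ 2 ≤ m * lo / 2} := by
      ext x; simp [hbad]
    rw [this]
    refine MeasurableSet.iUnion fun j => measurableSet_le ?_ measurable_const
    fun_prop
  have hm' : (0 : ℝ) < m := by exact_mod_cast hm
  have hσ : 0 < √(m * lo / 2) := Real.sqrt_pos.2 (by positivity)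
  have hI : Integrable (bad.indicator fun _ => (1 : ℝ)) (Measure.pi P) :=
    (integrable_const _).indicator hbm
  set A : ℝ := 5 * (δ / √(m * lo / 2)) * (H + 1) + p * Real.exp (-(H ^ 2 / 2)) with hA
  have hA0 : 0 ≤ A := by positivity
  have hpt : ∀ x : Fin m → Fin p → ℝ, condCdf (t + δ) x ≤
      condCdf t x + A + bad.indicator (fun _ => (1 : ℝ)) x := by
    intro x
    by_cases hx : x ∈ bad
    · rw [Set.indicator_of_mem hx]
      linarith [condCdf_le_one (t + δ) x, condCdf_nonneg t x]
    · rw [Set.indicator_of_notMem hx]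
      have h := anti_conc x (σ := √(m * lo / 2)) hσ (fun j => by
        rw [Real.sq_sqrt (by positivity)]
        by_contra hc
        exact hx ⟨j, (not_le.1 hc).le⟩) hδ hH t
      unfold condCdf
      linarith
  calc meanCdf P (t + δ) ≤ ∫ x, condCdf t x + A + bad.indicator (fun _ => (1 : ℝ)) x ∂(Measure.pi P) :=
        integral_mono (integrable_condCdf _ _)
          (((integrable_condCdf _ _).add (integrable_const _)).add hI) hpt
    _ = meanCdf P t + A + (Measure.pi P).real bad := by
        have h1 : Integrable (fun x => condCdf t x + A) (Measure.pi P) :=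
          (integrable_condCdf _ _).add (integrable_const _)
        rw [integral_add h1 hI, integral_add (integrable_condCdf _ _) (integrable_const _),
          integral_indicator_const _ hbm]
        simp [meanCdf]
    _ ≤ _ := by
        have := sq_lower_tail hlaw hb hv hlo.le hlv
        unfold acErr
        linarith

/-- The conditional distribution function concentrates around its mean. -/
lemma condCdf_concentration [NeZero p] (Hy : LindHyp P b v lo τ β L) (hm : 0 < m) (hb : 0 < b)
    (hlo : 0 < lo) (hlv : lo ≤ v) {H η : ℝ} (hH : 0 ≤ H) (hη : 0 < η) (t : ℝ) :
    (Measure.pi P).real {x | η ≤ |condCdf t x - meanCdf P t|} ≤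
      (2 * acErr m p b v lo H (2 * (L / β)) + lindErr m L β b v τ) / η ^ 2 := by
  have hδ : 0 < 2 * (L / β) := by have := Hy.hL; have := Hy.hβ; positivity
  have hac := meanCdf_add_le Hy.law hm hb (hlo.trans_le hlv) hlo hlv hH hδ t
  have hsq := integral_sq_condCdf_le Hy t
  have hi1 := integrable_condCdf (Measure.pi P) t
  have hi2 : Integrable (fun x => condCdf t x ^ 2) (Measure.pi P) :=
    integrable_of_bdd ((measurable_condCdf t).pow_const 2) (C := 1) (ae_of_all _ fun x => by
      rw [abs_of_nonneg (sq_nonneg _)]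
      exact pow_le_one₀ (condCdf_nonneg _ _) (condCdf_le_one _ _))
  have hvar : ∫ x, (condCdf t x - meanCdf P t) ^ 2 ∂(Measure.pi P) =
      ∫ x, condCdf t x ^ 2 ∂(Measure.pi P) - meanCdf P t ^ 2 := by
    have e : ∀ x : Fin m → Fin p → ℝ, (condCdf t x - meanCdf P t) ^ 2 =
        condCdf t x ^ 2 - 2 * meanCdf P t * condCdf t x + meanCdf P t ^ 2 := fun x => by ring
    have h1 : Integrable (fun x => condCdf t x ^ 2 - 2 * meanCdf P t * condCdf t x) (Measure.pi P) :=
      hi2.sub (hi1.const_mul _)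
    simp only [e]
    rw [integral_add h1 (integrable_const _), integral_sub hi2 (hi1.const_mul _), integral_const_mul]
    simp only [integral_const, probReal_univ, one_smul]
    show _ - 2 * meanCdf P t * meanCdf P t + _ = _
    ring
  have hi3 : Integrable (fun x => (condCdf t x - meanCdf P t) ^ 2) (Measure.pi P) :=
    integrable_of_bdd (((measurable_condCdf t).sub_const _).pow_const 2) (C := 1)
      (ae_of_all _ fun x => by
        rw [abs_of_nonneg (sq_nonneg _), ← sq_abs]
        refine pow_le_one₀ (abs_nonneg _) (abs_le.2 ⟨?_, ?_⟩)
        · linarith [condCdf_nonneg t x, meanCdf_le_one P t]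
        · linarith [condCdf_le_one t x, meanCdf_nonneg P t])
  have hmk := mul_meas_ge_le_integral_of_nonneg (μ := Measure.pi P)
    (ae_of_all _ fun x => sq_nonneg (condCdf t x - meanCdf P t)) hi3 (η ^ 2)
  have hset : {x : Fin m → Fin p → ℝ | η ≤ |condCdf t x - meanCdf P t|} =
      {x | η ^ 2 ≤ (condCdf t x - meanCdf P t) ^ 2} := by
    ext x
    show η ≤ _ ↔ η ^ 2 ≤ _
    rw [← sq_abs (condCdf t x - meanCdf P t)]
    exact (pow_le_pow_iff_left₀ hη.le (abs_nonneg _) two_ne_zero).symm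
  rw [hset, le_div_iff₀ (by positivity), mul_comm]
  refine hmk.trans ?_
  rw [hvar]
  have g0 := meanCdf_nonneg P t
  have g1 := meanCdf_le_one P (t + 2 * (L / β))
  have g2 := meanCdf_le_one P t
  have g3 := meanCdf_mono P (show t ≤ t + 2 * (L / β) by linarith)
  nlinarith

end

end

section

/-! ### Mixing coefficients and total variation -/

section Mixing

lemma sum_real_inter_fiber {Ω K : Type} [MeasurableSpace Ω] [Fintype K] (μ : Measure Ω)
    [IsFiniteMeasure μ] {φ : Ω → K} (hφ : ∀ k, MeasurableSet (φ ⁻¹' {k})) {s : Set Ω} :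
    ∑ k, μ.real (φ ⁻¹' {k} ∩ s) = μ.real s := by
  have h := measureReal_restrict_apply_univ (μ := μ) s
  have hU : (Set.univ : Set Ω) = ⋃ k ∈ (Finset.univ : Finset K), φ ⁻¹' {k} := by
    ext x; simp
  rw [← h, hU, measureReal_biUnion_finset]
  · refine Finset.sum_congr rfl fun k _ => ?_
    rw [measureReal_restrict_apply (hφ k)]
  · intro a _ b _ hab
    exact Disjoint.preimage _ (by simpa using hab)
  · intro k _; exact hφ k

lemma betaDep_bdd {Ω : Type} {m₁ m₂ : MeasurableSpace Ω} [mΩ : MeasurableSpace Ω]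
    (Pm : Measure Ω) [IsProbabilityMeasure Pm] (h₁ : m₁ ≤ mΩ) (h₂ : m₂ ≤ mΩ) :
    BddAbove {x : ℝ |
    ∃ (I J : ℕ) (A : Fin I → Set Ω) (B : Fin J → Set Ω),
      (∀ i, MeasurableSet[m₁] (A i)) ∧ Pairwise (Function.onFun Disjoint A) ∧
      (⋃ i, A i) = Set.univ ∧
      (∀ j, MeasurableSet[m₂] (B j)) ∧ Pairwise (Function.onFun Disjoint B) ∧
      (⋃ j, B j) = Set.univ ∧
      x = ∑ i, ∑ j, |(Pm (A i ∩ B j)).toReal - (Pm (A i)).toReal * (Pm (B j)).toReal|} := by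
  refine ⟨2, ?_⟩
  rintro x ⟨I, J, A, B, hA, hAd, hAu, hB, hBd, hBu, rfl⟩
  have sum1 : ∀ {K : ℕ} (F : Fin K → Set Ω), (∀ i, MeasurableSet (F i)) →
      Pairwise (Function.onFun Disjoint F) → (⋃ i, F i) = Set.univ → ∀ s : Set Ω,
      ∑ i, Pm.real (s ∩ F i) = Pm.real s := by
    intro K F hF hd hu s
    have h := measureReal_restrict_apply_univ (μ := Pm) s
    have hU : (Set.univ : Set Ω) = ⋃ k ∈ (Finset.univ : Finset (Fin K)), F k := by
      rw [← hu]; ext x; simp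
    rw [← h, hU, measureReal_biUnion_finset (fun a _ b _ hab => hd hab) (fun k _ => hF k)]
    exact Finset.sum_congr rfl fun k _ => by
      rw [measureReal_restrict_apply (hF k), Set.inter_comm]
  have hA' : ∀ i, MeasurableSet (A i) := fun i => h₁ _ (hA i)
  have hB' : ∀ i, MeasurableSet (B i) := fun i => h₂ _ (hB i)
  have sA : ∑ i, Pm.real (A i) = 1 := by simpa using sum1 A hA' hAd hAu Set.univ
  have sB : ∑ i, Pm.real (B i) = 1 := by simpa using sum1 B hB' hBd hBu Set.univ
  calc _ ≤ ∑ i, ∑ j, (Pm.real (A i ∩ B j) + Pm.real (A i) * Pm.real (B j)) := by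
        refine Finset.sum_le_sum fun i _ => Finset.sum_le_sum fun j _ => ?_
        refine (abs_sub _ _).trans (le_of_eq ?_)
        rw [abs_of_nonneg ENNReal.toReal_nonneg,
          abs_of_nonneg (mul_nonneg ENNReal.toReal_nonneg ENNReal.toReal_nonneg)]
        rfl
    _ = 2 := by
        simp only [Finset.sum_add_distrib, ← Finset.mul_sum, sB, mul_one, sA]
        simp only [sum1 B hB' hBd hBu, sA]
        norm_num

lemma betaDep_nonneg {Ω : Type} (m₁ m₂ : MeasurableSpace Ω) [MeasurableSpace Ω] (Pm : Measure Ω) :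
    0 ≤ betaDep Pm m₁ m₂ := by
  unfold betaDep
  refine mul_nonneg (by norm_num) (Real.sSup_nonneg ?_)
  rintro x ⟨I, J, A, B, -, -, -, -, -, -, rfl⟩
  positivity

/-- Finite unions of measurable rectangles, presented through finite-valued measurable maps on
the two factors. -/
def rectSimple (E F : Type) [MeasurableSpace E] [MeasurableSpace F] : Set (Set (E × F)) :=
  {s | ∃ (K K' : Type) (_ : Fintype K) (_ : Fintype K') (φ : E → K) (ψ : F → K')
    (T : Set (K × K')), (∀ k, MeasurableSet (φ ⁻¹' {k})) ∧ (∀ k, MeasurableSet (ψ ⁻¹' {k})) ∧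
    s = {z | (φ z.1, ψ z.2) ∈ T}}

variable {E F : Type} [MeasurableSpace E] [MeasurableSpace F]

lemma isSetRing_rectSimple : IsSetRing (rectSimple E F) := by
  have hpair : ∀ {X K₁ K₂ : Type} [MeasurableSpace X] {f : X → K₁} {g : X → K₂},
      (∀ k, MeasurableSet (f ⁻¹' {k})) → (∀ k, MeasurableSet (g ⁻¹' {k})) →
      ∀ k : K₁ × K₂, MeasurableSet ((fun x => (f x, g x)) ⁻¹' {k}) := by
    intro X K₁ K₂ _ f g hf hg k
    have : (fun x => (f x, g x)) ⁻¹' {k} = f ⁻¹' {k.1} ∩ g ⁻¹' {k.2} := by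
      ext x; simp [Prod.ext_iff]
    rw [this]; exact (hf _).inter (hg _)
  refine ⟨?_, ?_, ?_⟩
  · exact ⟨Unit, Unit, inferInstance, inferInstance, fun _ => (), fun _ => (), ∅,
      fun k => by simp, fun k => by simp, by simp⟩
  · rintro s t ⟨K, K', i, i', φ, ψ, T, h, h', rfl⟩ ⟨M, M', j, j', χ, ξ, S, g, g', rfl⟩
    exact ⟨K × M, K' × M', inferInstance, inferInstance, fun x => (φ x, χ x), fun x => (ψ x, ξ x),
      {z | (z.1.1, z.2.1) ∈ T ∨ (z.1.2, z.2.2) ∈ S}, hpair h g, hpair h' g', rfl⟩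
  · rintro s t ⟨K, K', i, i', φ, ψ, T, h, h', rfl⟩ ⟨M, M', j, j', χ, ξ, S, g, g', rfl⟩
    exact ⟨K × M, K' × M', inferInstance, inferInstance, fun x => (φ x, χ x), fun x => (ψ x, ξ x),
      {z | (z.1.1, z.2.1) ∈ T ∧ (z.1.2, z.2.2) ∉ S}, hpair h g, hpair h' g', rfl⟩

lemma measurableSet_rectSimple {s : Set (E × F)} (hs : s ∈ rectSimple E F) : MeasurableSet s := by
  obtain ⟨K, K', i, i', φ, ψ, T, h, h', rfl⟩ := hs
  have : {z : E × F | (φ z.1, ψ z.2) ∈ T} = ⋃ k ∈ T, (φ ⁻¹' {k.1}) ×ˢ (ψ ⁻¹' {k.2}) := by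
    ext z
    simp only [Set.mem_ofPred_eq, Set.mem_iUnion, Set.mem_prod, Set.mem_preimage, Set.mem_singleton_iff]
    constructor
    · intro hz; exact ⟨_, hz, rfl, rfl⟩
    · rintro ⟨k, hk, h1, h2⟩
      rw [h1, h2]; exact hk
  rw [this]
  exact MeasurableSet.biUnion (Set.to_countable _) fun k _ => (h _).prod (h' _)

lemma generateFrom_rectSimple :
    (Prod.instMeasurableSpace : MeasurableSpace (E × F)) =
      MeasurableSpace.generateFrom (rectSimple E F) := by
  apply le_antisymm
  · rw [← generateFrom_prod]
    refine MeasurableSpace.generateFrom_mono ?_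
    rintro _ ⟨s, hs, t, ht, rfl⟩
    refine ⟨Prop, Prop, inferInstance, inferInstance, fun x => x ∈ s, fun x => x ∈ t,
      {z | z.1 ∧ z.2}, fun k => ?_, fun k => ?_, rfl⟩
    · exact (measurable_mem.2 hs) (measurableSet_singleton k)
    · exact (measurable_mem.2 ht) (measurableSet_singleton k)
  · exact MeasurableSpace.generateFrom_le fun s hs => measurableSet_rectSimple hs

variable {Ω : Type} {m₁ m₂ : MeasurableSpace Ω} [mΩ : MeasurableSpace Ω] {Pm : Measure Ω}
  [IsProbabilityMeasure Pm]

/-- The joint law of two random elements differs from the product of the marginals by at most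
`2β` in total variation. -/
lemma joint_sub_prod_le (h₁ : m₁ ≤ mΩ) (h₂ : m₂ ≤ mΩ) {U : Ω → E} {V : Ω → F}
    (hU : Measurable[m₁] U) (hV : Measurable[m₂] V) {A : Set (E × F)} (hA : MeasurableSet A) :
    |(Pm.map fun ω => (U ω, V ω)).real A - ((Pm.map U).prod (Pm.map V)).real A| ≤
      2 * betaDep Pm m₁ m₂ := by
  have hU' : Measurable U := hU.mono h₁ le_rfl
  have hV' : Measurable V := hV.mono h₂ le_rfl
  have hUV : Measurable (fun ω => (U ω, V ω)) := hU'.prodMk hV'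
  have pU : IsProbabilityMeasure (Pm.map U) := Measure.isProbabilityMeasure_map hU'.aemeasurable
  have pV : IsProbabilityMeasure (Pm.map V) := Measure.isProbabilityMeasure_map hV'.aemeasurable
  have pUV : IsProbabilityMeasure (Pm.map fun ω => (U ω, V ω)) :=
    Measure.isProbabilityMeasure_map hUV.aemeasurable
  set μ := Pm.map fun ω => (U ω, V ω)
  set ρ := (Pm.map U).prod (Pm.map V)
  have step1 : ∀ s ∈ rectSimple E F, |μ.real s - ρ.real s| ≤ 2 * betaDep Pm m₁ m₂ := by
    intro s hs
    have hsm := measurableSet_rectSimple hs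
    obtain ⟨K, K', i, i', φ, ψ, T, h, h', rfl⟩ := hs
    have hR : ∀ (κ : Measure (E × F)) [IsProbabilityMeasure κ],
        κ.real {z | (φ z.1, ψ z.2) ∈ T} =
          ∑ k, ∑ k', if (k, k') ∈ T then κ.real ((φ ⁻¹' {k}) ×ˢ (ψ ⁻¹' {k'})) else 0 := by
      intro κ _
      rw [← sum_real_inter_fiber κ (φ := fun z : E × F => (φ z.1, ψ z.2)) (fun k => by
        have : (fun z : E × F => (φ z.1, ψ z.2)) ⁻¹' {k} = (φ ⁻¹' {k.1}) ×ˢ (ψ ⁻¹' {k.2}) := by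
          ext z; simp [Prod.ext_iff]
        rw [this]; exact (h _).prod (h' _)), Fintype.sum_prod_type]
      refine Finset.sum_congr rfl fun k _ => Finset.sum_congr rfl fun k' _ => ?_
      split_ifs with hk
      · congr 1
        ext z
        simp only [Set.mem_inter_iff, Set.mem_preimage, Set.mem_singleton_iff, Set.mem_ofPred_eq,
          Set.mem_prod, Prod.mk.injEq]
        constructor
        · rintro ⟨hz, -⟩; exact hz
        · rintro ⟨h1, h2⟩; exact ⟨⟨h1, h2⟩, by rw [h1, h2]; exact hk⟩
      · have : (fun z : E × F => (φ z.1, ψ z.2)) ⁻¹' {(k, k')} ∩ {z | (φ z.1, ψ z.2) ∈ T} = ∅ := by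
          ext z
          simp only [Set.mem_inter_iff, Set.mem_preimage, Set.mem_singleton_iff, Set.mem_ofPred_eq,
            Set.mem_empty_iff_false, iff_false, not_and]
          intro h1 h2; rw [h1] at h2; exact hk h2
        rw [this]; simp
    have hμ : ∀ k k', μ.real ((φ ⁻¹' {k}) ×ˢ (ψ ⁻¹' {k'})) =
        Pm.real (U ⁻¹' (φ ⁻¹' {k}) ∩ V ⁻¹' (ψ ⁻¹' {k'})) := fun k k' =>
      map_measureReal_apply hUV ((h _).prod (h' _))
    have hρ : ∀ k k', ρ.real ((φ ⁻¹' {k}) ×ˢ (ψ ⁻¹' {k'})) =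
        Pm.real (U ⁻¹' (φ ⁻¹' {k})) * Pm.real (V ⁻¹' (ψ ⁻¹' {k'})) := fun k k' => by
      rw [measureReal_prod_prod, map_measureReal_apply hU' (h _), map_measureReal_apply hV' (h' _)]
    have hsum : ∑ k, ∑ k', |Pm.real (U ⁻¹' (φ ⁻¹' {k}) ∩ V ⁻¹' (ψ ⁻¹' {k'})) -
        Pm.real (U ⁻¹' (φ ⁻¹' {k})) * Pm.real (V ⁻¹' (ψ ⁻¹' {k'}))| ≤ 2 * betaDep Pm m₁ m₂ := by
      unfold betaDep
      rw [← mul_assoc, show (2 : ℝ) * (1 / 2) = 1 by norm_num, one_mul]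
      refine le_csSup (betaDep_bdd Pm h₁ h₂) ?_
      let eK := Fintype.equivFin K
      let eK' := Fintype.equivFin K'
      refine ⟨Fintype.card K, Fintype.card K', fun k => U ⁻¹' (φ ⁻¹' {eK.symm k}),
        fun k => V ⁻¹' (ψ ⁻¹' {eK'.symm k}), fun k => hU (h _), fun a b hab => ?_, ?_,
        fun k => hV (h' _), fun a b hab => ?_, ?_, ?_⟩
      · exact Disjoint.preimage _ (Disjoint.preimage _ (by simpa using hab))
      · ext x; simp only [Set.mem_iUnion, Set.mem_preimage, Set.mem_singleton_iff, Set.mem_univ, iff_true]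
        exact ⟨eK (φ (U x)), by simp⟩
      · exact Disjoint.preimage _ (Disjoint.preimage _ (by simpa using hab))
      · ext x; simp only [Set.mem_iUnion, Set.mem_preimage, Set.mem_singleton_iff, Set.mem_univ, iff_true]
        exact ⟨eK' (ψ (V x)), by simp⟩
      · refine Fintype.sum_equiv eK _ _ fun k => Fintype.sum_equiv eK' _ _ fun k' => ?_
        simp [measureReal_def]
    rw [hR μ, hR ρ, ← Finset.sum_sub_distrib]
    refine (Finset.abs_sum_le_sum_abs _ _).trans (le_trans (Finset.sum_le_sum fun k _ => ?_) hsum)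
    rw [← Finset.sum_sub_distrib]
    refine (Finset.abs_sum_le_sum_abs _ _).trans (Finset.sum_le_sum fun k' _ => ?_)
    split_ifs
    · rw [hμ, hρ]
    · simp
  refine le_of_forall_pos_le_add fun ε hε => ?_
  obtain ⟨s, hs, hsε⟩ := exists_measure_symmDiff_lt_of_generateFrom_isSetRing (μ := μ + ρ)
    isSetRing_rectSimple ⟨{Set.univ}, Set.countable_singleton _, by
      rintro _ rfl
      exact ⟨Unit, Unit, inferInstance, inferInstance, fun _ => (), fun _ => (), Set.univ,
        fun k => by simp, fun k => by simp, by simp⟩, by simp⟩ generateFrom_rectSimple hA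
      (ENNReal.ofReal_pos.2 hε)
  have hsm := measurableSet_rectSimple hs
  have hd : ∀ (κ : Measure (E × F)) [IsProbabilityMeasure κ],
      |κ.real A - κ.real s| ≤ κ.real (symmDiff s A) := by
    intro κ _
    rw [abs_le]
    constructor
    · have : κ.real s ≤ κ.real (symmDiff s A ∪ A) := measureReal_mono (fun x hx => by
        by_cases hxA : x ∈ A
        · exact Or.inr hxA
        · exact Or.inl (Or.inl ⟨hx, hxA⟩))
      linarith [measureReal_union_le (μ := κ) (symmDiff s A) A]
    · have : κ.real A ≤ κ.real (symmDiff s A ∪ s) := measureReal_mono (fun x hx => by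
        by_cases hxA : x ∈ s
        · exact Or.inr hxA
        · exact Or.inl (Or.inr ⟨hx, hxA⟩))
      linarith [measureReal_union_le (μ := κ) (symmDiff s A) s]
  have hsum : μ.real (symmDiff s A) + ρ.real (symmDiff s A) ≤ ε := by
    have h := ENNReal.toReal_mono ENNReal.ofReal_ne_top hsε.le
    rw [Measure.add_apply, ENNReal.toReal_add (measure_ne_top _ _) (measure_ne_top _ _),
      ENNReal.toReal_ofReal hε.le] at h
    exact h
  have a1 := abs_le.1 (hd μ)
  have a2 := abs_le.1 (hd ρ)
  have a3 := abs_le.1 (step1 s hs)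
  rw [abs_le]
  constructor <;> linarith [a1.1, a1.2, a2.1, a2.2, a3.1, a3.2]

end Mixing

end

section

/-! ### Covariance inequality and coupling of separated blocks -/

lemma abs_integral_sub_le_of_tv {E : Type} [MeasurableSpace E] {μ ρ : Measure E}
    [IsProbabilityMeasure μ] [IsProbabilityMeasure ρ] {ε : ℝ}
    (h : ∀ A, MeasurableSet A → |μ.real A - ρ.real A| ≤ ε) {f : E → ℝ} (hf : Measurable f) {M : ℝ}
    (hM : 0 ≤ M) (hfM : ∀ x, |f x| ≤ M) : |∫ x, f x ∂μ - ∫ x, f x ∂ρ| ≤ 2 * M * ε := by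
  have hi : ∀ (κ : Measure E) [IsProbabilityMeasure κ], Integrable f κ := fun κ _ =>
    integrable_of_bdd hf (ae_of_all _ hfM)
  have layer : ∀ (κ : Measure E) [IsProbabilityMeasure κ],
      ∫ x, f x ∂κ + M = ∫ t in Set.Ioc 0 (2 * M), κ.real {a | t ≤ f a + M} := by
    intro κ _
    have h1 : Integrable (fun x => f x + M) κ := (hi κ).add (integrable_const _)
    rw [← h1.integral_eq_integral_Ioc_meas_le (ae_of_all _ fun x => by
        have := (abs_le.1 (hfM x)).1; show 0 ≤ f x + M; linarith)
      (ae_of_all _ fun x => by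
        have := (abs_le.1 (hfM x)).2; show f x + M ≤ 2 * M; linarith),
      integral_add (hi κ) (integrable_const _)]
    simp
  have hii : ∀ (κ : Measure E) [IsProbabilityMeasure κ],
      Integrable (fun t : ℝ => κ.real {a | t ≤ f a + M}) (volume.restrict (Set.Ioc 0 (2 * M))) := by
    intro κ _
    refine integrable_of_bdd (C := 1) (Antitone.measurable fun s t hst => ?_)
      (ae_of_all _ fun t => ?_)
    · exact measureReal_mono fun a ha => hst.trans ha
    · rw [abs_of_nonneg measureReal_nonneg]; exact measureReal_le_one
  have e : ∫ x, f x ∂μ - ∫ x, f x ∂ρ = ∫ t in Set.Ioc 0 (2 * M),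
      (μ.real {a | t ≤ f a + M} - ρ.real {a | t ≤ f a + M}) := by
    rw [integral_sub (hii μ) (hii ρ), ← layer μ, ← layer ρ]; ring
  rw [e]
  have hb := norm_setIntegral_le_of_norm_le_const (μ := volume) (s := Set.Ioc (0 : ℝ) (2 * M)) (C := ε)
    (f := fun t => μ.real {a | t ≤ f a + M} - ρ.real {a | t ≤ f a + M}) measure_Ioc_lt_top
    (fun t _ => h _ (measurableSet_le measurable_const (hf.add_const _)))
  rw [Real.norm_eq_abs] at hb
  refine hb.trans (le_of_eq ?_)
  rw [Real.volume_real_Ioc_of_le (by linarith)]; ring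

lemma cov_le_betaDep {Ω : Type} {m₁ m₂ : MeasurableSpace Ω} [mΩ : MeasurableSpace Ω]
    {Pm : Measure Ω} [IsProbabilityMeasure Pm] (h₁ : m₁ ≤ mΩ) (h₂ : m₂ ≤ mΩ) {U V : Ω → ℝ}
    (hU : Measurable[m₁] U) (hV : Measurable[m₂] V) {M N : ℝ} (hM : 0 ≤ M) (hN : 0 ≤ N)
    (hUM : ∀ᵐ ω ∂Pm, |U ω| ≤ M) (hVN : ∀ᵐ ω ∂Pm, |V ω| ≤ N) :
    |∫ ω, U ω * V ω ∂Pm - (∫ ω, U ω ∂Pm) * ∫ ω, V ω ∂Pm| ≤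
      4 * betaDep Pm m₁ m₂ * (M * N) := by
  have hU' : Measurable U := hU.mono h₁ le_rfl
  have hV' : Measurable V := hV.mono h₂ le_rfl
  have hUV : Measurable (fun ω => (U ω, V ω)) := hU'.prodMk hV'
  have pU : IsProbabilityMeasure (Pm.map U) := Measure.isProbabilityMeasure_map hU'.aemeasurable
  have pV : IsProbabilityMeasure (Pm.map V) := Measure.isProbabilityMeasure_map hV'.aemeasurable
  have pUV : IsProbabilityMeasure (Pm.map fun ω => (U ω, V ω)) :=
    Measure.isProbabilityMeasure_map hUV.aemeasurable
  let c : ℝ → ℝ → ℝ := fun K x => max (-K) (min K x)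
  have hc : ∀ K, Measurable (c K) := fun K => by unfold c; fun_prop
  have hcb : ∀ K, 0 ≤ K → ∀ x, |c K x| ≤ K := fun K hK x =>
    abs_le.2 ⟨le_max_left _ _, max_le (by linarith) (min_le_left _ _)⟩
  have hce : ∀ K x, |x| ≤ K → c K x = x := fun K x hx => by
    have := abs_le.1 hx
    simp only [c]
    rw [min_eq_right this.2, max_eq_right this.1]
  have key := abs_integral_sub_le_of_tv (μ := Pm.map fun ω => (U ω, V ω))
    (ρ := (Pm.map U).prod (Pm.map V)) (fun A hA => joint_sub_prod_le h₁ h₂ hU hV hA)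
    (f := fun z => c M z.1 * c N z.2)
    (((hc M).comp measurable_fst).mul ((hc N).comp measurable_snd)) (M := M * N)
    (mul_nonneg hM hN) (fun z => by
      rw [abs_mul]; exact mul_le_mul (hcb M hM _) (hcb N hN _) (abs_nonneg _) hM)
  have hmeas : Measurable (fun z : ℝ × ℝ => c M z.1 * c N z.2) :=
    ((hc M).comp measurable_fst).mul ((hc N).comp measurable_snd)
  rw [integral_prod_mul (c M) (c N), integral_map hUV.aemeasurable hmeas.aestronglyMeasurable,
    integral_map hU'.aemeasurable (hc M).aestronglyMeasurable,
    integral_map hV'.aemeasurable (hc N).aestronglyMeasurable] at key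
  have e1 : ∫ ω, c M (U ω) * c N (V ω) ∂Pm = ∫ ω, U ω * V ω ∂Pm := integral_congr_ae (by
    filter_upwards [hUM, hVN] with ω h1 h2; rw [hce M _ h1, hce N _ h2])
  have e2 : ∫ ω, c M (U ω) ∂Pm = ∫ ω, U ω ∂Pm := integral_congr_ae (by
    filter_upwards [hUM] with ω h1; rw [hce M _ h1])
  have e3 : ∫ ω, c N (V ω) ∂Pm = ∫ ω, V ω ∂Pm := integral_congr_ae (by
    filter_upwards [hVN] with ω h1; rw [hce N _ h1])
  rw [e1, e2, e3] at key
  linarith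

section

variable {n p : ℕ}

lemma sigmaUpTo_le (l : ℕ) : sigmaUpTo n p l ≤ (inferInstance : MeasurableSpace (Fin n → Fin p → ℝ)) :=
  iSup_le fun i => iSup_le fun _ => (measurable_pi_apply i).comap_le

lemma sigmaFrom_le (l : ℕ) : sigmaFrom n p l ≤ (inferInstance : MeasurableSpace (Fin n → Fin p → ℝ)) :=
  iSup_le fun i => iSup_le fun _ => (measurable_pi_apply i).comap_le

lemma sigmaUpTo_mono {a b : ℕ} (h : a ≤ b) : sigmaUpTo n p a ≤ sigmaUpTo n p b :=
  iSup_le fun i => iSup_le fun hi => le_iSup_of_le i (le_iSup_of_le (hi.trans_le h) le_rfl)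

lemma sigmaFrom_anti {a b : ℕ} (h : a ≤ b) : sigmaFrom n p b ≤ sigmaFrom n p a :=
  iSup_le fun i => iSup_le fun hi => le_iSup_of_le i (le_iSup_of_le (h.trans hi) le_rfl)

lemma measurable_sigmaUpTo {l : ℕ} {i : Fin n} (h : (i : ℕ) < l) :
    Measurable[sigmaUpTo n p l] (fun ω : Fin n → Fin p → ℝ => ω i) :=
  measurable_iff_comap_le.2 (le_iSup_of_le i (le_iSup_of_le h le_rfl))

lemma measurable_sigmaFrom {l : ℕ} {i : Fin n} (h : l ≤ (i : ℕ)) :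
    Measurable[sigmaFrom n p l] (fun ω : Fin n → Fin p → ℝ => ω i) :=
  measurable_iff_comap_le.2 (le_iSup_of_le i (le_iSup_of_le h le_rfl))

variable {Pm : Measure (Fin n → Fin p → ℝ)} {r : ℕ}

lemma bmix_nonneg : 0 ≤ bmix n p Pm r :=
  Real.iSup_nonneg fun _ => betaDep_nonneg _ _ _

lemma betaDep_le_bmix {c : ℕ} (hc : c + r < n) :
    betaDep Pm (sigmaUpTo n p (c + 1)) (sigmaFrom n p (c + r)) ≤ bmix n p Pm r :=
  le_ciSup (f := fun l : Fin (n - r) =>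
    betaDep Pm (sigmaUpTo n p ((l : ℕ) + 1)) (sigmaFrom n p ((l : ℕ) + r)))
    (Set.finite_range _).bddAbove ⟨c, by omega⟩

variable [IsProbabilityMeasure Pm]

/-- Covariance inequality for variables depending on coordinates that are at least `r` apart. -/
lemma cov_le_bmix {c d : ℕ} (hcd : c + r ≤ d) (hd : d < n) {U V : (Fin n → Fin p → ℝ) → ℝ}
    (hU : Measurable[sigmaUpTo n p (c + 1)] U) (hV : Measurable[sigmaFrom n p d] V) {M N : ℝ}
    (hM : 0 ≤ M) (hN : 0 ≤ N)
    (hUM : ∀ᵐ ω ∂Pm, |U ω| ≤ M) (hVN : ∀ᵐ ω ∂Pm, |V ω| ≤ N)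
    (h0 : ∫ ω, U ω ∂Pm = 0 ∨ ∫ ω, V ω ∂Pm = 0) :
    |∫ ω, U ω * V ω ∂Pm| ≤ 4 * bmix n p Pm r * (M * N) := by
  have h := cov_le_betaDep (Pm := Pm) (sigmaUpTo_le (c + 1)) (sigmaFrom_le (c + r)) hU
    (hV.mono (sigmaFrom_anti hcd) le_rfl) hM hN hUM hVN
  have hz : (∫ ω, U ω ∂Pm) * ∫ ω, V ω ∂Pm = 0 := by rcases h0 with h | h <;> simp [h]
  rw [hz, sub_zero] at h
  refine h.trans ?_
  have := betaDep_le_bmix (Pm := Pm) (c := c) (r := r) (by omega)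
  gcongr

/-- Coupling with independent blocks: random elements of coordinate windows `[f l, f l + w)` that
are separated by at least `r` have joint law within `2 m b_r` of the product of the marginals. -/
lemma block_coupling {E : Type} [MeasurableSpace E] {w : ℕ} : ∀ (m : ℕ) (f : Fin m → ℕ)
    (U : Fin m → (Fin n → Fin p → ℝ) → E), (∀ l, f l < n) →
    (∀ k l : Fin m, k < l → f k + w + r ≤ f l) →
    (∀ l, Measurable[sigmaUpTo n p (f l + w)] (U l)) → (∀ l, Measurable[sigmaFrom n p (f l)] (U l)) →
    ∀ A : Set (Fin m → E), MeasurableSet A →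
    |Pm.real {ω | (fun l => U l ω) ∈ A} - (Measure.pi fun l => Pm.map (U l)).real A| ≤
      2 * m * bmix n p Pm r := by
  intro m
  induction m with
  | zero =>
    intro f U _ _ _ _ A _
    rcases A.eq_empty_or_nonempty with h | h
    · subst h
      simp
    · have h := Subsingleton.eq_univ_of_nonempty h
      subst h
      simp [measureReal_def, Measure.pi_univ]
  | succ m ih =>
    intro f U hfn hgap hUp hFr A hA
    have hUm : ∀ l, Measurable (U l) := fun l => (hUp l).mono (sigmaUpTo_le _) le_rfl
    have pU : ∀ l, IsProbabilityMeasure (Pm.map (U l)) := fun l =>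
      Measure.isProbabilityMeasure_map (hUm l).aemeasurable
    rcases Nat.eq_zero_or_pos m with rfl | hm
    · -- a single block: the two laws coincide
      have hmp := measurePreserving_piFinSuccAbove (fun l => Pm.map (U l)) 0
      have h1 : (Measure.pi fun l => Pm.map (U l)) = Pm.map (fun ω l => U l ω) := by
        refine Measure.pi_eq fun s hs => ?_
        have huniv : ∀ ω, (fun l => U l ω) ∈ Set.univ.pi s ↔ U 0 ω ∈ s 0 := fun ω => by
          simp only [Set.mem_univ_pi]
          exact ⟨fun h => h 0, fun h l => by
            have hl : l = 0 := Fin.ext (by omega)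
            rw [hl]; exact h⟩
        rw [Measure.map_apply (by fun_prop) (MeasurableSet.univ_pi hs)]
        simp only [Fin.prod_univ_succ, Fin.prod_univ_zero, mul_one, Measure.map_apply (hUm 0) (hs 0)]
        congr 1
        ext ω
        exact huniv ω
      rw [h1, map_measureReal_apply (by fun_prop) hA]
      have : Pm.real {ω | (fun l => U l ω) ∈ A} = Pm.real ((fun ω l => U l ω) ⁻¹' A) := rfl
      rw [this, sub_self, abs_zero]
      have := bmix_nonneg (Pm := Pm) (r := r)
      positivity
    · let T : (Fin n → Fin p → ℝ) → (Fin m → E) := fun ω l => U l.succ ω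
      have hTm : Measurable T := measurable_pi_iff.2 fun l => hUm _
      have pT : IsProbabilityMeasure (Pm.map T) := Measure.isProbabilityMeasure_map hTm.aemeasurable
      let e := MeasurableEquiv.piFinSuccAbove (fun _ : Fin (m + 1) => E) 0
      let B : Set (E × (Fin m → E)) := e.symm ⁻¹' A
      have hB : MeasurableSet B := e.symm.measurable hA
      have hmp := measurePreserving_piFinSuccAbove (fun l => Pm.map (U l)) 0
      simp only [Fin.succAbove_zero] at hmp
      have e1 : (Measure.pi fun l => Pm.map (U l)).real A =
          ((Pm.map (U 0)).prod (Measure.pi fun l => Pm.map (U (Fin.succ l)))).real B := by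
        rw [← hmp.measureReal_preimage hB.nullMeasurableSet]
        congr 1
        ext x
        show _ ↔ e.symm (e x) ∈ A
        rw [e.symm_apply_apply]
      have e2 : Pm.real {ω | (fun l => U l ω) ∈ A} = (Pm.map fun ω => (U 0 ω, T ω)).real B := by
        rw [map_measureReal_apply ((hUm 0).prodMk hTm) hB]
        congr 1
        ext ω
        show _ ↔ e.symm (U 0 ω, T ω) ∈ A
        have : (U 0 ω, T ω) = e (fun l => U l ω) := rfl
        rw [this, e.symm_apply_apply]
        rfl
      have hg : ∀ l : Fin m, f 0 + w + r ≤ f l.succ := fun l => hgap 0 l.succ (Fin.succ_pos l)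
      have hb : f 0 + w + r < n := (hg ⟨0, hm⟩).trans_lt (hfn _)
      have hTF : Measurable[sigmaFrom n p (f 0 + w + r)] T :=
        @measurable_pi_iff _ _ _ (sigmaFrom n p (f 0 + w + r)) _ _ |>.2 fun l =>
          (hFr l.succ).mono (sigmaFrom_anti (hg l)) le_rfl
      have tv := joint_sub_prod_le (Pm := Pm) (sigmaUpTo_le (f 0 + w + 1)) (sigmaFrom_le (f 0 + w + r))
        ((hUp 0).mono (sigmaUpTo_mono (Nat.le_succ _)) le_rfl) hTF hB
      have hbm := betaDep_le_bmix (Pm := Pm) (c := f 0 + w) (r := r) hb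
      have hih : |((Pm.map (U 0)).prod (Pm.map T)).real B -
          ((Pm.map (U 0)).prod (Measure.pi fun l => Pm.map (U (Fin.succ l)))).real B| ≤
          2 * m * bmix n p Pm r := by
        rw [measureReal_prod_eq _ _ hB, measureReal_prod_eq _ _ hB]
        have hInt : ∀ (g : Measure (Fin m → E)) [IsProbabilityMeasure g],
            Integrable (fun x => g.real (Prod.mk x ⁻¹' B)) (Pm.map (U 0)) := fun g _ =>
          integrable_of_bdd (measurable_measure_prodMk_left hB).ennreal_toReal (C := 1)
            (ae_of_all _ fun x => by
              rw [abs_of_nonneg measureReal_nonneg]; exact measureReal_le_one)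
        rw [← integral_sub (hInt _) (hInt _), ← Real.norm_eq_abs]
        refine (norm_integral_le_of_norm_le_const (C := 2 * m * bmix n p Pm r)
          (ae_of_all _ fun x => ?_)).trans (by simp)
        have := ih (fun l => f l.succ) (fun l => U l.succ) (fun l => hfn _)
          (fun k l hkl => hgap _ _ (Fin.succ_lt_succ_iff.2 hkl)) (fun l => hUp _) (fun l => hFr _)
          (Prod.mk x ⁻¹' B) (measurable_prodMk_left hB)
        rw [Real.norm_eq_abs, map_measureReal_apply hTm (measurable_prodMk_left hB)]
        exact this
      rw [e1, e2]
      have := abs_sub_le ((Pm.map fun ω => (U 0 ω, T ω)).real B) (((Pm.map (U 0)).prod (Pm.map T)).real B)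
        (((Pm.map (U 0)).prod (Measure.pi fun l => Pm.map (U (Fin.succ l)))).real B)
      push_cast
      linarith

end

end

section

/-! ### Third moments of block sums under mixing -/

/-- Sum over the coordinate window `[x, y)` of the entries in column `k`, centred at `μ k`. -/
def cSum (n p : ℕ) (μ : Fin p → ℝ) (x y : ℕ) (k : Fin p) (ω : Fin n → Fin p → ℝ) : ℝ :=
  ∑ i : Fin n, if x ≤ (i : ℕ) ∧ (i : ℕ) < y then ω i k - μ k else 0

/-- The hypotheses on the data, in the form in which they are used: common mean `μ`, almost sure
bound `D`, and second moments of centred sums over windows of length `r` and `q`. -/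
structure DataHyp (n p q r : ℕ) (Pm : Measure (Fin n → Fin p → ℝ)) (μ : Fin p → ℝ)
    (D c₁ C₁ : ℝ) : Prop where
  hD : 0 ≤ D
  mean : ∀ i j, ∫ ω, (ω i j - μ j) ∂Pm = 0
  bdd : ∀ᵐ ω ∂Pm, ∀ i j, |ω i j - μ j| ≤ D
  var_r : ∀ a j, a + r ≤ n → ∫ ω, cSum n p μ a (a + r) j ω ^ 2 ∂Pm ≤ C₁ * r
  var_q : ∀ a j, a + q ≤ n → ∫ ω, cSum n p μ a (a + q) j ω ^ 2 ∂Pm ≤ C₁ * q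
  var_lo : ∀ a j, a + q ≤ n → c₁ * q ≤ ∫ ω, cSum n p μ a (a + q) j ω ^ 2 ∂Pm

section
variable {n p : ℕ} {μ : Fin p → ℝ}

lemma cSum_add {x y z : ℕ} (h1 : x ≤ y) (h2 : y ≤ z) (k : Fin p) (ω : Fin n → Fin p → ℝ) :
    cSum n p μ x z k ω = cSum n p μ x y k ω + cSum n p μ y z k ω := by
  unfold cSum
  rw [← Finset.sum_add_distrib]
  refine Finset.sum_congr rfl fun i _ => ?_
  by_cases a : (i : ℕ) < y
  · have : ¬ y ≤ (i : ℕ) := by omega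
    have : (i : ℕ) < z := by omega
    simp [*]
  · have : y ≤ (i : ℕ) := by omega
    have : x ≤ (i : ℕ) := by omega
    simp [*]

lemma cSum_empty {x y : ℕ} (h : y ≤ x) (k : Fin p) (ω : Fin n → Fin p → ℝ) :
    cSum n p μ x y k ω = 0 := by
  unfold cSum
  refine Finset.sum_eq_zero fun i _ => if_neg (by omega)

lemma cSum_abs_le {x y : ℕ} {D : ℝ} {k : Fin p} {ω : Fin n → Fin p → ℝ}
    (h : ∀ i, |ω i k - μ k| ≤ D) (hD : 0 ≤ D) : |cSum n p μ x y k ω| ≤ ((y - x : ℕ) : ℝ) * D := by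
  unfold cSum
  rw [← Finset.sum_filter]
  refine (Finset.abs_sum_le_sum_abs _ _).trans ((Finset.sum_le_card_nsmul _ _ D fun i _ => h i).trans ?_)
  rw [nsmul_eq_mul]
  refine mul_le_mul_of_nonneg_right ?_ hD
  have : (Finset.univ.filter fun i : Fin n => x ≤ (i : ℕ) ∧ (i : ℕ) < y).card ≤ (Finset.Ico x y).card :=
    Finset.card_le_card_of_injOn (fun i => (i : ℕ)) (fun i hi => by simpa using hi)
      (fun i _ j _ h => Fin.ext h)
  rw [Nat.card_Ico] at this
  exact_mod_cast this

lemma measurable_cSum_upTo {x y c : ℕ} (hy : y ≤ c) (k : Fin p) :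
    Measurable[sigmaUpTo n p c] (cSum n p μ x y k) := by
  unfold cSum
  refine @Finset.measurable_fun_sum _ _ _ _ _ _ (sigmaUpTo n p c) _ _ fun i _ => ?_
  by_cases h : x ≤ (i : ℕ) ∧ (i : ℕ) < y
  · simp only [h, and_self, if_true]
    exact ((measurable_pi_apply k).comp (measurable_sigmaUpTo (h.2.trans_le hy))).sub_const _
  · simp only [h, if_false]
    exact measurable_const

lemma measurable_cSum_from {x y c : ℕ} (hx : c ≤ x) (k : Fin p) :
    Measurable[sigmaFrom n p c] (cSum n p μ x y k) := by
  unfold cSum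
  refine @Finset.measurable_fun_sum _ _ _ _ _ _ (sigmaFrom n p c) _ _ fun i _ => ?_
  by_cases h : x ≤ (i : ℕ) ∧ (i : ℕ) < y
  · simp only [h, and_self, if_true]
    exact ((measurable_pi_apply k).comp (measurable_sigmaFrom (hx.trans h.1))).sub_const _
  · simp only [h, if_false]
    exact measurable_const

lemma measurable_cSum (x y : ℕ) (k : Fin p) : Measurable (cSum n p μ x y k) :=
  (measurable_cSum_upTo le_rfl k).mono (sigmaUpTo_le _) le_rfl

variable {q r : ℕ} {Pm : Measure (Fin n → Fin p → ℝ)} [IsProbabilityMeasure Pm] {D c₁ C₁ : ℝ}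

lemma DataHyp.integrable_entry (h : DataHyp n p q r Pm μ D c₁ C₁) (i : Fin n) (j : Fin p) :
    Integrable (fun ω => ω i j - μ j) Pm :=
  integrable_of_bdd (by fun_prop) (h.bdd.mono fun ω hω => hω i j)

lemma DataHyp.cSum_mean (h : DataHyp n p q r Pm μ D c₁ C₁) (x y : ℕ) (k : Fin p) :
    ∫ ω, cSum n p μ x y k ω ∂Pm = 0 := by
  unfold cSum
  rw [integral_finsetSum]
  · refine Finset.sum_eq_zero fun i _ => ?_
    split_ifs
    · exact h.mean i k
    · simp
  · intro i _
    split_ifs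
    · exact h.integrable_entry i k
    · exact integrable_const 0

lemma DataHyp.cSum_bdd (h : DataHyp n p q r Pm μ D c₁ C₁) :
    ∀ᵐ ω ∂Pm, ∀ x y k, |cSum n p μ x y k ω| ≤ ((y - x : ℕ) : ℝ) * D :=
  h.bdd.mono fun ω hω _ _ k => cSum_abs_le (fun i => hω i k) h.hD

lemma DataHyp.cSum_sq_integrable (h : DataHyp n p q r Pm μ D c₁ C₁) (x y : ℕ) (k : Fin p) :
    Integrable (fun ω => cSum n p μ x y k ω ^ 2) Pm :=
  integrable_of_bdd (C := (((y - x : ℕ) : ℝ) * D) ^ 2) ((measurable_cSum x y k).pow_const 2)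
    (h.cSum_bdd.mono fun ω hω => by
      rw [abs_pow]; exact pow_le_pow_left₀ (abs_nonneg _) (hω x y k) 2)

/-- Windows of length `d * r` have second moment at most `d² r C₁`, by Cauchy–Schwarz. -/
lemma DataHyp.cSum_sq_le (h : DataHyp n p q r Pm μ D c₁ C₁) (hC : 0 ≤ C₁) (k : Fin p) (x : ℕ) :
    ∀ d : ℕ, x + d * r ≤ n → ∫ ω, cSum n p μ x (x + d * r) k ω ^ 2 ∂Pm ≤ d ^ 2 * (C₁ * r) := by
  intro d
  have hsplit : ∀ d, ∀ ω, cSum n p μ x (x + d * r) k ω =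
      ∑ t ∈ Finset.range d, cSum n p μ (x + t * r) (x + t * r + r) k ω := by
    intro d ω
    induction d with
    | zero => simp [cSum_empty]
    | succ d ih =>
      rw [Finset.sum_range_succ, ← ih, show x + (d + 1) * r = x + d * r + r by ring]
      exact cSum_add (Nat.le_add_right _ _) (Nat.le_add_right _ _) k ω
  intro hn
  calc ∫ ω, cSum n p μ x (x + d * r) k ω ^ 2 ∂Pm
      ≤ ∫ ω, d * ∑ t ∈ Finset.range d, cSum n p μ (x + t * r) (x + t * r + r) k ω ^ 2 ∂Pm := by
        refine integral_mono (h.cSum_sq_integrable _ _ _)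
          ((integrable_finsetSum _ fun t _ => h.cSum_sq_integrable _ _ _).const_mul _) fun ω => ?_
        show _ ^ 2 ≤ _
        rw [hsplit d ω]
        simpa using sq_sum_le_card_mul_sum_sq (s := Finset.range d)
          (f := fun t => cSum n p μ (x + t * r) (x + t * r + r) k ω)
    _ = d * ∑ t ∈ Finset.range d, ∫ ω, cSum n p μ (x + t * r) (x + t * r + r) k ω ^ 2 ∂Pm := by
        rw [integral_const_mul, integral_finsetSum _ fun t _ => h.cSum_sq_integrable _ _ _]
    _ ≤ d * ∑ t ∈ Finset.range d, C₁ * r := by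
        refine mul_le_mul_of_nonneg_left (Finset.sum_le_sum fun t ht => h.var_r _ _ ?_) (by positivity)
        have : t + 1 ≤ d := Finset.mem_range.1 ht
        have := Nat.mul_le_mul_right r this
        linarith [add_mul t 1 r]
    _ = d ^ 2 * (C₁ * r) := by rw [Finset.sum_const, Finset.card_range, nsmul_eq_mul]; ring

end

/-- An integrable function whose integral is at most `c` in absolute value. -/
def IntBd {Ω : Type} [MeasurableSpace Ω] (P : Measure Ω) (f : Ω → ℝ) (c : ℝ) : Prop :=
  Integrable f P ∧ |∫ ω, f ω ∂P| ≤ c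

lemma IntBd.add {Ω : Type} [MeasurableSpace Ω] {P : Measure Ω} {f g : Ω → ℝ} {c d : ℝ}
    (hf : IntBd P f c) (hg : IntBd P g d) : IntBd P (fun ω => f ω + g ω) (c + d) :=
  ⟨hf.1.add hg.1, by
    rw [integral_add hf.1 hg.1]; exact (abs_add_le _ _).trans (add_le_add hf.2 hg.2)⟩

lemma IntBd.congr {Ω : Type} [MeasurableSpace Ω] {P : Measure Ω} {f g : Ω → ℝ} {c : ℝ}
    (hf : IntBd P f c) (h : ∀ ω, g ω = f ω) : IntBd P g c := by
  rw [show g = f from funext h]; exact hf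

lemma IntBd.zero {Ω : Type} [MeasurableSpace Ω] {P : Measure Ω} {c : ℝ} (hc : 0 ≤ c) {g : Ω → ℝ}
    (h : ∀ ω, g ω = 0) : IntBd P g c := by
  rw [show g = fun _ => 0 from funext h]; exact ⟨integrable_zero _ _ _, by simpa using hc⟩

lemma IntBd.cov {n p r : ℕ} {Pm : Measure (Fin n → Fin p → ℝ)} [IsProbabilityMeasure Pm]
    {c d : ℕ} (hcd : c + r ≤ d) (hd : d < n) {U V : (Fin n → Fin p → ℝ) → ℝ}
    (hU : Measurable[sigmaUpTo n p (c + 1)] U) (hV : Measurable[sigmaFrom n p d] V) {M N : ℝ}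
    (hM : 0 ≤ M) (hN : 0 ≤ N)
    (hUM : ∀ᵐ ω ∂Pm, |U ω| ≤ M) (hVN : ∀ᵐ ω ∂Pm, |V ω| ≤ N)
    (h0 : ∫ ω, U ω ∂Pm = 0 ∨ ∫ ω, V ω ∂Pm = 0) :
    IntBd Pm (fun ω => U ω * V ω) (4 * bmix n p Pm r * (M * N)) := by
  refine ⟨integrable_of_bdd (C := M * N)
    ((hU.mono (sigmaUpTo_le _) le_rfl).mul (hV.mono (sigmaFrom_le _) le_rfl)) ?_,
    cov_le_bmix hcd hd hU hV hM hN hUM hVN h0⟩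
  filter_upwards [hUM, hVN] with ω h1 h2
  rw [abs_mul]
  exact mul_le_mul h1 h2 (abs_nonneg _) hM

section
variable {n p q r : ℕ} {μ : Fin p → ℝ} {Pm : Measure (Fin n → Fin p → ℝ)} [IsProbabilityMeasure Pm]
  {D c₁ C₁ : ℝ}

/-- One entry `b` of a block against the product of two block sums. The block is split around `b`
into a neighbourhood `N` and the remote parts `A`, `B`, and `N` again into a larger neighbourhood
`N'` and remote parts; products involving a remote part are handled by mixing, the rest by the
second moments of short windows. -/
lemma DataHyp.entry_third (h : DataHyp n p q r Pm μ D c₁ C₁) (hC : 0 ≤ C₁) (hr : 1 ≤ r)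
    (hq : 5 * r ≤ q) {a : ℕ} (ha : a + q < n) (b : Fin n) (hb1 : a ≤ (b : ℕ)) (hb2 : (b : ℕ) < a + q)
    (j k l : Fin p) :
    IntBd Pm (fun ω => (ω b j - μ j) * (cSum n p μ a (a + q) k ω * cSum n p μ a (a + q) l ω))
      (43 * (D * (C₁ * r)) + 8 * (4 * bmix n p Pm r * (q ^ 2 * D ^ 3))) := by
  have hD := h.hD
  obtain ⟨s, hs⟩ : ∃ s, s = max a (min ((b : ℕ) - r) (a + q - 3 * r)) := ⟨_, rfl⟩
  obtain ⟨s', hs'⟩ : ∃ s', s' = max a (min (s - r) (a + q - 5 * r)) := ⟨_, rfl⟩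
  have hbm := bmix_nonneg (Pm := Pm) (r := r)
  set E := 4 * bmix n p Pm r * (q ^ 2 * D ^ 3) with hE
  have hE0 : 0 ≤ E := by positivity
  let X : (Fin n → Fin p → ℝ) → ℝ := fun ω => ω b j - μ j
  let W := fun x y k => cSum n p μ x y k
  have hXm : Measurable X := by fun_prop
  have hXup : ∀ c, (b : ℕ) < c → Measurable[sigmaUpTo n p c] X := fun c hc =>
    ((measurable_pi_apply j).comp (measurable_sigmaUpTo hc)).sub_const _
  have hXfr : ∀ c, c ≤ (b : ℕ) → Measurable[sigmaFrom n p c] X := fun c hc =>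
    ((measurable_pi_apply j).comp (measurable_sigmaFrom hc)).sub_const _
  have hXb : ∀ᵐ ω ∂Pm, |X ω| ≤ D := h.bdd.mono fun ω hω => hω b j
  have hWb : ∀ x y k, a ≤ x → y ≤ a + q → ∀ᵐ ω ∂Pm, |W x y k ω| ≤ q * D := by
    intro x y k hx hy
    filter_upwards [h.cSum_bdd] with ω hω
    refine (hω x y k).trans (mul_le_mul_of_nonneg_right ?_ hD)
    exact_mod_cast (by omega : y - x ≤ q)
  have hX0 : ∫ ω, X ω ∂Pm = 0 := h.mean b j
  have hqD : 0 ≤ q * D := by positivity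
  have hmul : ∀ {f g : (Fin n → Fin p → ℝ) → ℝ} {M N : ℝ}, 0 ≤ M → (∀ᵐ ω ∂Pm, |f ω| ≤ M) →
      (∀ᵐ ω ∂Pm, |g ω| ≤ N) → ∀ᵐ ω ∂Pm, |f ω * g ω| ≤ M * N := by
    intro f g M N hM hf hg
    filter_upwards [hf, hg] with ω h1 h2
    rw [abs_mul]
    exact mul_le_mul h1 h2 (abs_nonneg _) hM
  -- a remote window on the left against `X * W s (s+3r)`, and on the right
  have tA' : ∀ k l, IntBd Pm (fun ω => X ω * (W s (s + 3 * r) k ω * W a s' l ω)) E := by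
    intro k l
    by_cases he : s' ≤ a
    · exact IntBd.zero hE0 fun ω => by simp only [W, cSum_empty he, mul_zero]
    · have := IntBd.cov (Pm := Pm) (r := r) (c := s') (d := s) (by omega) (by omega)
        (U := W a s' l) (V := fun ω => X ω * W s (s + 3 * r) k ω)
        (measurable_cSum_upTo (by omega) l)
        ((hXfr s (by omega)).mul (measurable_cSum_from le_rfl k)) hqD (by positivity)
        (hWb _ _ l le_rfl (by omega)) (hmul hD hXb (hWb _ _ k (by omega) (by omega)))
        (Or.inl (h.cSum_mean _ _ _))
      rw [hE, show (q : ℝ) ^ 2 * D ^ 3 = q * D * (D * (q * D)) by ring]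
      exact this.congr fun ω => by ring
  have tB' : ∀ k l, IntBd Pm (fun ω => X ω * (W s (s + 3 * r) k ω * W (s' + 5 * r) (a + q) l ω)) E := by
    intro k l
    by_cases he : a + q ≤ s' + 5 * r
    · exact IntBd.zero hE0 fun ω => by simp only [W, cSum_empty he, mul_zero]
    · have := IntBd.cov (Pm := Pm) (r := r) (c := s + 3 * r) (d := s' + 5 * r) (by omega) (by omega)
        (U := fun ω => X ω * W s (s + 3 * r) k ω) (V := W (s' + 5 * r) (a + q) l)
        ((hXup _ (by omega)).mul (measurable_cSum_upTo (by omega) k))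
        (measurable_cSum_from le_rfl l) (by positivity) hqD
        (hmul hD hXb (hWb _ _ k (by omega) (by omega))) (hWb _ _ l (by omega) (by omega))
        (Or.inr (h.cSum_mean _ _ _))
      rw [hE, show (q : ℝ) ^ 2 * D ^ 3 = (D * (q * D)) * (q * D) by ring]
      exact this.congr fun ω => by ring
  have tAA : IntBd Pm (fun ω => X ω * (W a s k ω * W a s l ω)) E := by
    by_cases he : s ≤ a
    · exact IntBd.zero hE0 fun ω => by simp only [W, cSum_empty he, mul_zero]
    · have := IntBd.cov (Pm := Pm) (r := r) (c := s) (d := b) (by omega) (by omega)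
        (U := fun ω => W a s k ω * W a s l ω) (V := X)
        ((measurable_cSum_upTo (by omega) k).mul (measurable_cSum_upTo (by omega) l))
        (hXfr _ le_rfl) (by positivity) hD
        (hmul hqD (hWb _ _ k (by omega) (by omega)) (hWb _ _ l (by omega) (by omega))) hXb
        (Or.inr hX0)
      rw [hE, show (q : ℝ) ^ 2 * D ^ 3 = ((q * D) * (q * D)) * D by ring]
      exact this.congr fun ω => by ring
  have tAB : ∀ k l, IntBd Pm (fun ω => X ω * (W a s k ω * W (s + 3 * r) (a + q) l ω)) E := by
    intro k l
    by_cases he : a + q ≤ s + 3 * r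
    · exact IntBd.zero hE0 fun ω => by simp only [W, cSum_empty he, mul_zero]
    · have := IntBd.cov (Pm := Pm) (r := r) (c := b) (d := s + 3 * r) (by omega) (by omega)
        (U := fun ω => X ω * W a s k ω) (V := W (s + 3 * r) (a + q) l)
        ((hXup _ (by omega)).mul (measurable_cSum_upTo (by omega) k))
        (measurable_cSum_from le_rfl l) (by positivity) hqD
        (hmul hD hXb (hWb _ _ k (by omega) (by omega))) (hWb _ _ l (by omega) (by omega))
        (Or.inr (h.cSum_mean _ _ _))
      rw [hE, show (q : ℝ) ^ 2 * D ^ 3 = (D * (q * D)) * (q * D) by ring]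
      exact this.congr fun ω => by ring
  have tBB : IntBd Pm (fun ω => X ω * (W (s + 3 * r) (a + q) k ω * W (s + 3 * r) (a + q) l ω)) E := by
    by_cases he : a + q ≤ s + 3 * r
    · exact IntBd.zero hE0 fun ω => by simp only [W, cSum_empty he, mul_zero]
    · have := IntBd.cov (Pm := Pm) (r := r) (c := b) (d := s + 3 * r) (by omega) (by omega)
        (U := X) (V := fun ω => W (s + 3 * r) (a + q) k ω * W (s + 3 * r) (a + q) l ω)
        (hXup _ (by omega))
        ((measurable_cSum_from le_rfl k).mul (measurable_cSum_from le_rfl l)) hD (by positivity)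
        hXb (hmul hqD (hWb _ _ k (by omega) (by omega)) (hWb _ _ l (by omega) (by omega)))
        (Or.inl hX0)
      rw [hE, show (q : ℝ) ^ 2 * D ^ 3 = D * ((q * D) * (q * D)) by ring]
      exact this
  have tN : IntBd Pm (fun ω => X ω * (W s (s + 3 * r) k ω * W s' (s' + 5 * r) l ω
      + W s' (s' + 5 * r) k ω * W s (s + 3 * r) l ω
      - W s (s + 3 * r) k ω * W s (s + 3 * r) l ω)) (43 * (D * (C₁ * r))) := by
    have hdom : ∀ᵐ ω ∂Pm, ‖X ω * (W s (s + 3 * r) k ω * W s' (s' + 5 * r) l ω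
      + W s' (s' + 5 * r) k ω * W s (s + 3 * r) l ω
      - W s (s + 3 * r) k ω * W s (s + 3 * r) l ω)‖ ≤ D * (W s (s + 3 * r) k ω ^ 2
        + W s (s + 3 * r) l ω ^ 2 + 1 / 2 * W s' (s' + 5 * r) k ω ^ 2
        + 1 / 2 * W s' (s' + 5 * r) l ω ^ 2) := by
      filter_upwards [hXb] with ω hω
      rw [norm_mul]
      refine mul_le_mul hω ?_ (norm_nonneg _) hD
      rw [Real.norm_eq_abs]
      generalize W s (s + 3 * r) k ω = u
      generalize W s (s + 3 * r) l ω = v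
      generalize W s' (s' + 5 * r) k ω = u'
      generalize W s' (s' + 5 * r) l ω = v'
      rw [abs_le]
      constructor <;> nlinarith [sq_nonneg (u - v'), sq_nonneg (u + v'), sq_nonneg (u' - v),
        sq_nonneg (u' + v), sq_nonneg (u - v), sq_nonneg (u + v)]
    have i1 : ∀ x y k, Integrable (fun ω => W x y k ω ^ 2) Pm := h.cSum_sq_integrable
    have hWm : ∀ x y k, Measurable (W x y k) := measurable_cSum
    have j1 : Integrable (fun ω => W s (s + 3 * r) k ω ^ 2 + W s (s + 3 * r) l ω ^ 2) Pm :=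
      (i1 _ _ _).add (i1 _ _ _)
    have j2 : Integrable (fun ω => W s (s + 3 * r) k ω ^ 2 + W s (s + 3 * r) l ω ^ 2 +
        1 / 2 * W s' (s' + 5 * r) k ω ^ 2) Pm := j1.add ((i1 _ _ _).const_mul _)
    have j3 : Integrable (fun ω => W s (s + 3 * r) k ω ^ 2 + W s (s + 3 * r) l ω ^ 2 +
        1 / 2 * W s' (s' + 5 * r) k ω ^ 2 + 1 / 2 * W s' (s' + 5 * r) l ω ^ 2) Pm :=
      j2.add ((i1 _ _ _).const_mul _)
    refine ⟨Integrable.mono' (j3.const_mul D) (hXm.mul ((((hWm _ _ _).mul (hWm _ _ _)).add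
      ((hWm _ _ _).mul (hWm _ _ _))).sub ((hWm _ _ _).mul (hWm _ _ _)))).aestronglyMeasurable hdom, ?_⟩
    rw [← Real.norm_eq_abs]
    refine (norm_integral_le_of_norm_le (j3.const_mul D) hdom).trans ?_
    rw [integral_const_mul, integral_add j2 ((i1 _ _ _).const_mul _),
      integral_add j1 ((i1 _ _ _).const_mul _), integral_add (i1 _ _ _) (i1 _ _ _),
      integral_const_mul, integral_const_mul,
      show 43 * (D * (C₁ * r)) = D * (43 * (C₁ * r)) by ring]
    refine mul_le_mul_of_nonneg_left ?_ hD
    have v1 := h.cSum_sq_le hC k s 3 (by omega)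
    have v2 := h.cSum_sq_le hC l s 3 (by omega)
    have v3 := h.cSum_sq_le hC k s' 5 (by omega)
    have v4 := h.cSum_sq_le hC l s' 5 (by omega)
    push_cast at v1 v2 v3 v4
    simp only [W]
    linarith
  have total := tN.add ((((((((tA' k l).add (tB' k l)).add (tA' l k)).add (tB' l k)).add tAA).add
    (tAB k l)).add (tAB l k)).add tBB)
  rw [show 8 * E = E + E + E + E + E + E + E + E by ring]
  refine total.congr fun ω => ?_
  have e1 : ∀ k, cSum n p μ a (a + q) k ω =
      W a s k ω + W s (s + 3 * r) k ω + W (s + 3 * r) (a + q) k ω := fun k => by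
    simp only [W]
    rw [cSum_add (y := s + 3 * r) (by omega) (by omega), cSum_add (y := s) (by omega) (by omega)]
  have e2 : ∀ k, cSum n p μ a (a + q) k ω =
      W a s' k ω + W s' (s' + 5 * r) k ω + W (s' + 5 * r) (a + q) k ω := fun k => by
    simp only [W]
    rw [cSum_add (y := s' + 5 * r) (by omega) (by omega), cSum_add (y := s') (by omega) (by omega)]
  have ek := (e1 k).symm.trans (e2 k)
  have el := (e1 l).symm.trans (e2 l)
  rw [e1 k, e1 l]
  show X ω * _ = _
  linear_combination X ω * W s (s + 3 * r) k ω * el + X ω * W s (s + 3 * r) l ω * ek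

/-- Third moments of a block sum. -/
lemma DataHyp.block_third (h : DataHyp n p q r Pm μ D c₁ C₁) (hC : 0 ≤ C₁) (hr : 1 ≤ r)
    (hq : 5 * r ≤ q) {a : ℕ} (ha : a + q < n) (j k l : Fin p) :
    |∫ ω, cSum n p μ a (a + q) j ω * cSum n p μ a (a + q) k ω * cSum n p μ a (a + q) l ω ∂Pm| ≤
      q * (43 * (D * (C₁ * r)) + 8 * (4 * bmix n p Pm r * (q ^ 2 * D ^ 3))) := by
  set K := 43 * (D * (C₁ * r)) + 8 * (4 * bmix n p Pm r * (q ^ 2 * D ^ 3)) with hK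
  have hD := h.hD
  have hbm := bmix_nonneg (Pm := Pm) (r := r)
  have hK0 : 0 ≤ K := by positivity
  have ib : ∀ b ∈ Finset.univ.filter (fun i : Fin n => a ≤ (i : ℕ) ∧ (i : ℕ) < a + q),
      IntBd Pm (fun ω => (ω b j - μ j) * (cSum n p μ a (a + q) k ω * cSum n p μ a (a + q) l ω)) K :=
    fun b hb => by
      rw [Finset.mem_filter] at hb
      exact h.entry_third hC hr hq ha b hb.2.1 hb.2.2 j k l
  have e : ∀ ω, cSum n p μ a (a + q) j ω * cSum n p μ a (a + q) k ω * cSum n p μ a (a + q) l ω =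
      ∑ b ∈ Finset.univ.filter (fun i : Fin n => a ≤ (i : ℕ) ∧ (i : ℕ) < a + q),
        (ω b j - μ j) * (cSum n p μ a (a + q) k ω * cSum n p μ a (a + q) l ω) := fun ω => by
    rw [← Finset.sum_mul, mul_assoc]
    congr 1
    rw [cSum, Finset.sum_filter]
  simp only [e]
  rw [integral_finsetSum _ fun b hb => (ib b hb).1]
  refine (Finset.abs_sum_le_sum_abs _ _).trans ((Finset.sum_le_card_nsmul _ _ K
    fun b hb => (ib b hb).2).trans ?_)
  rw [nsmul_eq_mul]
  refine mul_le_mul_of_nonneg_right ?_ hK0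
  have : (Finset.univ.filter fun i : Fin n => a ≤ (i : ℕ) ∧ (i : ℕ) < a + q).card ≤
      (Finset.Ico a (a + q)).card :=
    Finset.card_le_card_of_injOn (fun i => (i : ℕ)) (fun i hi => by simpa using hi)
      (fun i _ j _ h => Fin.ext h)
  rw [Nat.card_Ico] at this
  exact_mod_cast (by omega : _ ≤ q)
end

end

section

/-! ### From distributional approximation to bootstrap critical values -/

/-- Real-valued random variables: the distribution function is monotone and runs from 0 to 1. -/
lemma cdf_facts {Ω : Type} [MeasurableSpace Ω] {κ : Measure Ω} [IsProbabilityMeasure κ] {f : Ω → ℝ}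
    (hf : Measurable f) :
    Tendsto (fun t => κ.real {x | f x ≤ t}) atBot (nhds 0) ∧
    Tendsto (fun t => κ.real {x | f x ≤ t}) atTop (nhds 1) := by
  have : IsProbabilityMeasure (κ.map f) := Measure.isProbabilityMeasure_map hf.aemeasurable
  have e : (fun t => κ.real {x | f x ≤ t}) = cdf (κ.map f) := by
    funext t
    rw [cdf_eq_real, map_measureReal_apply hf measurableSet_Iic]
    rfl
  rw [e]
  exact ⟨tendsto_cdf_atBot _, tendsto_cdf_atTop _⟩

lemma measurable_ciSup_fin {Ω : Type} [MeasurableSpace Ω] {p : ℕ} [NeZero p] {f : Ω → Fin p → ℝ}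
    (hf : ∀ j, Measurable fun x => f x j) : Measurable fun x => ⨆ j, f x j := by
  refine measurable_of_Iic fun t => ?_
  have : (fun x => ⨆ j, f x j) ⁻¹' Set.Iic t = ⋂ j, {x | f x j ≤ t} := by
    ext x
    simp only [Set.mem_preimage, Set.mem_Iic, Set.mem_iInter]
    exact ciSup_le_iff (Set.finite_range _).bddAbove
  rw [this]
  exact MeasurableSet.iInter fun j => measurableSet_le (hf j) measurable_const

lemma meanCdf_tendsto {m p : ℕ} [NeZero p] (P : Fin m → Measure (Fin p → ℝ))
    [∀ l, IsProbabilityMeasure (P l)] :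
    Tendsto (meanCdf P) atBot (nhds 0) ∧ Tendsto (meanCdf P) atTop (nhds 1) := by
  let f : (Fin m → Fin p → ℝ) × (Fin m → ℝ) → ℝ := fun z => ⨆ j, ∑ l, z.2 l * z.1 l j
  have hf : Measurable f := measurable_ciSup_fin
    (f := fun (z : (Fin m → Fin p → ℝ) × (Fin m → ℝ)) (j : Fin p) => ∑ l, z.2 l * z.1 l j)
    fun j => by fun_prop
  have e : meanCdf P = fun t => ((Measure.pi P).prod (gaussPi m)).real {z | f z ≤ t} := by
    funext t
    rw [measureReal_prod_eq _ _ (measurableSet_le hf measurable_const), meanCdf]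
    refine integral_congr_ae (ae_of_all _ fun x => ?_)
    show condCdf t x = _
    unfold condCdf
    congr 1
    ext e
    exact (ciSup_le_iff (f := fun j => ∑ l, e l * x l j) (Set.finite_range _).bddAbove).symm
  rw [e]
  exact cdf_facts hf

/-- The approximations that make the bootstrap critical value work, all with a common error `ε`:
`x` collects the normalised block sums, `T` is the centred statistic, `F` the conditional
distribution function of the bootstrap statistic. -/
structure CoreHyp {Ω : Type} [MeasurableSpace Ω] {m p : ℕ} (Pm : Measure Ω)
    (P : Fin m → Measure (Fin p → ℝ)) (x : Ω → Fin m → Fin p → ℝ) (T : Ω → Fin p → ℝ)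
    (F : Ω → ℝ → ℝ) (δ ε : ℝ) : Prop where
  hδ : 0 < δ
  bad : Pm.real {ω | ¬ ((∀ j, |T ω j - ∑ l, x ω l j| ≤ δ) ∧
    ∀ t, condCdf (t - δ) (x ω) - ε ≤ F ω t ∧ F ω t ≤ condCdf (t + δ) (x ω) + ε)} ≤ ε
  coup : ∀ A, MeasurableSet A → |Pm.real {ω | x ω ∈ A} - (Measure.pi P).real A| ≤ ε
  conc : ∀ t, (Measure.pi P).real {x | ε ≤ |condCdf t x - meanCdf P t|} ≤ ε
  lind_up : ∀ t, (Measure.pi P).real {x | ∀ j, ∑ l, x l j ≤ t} ≤ meanCdf P (t + 2 * δ) + ε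
  lind_lo : ∀ t, meanCdf P t ≤ (Measure.pi P).real {x | ∀ j, ∑ l, x l j ≤ t + 2 * δ} + ε
  ac : ∀ t, meanCdf P (t + δ) ≤ meanCdf P t + ε
  F_mono : ∀ ω, Monotone (F ω)
  F_bot : ∀ ω, Tendsto (F ω) atBot (nhds 0)
  F_top : ∀ ω, Tendsto (F ω) atTop (nhds 1)

section
variable {Ω : Type} [MeasurableSpace Ω] {m p : ℕ} [NeZero p] {Pm : Measure Ω}
  [IsProbabilityMeasure Pm] {P : Fin m → Measure (Fin p → ℝ)} [∀ l, IsProbabilityMeasure (P l)]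
  {x : Ω → Fin m → Fin p → ℝ} {T : Ω → Fin p → ℝ} {F : Ω → ℝ → ℝ} {δ ε : ℝ}

/-- An approximate quantile of `meanCdf`. -/
lemma CoreHyp.exists_quantile (H : CoreHyp Pm P x T F δ ε) {κ : ℝ} (h0 : 0 < κ) (h1 : κ < 1) :
    ∃ t, meanCdf P t ≤ κ ∧ κ < meanCdf P (t + δ) := by
  obtain ⟨hb, ht⟩ := meanCdf_tendsto P
  obtain ⟨s, hs⟩ := (hb.eventually_lt_const h0).exists
  obtain ⟨u, hu⟩ := (ht.eventually_const_lt h1).exists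
  have hδ := H.hδ
  by_contra hcon
  push Not at hcon
  have : ∀ k : ℕ, meanCdf P (s + k * δ) ≤ κ := by
    intro k
    induction k with
    | zero => simpa using hs.le
    | succ k ih =>
      have := hcon _ ih
      rw [show s + (k + 1 : ℕ) * δ = s + k * δ + δ by push_cast; ring]
      exact this
  obtain ⟨k, hk⟩ := exists_nat_ge ((u - s) / δ)
  have h2 : u ≤ s + k * δ := by
    rw [div_le_iff₀ hδ] at hk; linarith
  exact absurd (hu.trans_le ((meanCdf_mono P h2).trans (this k))) (lt_irrefl _)

lemma CoreHyp.eps_nonneg (H : CoreHyp Pm P x T F δ ε) : 0 ≤ ε := measureReal_nonneg.trans H.bad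

/-- The event on which either the approximation of the data by `x` fails or `condCdf t` is far from
its mean. -/
lemma CoreHyp.bad_conc (H : CoreHyp Pm P x T F δ ε) (t : ℝ) :
    Pm.real ({ω | ¬ ((∀ j, |T ω j - ∑ l, x ω l j| ≤ δ) ∧
      ∀ t, condCdf (t - δ) (x ω) - ε ≤ F ω t ∧ F ω t ≤ condCdf (t + δ) (x ω) + ε)} ∪
      {ω | ε ≤ |condCdf t (x ω) - meanCdf P t|}) ≤ 3 * ε := by
  have hA : MeasurableSet {x : Fin m → Fin p → ℝ | ε ≤ |condCdf t x - meanCdf P t|} :=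
    measurableSet_le measurable_const ((measurable_condCdf t).sub_const _).abs
  have h1 := H.bad
  have h2 := (abs_le.1 (H.coup _ hA)).2
  have h3 := H.conc t
  have h4 := measureReal_union_le (μ := Pm) {ω | ¬ ((∀ j, |T ω j - ∑ l, x ω l j| ≤ δ) ∧
      ∀ t, condCdf (t - δ) (x ω) - ε ≤ F ω t ∧ F ω t ≤ condCdf (t + δ) (x ω) + ε)}
      {ω | x ω ∈ {x : Fin m → Fin p → ℝ | ε ≤ |condCdf t x - meanCdf P t|}}
  refine h4.trans ?_
  linarith

lemma CoreHyp.exceed (H : CoreHyp Pm P x T F δ ε) (t : ℝ) :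
    |Pm.real {ω | x ω ∈ {x : Fin m → Fin p → ℝ | ∀ j, ∑ l, x l j ≤ t}ᶜ} - (1 -
      (Measure.pi P).real {x | ∀ j, ∑ l, x l j ≤ t})| ≤ ε := by
  have hA : MeasurableSet {x : Fin m → Fin p → ℝ | ∀ j, ∑ l, x l j ≤ t} :=
    measurableSet_forall_le (f := fun (x : Fin m → Fin p → ℝ) j => ∑ l, x l j) (by fun_prop) t
  have := H.coup _ hA.compl
  rwa [probReal_compl_eq_one_sub hA] at this

lemma CoreHyp.upper (H : CoreHyp Pm P x T F δ ε) {α : ℝ} (h0 : 0 < α) :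
    Pm.real {ω | ∃ j, sInf {t | 1 - α ≤ F ω t} < T ω j} ≤ α + 20 * ε := by
  have hε := H.eps_nonneg
  have hδ := H.hδ
  by_cases hκ : 0 < 1 - α - 3 * ε
  swap
  · exact measureReal_le_one.trans (by linarith)
  obtain ⟨t, ht1, ht2⟩ := H.exists_quantile hκ (by linarith)
  set B := {ω | ¬ ((∀ j, |T ω j - ∑ l, x ω l j| ≤ δ) ∧
      ∀ t, condCdf (t - δ) (x ω) - ε ≤ F ω t ∧ F ω t ≤ condCdf (t + δ) (x ω) + ε)} with hB
  have hsub : {ω | ∃ j, sInf {t | 1 - α ≤ F ω t} < T ω j} ⊆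
      (B ∪ {ω | ε ≤ |condCdf (t + δ) (x ω) - meanCdf P (t + δ)|}) ∪
      {ω | x ω ∈ {x : Fin m → Fin p → ℝ | ∀ j, ∑ l, x l j ≤ t - δ}ᶜ} := by
    rintro ω ⟨j, hj⟩
    by_contra hc
    simp only [Set.mem_union, not_or] at hc
    obtain ⟨⟨hc1, hc2⟩, hc3⟩ := hc
    rw [hB, Set.mem_ofPred_eq, not_not] at hc1
    rw [Set.mem_ofPred_eq, not_le] at hc2
    have hc4 : ∀ j, ∑ l, x ω l j ≤ t - δ := by
      by_contra h; exact hc3 h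
    have hq : t ≤ sInf {t | 1 - α ≤ F ω t} := by
      refine le_csInf ?_ fun u hu => ?_
      · exact ((H.F_top ω).eventually_const_le (by linarith : 1 - α < 1)).exists
      · by_contra hut
        push Not at hut
        have h1 := H.F_mono ω hut.le
        have h2 := (hc1.2 t).2
        have h3 := (abs_lt.1 hc2).2
        have h4 := H.ac t
        have h5 : 1 - α ≤ F ω u := hu
        linarith
    have h1 := (abs_le.1 (hc1.1 j)).2
    have h2 := hc4 j
    linarith
  have h1 := H.bad_conc (t + δ)
  have h2 := (abs_le.1 (H.exceed (t - δ))).2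
  have h3 := H.lind_lo (t - 3 * δ)
  rw [show t - 3 * δ + 2 * δ = t - δ by ring] at h3
  have a1 := H.ac (t - 3 * δ)
  have a2 := H.ac (t - 3 * δ + δ)
  have a3 := H.ac (t - 3 * δ + δ + δ)
  rw [show t - 3 * δ + δ + δ + δ = t by ring] at a3
  have a4 := H.ac t
  have h5 := (measureReal_mono (μ := Pm) hsub (measure_ne_top _ _)).trans (measureReal_union_le _ _)
  linarith

lemma CoreHyp.lower (H : CoreHyp Pm P x T F δ ε) {α : ℝ} (h1 : α < 1) :
    α - 20 * ε ≤ Pm.real {ω | ∃ j, sInf {t | 1 - α ≤ F ω t} < T ω j} := by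
  have hε := H.eps_nonneg
  have hδ := H.hδ
  by_cases hκ : 1 - α + 3 * ε < 1
  swap
  · exact le_trans (by linarith) measureReal_nonneg
  obtain ⟨t, ht1, ht2⟩ := H.exists_quantile (κ := 1 - α + 3 * ε) (by linarith) hκ
  set B := {ω | ¬ ((∀ j, |T ω j - ∑ l, x ω l j| ≤ δ) ∧
      ∀ t, condCdf (t - δ) (x ω) - ε ≤ F ω t ∧ F ω t ≤ condCdf (t + δ) (x ω) + ε)} with hB
  have hsub : {ω | x ω ∈ {x : Fin m → Fin p → ℝ | ∀ j, ∑ l, x l j ≤ t + 2 * δ}ᶜ} ⊆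
      (B ∪ {ω | ε ≤ |condCdf t (x ω) - meanCdf P t|}) ∪
      {ω | ∃ j, sInf {t | 1 - α ≤ F ω t} < T ω j} := by
    intro ω hω
    by_contra hc
    simp only [Set.mem_union, not_or] at hc
    obtain ⟨⟨hc1, hc2⟩, hc3⟩ := hc
    rw [hB, Set.mem_ofPred_eq, not_not] at hc1
    rw [Set.mem_ofPred_eq, not_le] at hc2
    rw [Set.mem_ofPred_eq] at hc3
    push Not at hc3
    refine hω fun j => ?_
    have hq : sInf {t | 1 - α ≤ F ω t} ≤ t + δ := by
      refine csInf_le ?_ ?_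
      · obtain ⟨u, hu⟩ := ((H.F_bot ω).eventually_lt_const (by linarith : 0 < 1 - α)).exists
        refine ⟨u, fun w hw => ?_⟩
        by_contra hwu
        push Not at hwu
        have h1 := H.F_mono ω hwu.le
        have h2 : 1 - α ≤ F ω w := hw
        linarith
      · have h2 := (hc1.2 (t + δ)).1
        rw [add_sub_cancel_right] at h2
        have h3 := (abs_lt.1 hc2).1
        have h4 := H.ac t
        show 1 - α ≤ F ω (t + δ)
        linarith
    have h1 := (abs_le.1 (hc1.1 j)).1
    have h2 := hc3 j
    linarith
  have h1 := H.bad_conc t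
  have h2 := (abs_le.1 (H.exceed (t + 2 * δ))).1
  have h3 := H.lind_up (t + 2 * δ)
  rw [show t + 2 * δ + 2 * δ = t + δ + δ + δ + δ by ring] at h3
  have a1 := H.ac t
  have a2 := H.ac (t + δ)
  have a3 := H.ac (t + δ + δ)
  have a4 := H.ac (t + δ + δ + δ)
  have h5 := (measureReal_mono (μ := Pm) hsub (measure_ne_top _ _)).trans (measureReal_union_le _ _)
  linarith
end

end

section

/-! ### The hypotheses on the data in terms of centred window sums -/

section
variable {n p : ℕ} {μ : Fin p → ℝ} {Pm : Measure (Fin n → Fin p → ℝ)} [IsProbabilityMeasure Pm]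

/-- Second moments of centred window sums are the variances of the window sums. -/
lemma variance_blockSum {D : ℝ} (hmean : ∀ i j, ∫ ω, (ω i j - μ j) ∂Pm = 0)
    (hbdd : ∀ᵐ ω ∂Pm, ∀ i j, |ω i j - μ j| ≤ D) (hD : 0 ≤ D) (a q : ℕ) (hq : 0 < q) (j : Fin p) :
    ∫ ω, cSum n p μ a (a + q) j ω ^ 2 ∂Pm =
      variance (fun ω => blockSum n p a q j ω / Real.sqrt q) Pm * q := by
  -- the variance hypotheses of `DataHyp` are vacuous for window lengths exceeding `n`
  have h : DataHyp n p (n + 1) (n + 1) Pm μ D 0 0 :=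
    ⟨hD, hmean, hbdd, fun a _ h => by omega, fun a _ h => by omega, fun a _ h => by omega⟩
  set K : ℝ := ∑ i : Fin n, if a ≤ (i : ℕ) ∧ (i : ℕ) < a + q then μ j else 0 with hK
  have e : ∀ ω, blockSum n p a q j ω = cSum n p μ a (a + q) j ω + K := fun ω => by
    unfold blockSum cSum
    rw [hK, ← Finset.sum_add_distrib]
    refine Finset.sum_congr rfl fun i _ => ?_
    split_ifs <;> ring
  have hm := measurable_cSum (n := n) (μ := μ) a (a + q) j
  have hi : Integrable (cSum n p μ a (a + q) j) Pm :=
    integrable_of_bdd hm (h.cSum_bdd.mono fun ω hω => hω _ _ _)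
  have hq' : (0 : ℝ) < q := by exact_mod_cast hq
  simp only [e]
  rw [variance_eq_integral ((hm.add_const K).div_const _).aemeasurable]
  have hInt : ∫ ω, (cSum n p μ a (a + q) j ω + K) / √(q : ℝ) ∂Pm = K / √(q : ℝ) := by
    rw [integral_div, integral_add hi (integrable_const K), h.cSum_mean]
    simp
  rw [hInt, ← integral_mul_const]
  refine integral_congr_ae (ae_of_all _ fun ω => ?_)
  beta_reduce
  have hs : √(q : ℝ) ^ 2 = q := Real.sq_sqrt hq'.le
  have hs0 : √(q : ℝ) ≠ 0 := (Real.sqrt_pos.2 hq').ne'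
  rw [← sub_div, add_sub_cancel_right, div_pow, hs]
  field_simp

lemma dataHyp_of [NeZero p] {q r : ℕ} {ν₁ : Measure (Fin p → ℝ)} {D c₁ C₁ : ℝ} (hD : 0 ≤ D)
    (hr : 1 ≤ r) (hrq : r < q)
    (hid : ∀ i, Measure.map (fun ω => ω i) Pm = ν₁)
    (hbdd : ∀ᵐ ω ∂Pm, ∀ i j, |ω i j - popMean ν₁ j| ≤ D)
    (hlo : c₁ ≤ sigmaLowSq n p Pm q) (hup : sigmaBarSq n p Pm r ⊔ sigmaBarSq n p Pm q ≤ C₁) :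
    DataHyp n p q r Pm (popMean ν₁) D c₁ C₁ := by
  have hmean : ∀ i j, ∫ ω, (ω i j - popMean ν₁ j) ∂Pm = 0 := by
    intro i j
    have hi : Integrable (fun ω : Fin n → Fin p → ℝ => ω i j) Pm := by
      refine integrable_of_bdd (C := D + |popMean ν₁ j|) (by fun_prop) (hbdd.mono fun ω hω => ?_)
      have := abs_add_le (ω i j - popMean ν₁ j) (popMean ν₁ j)
      rw [sub_add_cancel] at this
      linarith [hω i j]
    rw [integral_sub hi (integrable_const _)]
    have : popMean ν₁ j = ∫ ω, ω i j ∂Pm := by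
      unfold popMean
      rw [← hid i, integral_map (measurable_pi_apply i).aemeasurable
        (measurable_pi_apply j).aestronglyMeasurable]
    rw [← this]
    simp
  have hbar : ∀ w, sigmaBarSq n p Pm w ≤ C₁ → ∀ a j, a + w ≤ n →
      variance (fun ω => blockSum n p a w j ω / Real.sqrt w) Pm ≤ C₁ := by
    intro w hw a j ha
    refine le_trans ?_ hw
    unfold sigmaBarSq
    refine le_trans ?_ (le_ciSup (f := fun j : Fin p => ⨆ a : Fin (n - w + 1),
      variance (fun ω => blockSum n p (a : ℕ) w j ω / Real.sqrt w) Pm)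
      (Set.finite_range _).bddAbove j)
    exact le_ciSup (f := fun a : Fin (n - w + 1) =>
      variance (fun ω => blockSum n p (a : ℕ) w j ω / Real.sqrt w) Pm)
      (Set.finite_range _).bddAbove ⟨a, by omega⟩
  have hlow : ∀ a j, a + q ≤ n →
      c₁ ≤ variance (fun ω => blockSum n p a q j ω / Real.sqrt q) Pm := by
    intro a j ha
    refine hlo.trans ?_
    unfold sigmaLowSq
    refine le_trans (ciInf_le (f := fun j : Fin p => ⨅ a : Fin (n - q + 1),
      variance (fun ω => blockSum n p (a : ℕ) q j ω / Real.sqrt q) Pm)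
      (Set.finite_range _).bddBelow j) ?_
    exact ciInf_le (f := fun a : Fin (n - q + 1) =>
      variance (fun ω => blockSum n p (a : ℕ) q j ω / Real.sqrt q) Pm)
      (Set.finite_range _).bddBelow ⟨a, by omega⟩
  refine ⟨hD, hmean, hbdd, fun a j ha => ?_, fun a j ha => ?_, fun a j ha => ?_⟩
  · rw [variance_blockSum hmean hbdd hD a r (by omega)]
    exact mul_le_mul_of_nonneg_right (hbar r (le_sup_left.trans hup) a j ha) (by positivity)
  · rw [variance_blockSum hmean hbdd hD a q (by omega)]
    exact mul_le_mul_of_nonneg_right (hbar q (le_sup_right.trans hup) a j ha) (by positivity)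
  · rw [variance_blockSum hmean hbdd hD a q (by omega)]
    exact mul_le_mul_of_nonneg_right (hlow a j ha) (by positivity)
end

/-! ### Large and small blocks -/

/-- The centred sum over the `l`-th large block, normalised by `√(mq)`. -/
def bigBlk (n p q r : ℕ) (μ : Fin p → ℝ) (l : Fin (nBlocks n q r)) (ω : Fin n → Fin p → ℝ) :
    Fin p → ℝ := fun j =>
  cSum n p μ (l * (q + r)) (l * (q + r) + q) j ω / √((nBlocks n q r * q : ℕ) : ℝ)

/-- The centred sum over the small block following the `l`-th large block, normalised by `√n`. -/
def smallBlk (n p q r : ℕ) (μ : Fin p → ℝ) (l : Fin (nBlocks n q r)) (ω : Fin n → Fin p → ℝ) :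
    Fin p → ℝ := fun j =>
  cSum n p μ (l * (q + r) + q) (l * (q + r) + q + r) j ω / √(n : ℝ)

lemma block_end_le {n q r : ℕ} (l : Fin (nBlocks n q r)) : (l : ℕ) * (q + r) + q + r ≤ n := by
  have h1 : (l : ℕ) + 1 ≤ n / (q + r) := l.2
  have h2 := (Nat.mul_le_mul_right (q + r) h1).trans (Nat.div_mul_le_self n (q + r))
  nlinarith

section
variable {n p q r : ℕ} {μ : Fin p → ℝ} {Pm : Measure (Fin n → Fin p → ℝ)} [IsProbabilityMeasure Pm]
  {D c₁ C₁ : ℝ}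

lemma measurable_bigBlk (l : Fin (nBlocks n q r)) : Measurable (bigBlk n p q r μ l) :=
  measurable_pi_iff.2 fun j => (measurable_cSum _ _ j).div_const _

lemma measurable_smallBlk (l : Fin (nBlocks n q r)) : Measurable (smallBlk n p q r μ l) :=
  measurable_pi_iff.2 fun j => (measurable_cSum _ _ j).div_const _

lemma bigBlk_coupling (hr : 1 ≤ r) (A : Set (Fin (nBlocks n q r) → Fin p → ℝ))
    (hA : MeasurableSet A) :
    |Pm.real {ω | (fun l => bigBlk n p q r μ l ω) ∈ A} -
      (Measure.pi fun l => Pm.map (bigBlk n p q r μ l)).real A| ≤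
      2 * nBlocks n q r * bmix n p Pm r := by
  refine block_coupling (w := q) _ (fun l => (l : ℕ) * (q + r)) (bigBlk n p q r μ)
    (fun l => ?_) (fun k l hkl => ?_) (fun l => ?_) (fun l => ?_) A hA
  · have := block_end_le l; omega
  · have : (k : ℕ) + 1 ≤ l := hkl
    have := Nat.mul_le_mul_right (q + r) this
    nlinarith
  · exact @measurable_pi_iff _ _ _ (sigmaUpTo n p _) _ _ |>.2 fun j =>
      (measurable_cSum_upTo le_rfl j).div_const _
  · exact @measurable_pi_iff _ _ _ (sigmaFrom n p _) _ _ |>.2 fun j =>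
      (measurable_cSum_from le_rfl j).div_const _

lemma smallBlk_coupling (hr : 1 ≤ r) (hrq : r < q) (A : Set (Fin (nBlocks n q r) → Fin p → ℝ))
    (hA : MeasurableSet A) :
    |Pm.real {ω | (fun l => smallBlk n p q r μ l ω) ∈ A} -
      (Measure.pi fun l => Pm.map (smallBlk n p q r μ l)).real A| ≤
      2 * nBlocks n q r * bmix n p Pm r := by
  refine block_coupling (w := r) _ (fun l => (l : ℕ) * (q + r) + q) (smallBlk n p q r μ)
    (fun l => ?_) (fun k l hkl => ?_) (fun l => ?_) (fun l => ?_) A hA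
  · have := block_end_le l; omega
  · have : (k : ℕ) + 1 ≤ l := hkl
    have := Nat.mul_le_mul_right (q + r) this
    nlinarith
  · exact @measurable_pi_iff _ _ _ (sigmaUpTo n p _) _ _ |>.2 fun j =>
      (measurable_cSum_upTo le_rfl j).div_const _
  · exact @measurable_pi_iff _ _ _ (sigmaFrom n p _) _ _ |>.2 fun j =>
      (measurable_cSum_from le_rfl j).div_const _

lemma DataHyp.bigBlk_law (h : DataHyp n p q r Pm μ D c₁ C₁) (hC : 0 ≤ C₁) (hr : 1 ≤ r)
    (hq : 5 * r ≤ q) (l : Fin (nBlocks n q r)) :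
    BlockLaw (Pm.map (bigBlk n p q r μ l)) (q * D / √((nBlocks n q r * q : ℕ) : ℝ))
      (C₁ * q / ((nBlocks n q r * q : ℕ) : ℝ)) (c₁ * q / ((nBlocks n q r * q : ℕ) : ℝ))
      (q * (43 * (D * (C₁ * r)) + 8 * (4 * bmix n p Pm r * (q ^ 2 * D ^ 3))) /
        √((nBlocks n q r * q : ℕ) : ℝ) ^ 3) := by
  have hend := block_end_le l
  have hm := (measurable_bigBlk (p := p) (μ := μ) l).aemeasurable (μ := Pm)
  have hs2 : √((nBlocks n q r * q : ℕ) : ℝ) ^ 2 = ((nBlocks n q r * q : ℕ) : ℝ) :=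
    Real.sq_sqrt (by positivity)
  have hs0 : 0 ≤ √((nBlocks n q r * q : ℕ) : ℝ) := Real.sqrt_nonneg _
  have hsq : ∀ j, ∫ x, x j ^ 2 ∂(Pm.map (bigBlk n p q r μ l)) =
      (∫ ω, cSum n p μ (l * (q + r)) (l * (q + r) + q) j ω ^ 2 ∂Pm) /
        ((nBlocks n q r * q : ℕ) : ℝ) := fun j => by
    rw [integral_map hm ((measurable_pi_apply j).pow_const 2).aestronglyMeasurable,
      ← integral_div]
    refine integral_congr_ae (ae_of_all _ fun ω => ?_)
    show (_ / _) ^ 2 = _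
    rw [div_pow, hs2]
  refine ⟨fun j => ?_, ?_, fun j => ?_, fun j => ?_, fun j k i => ?_⟩
  · rw [integral_map hm (measurable_pi_apply j).aestronglyMeasurable]
    show ∫ ω, _ / _ ∂Pm = 0
    rw [integral_div, h.cSum_mean, zero_div]
  · rw [ae_map_iff hm (by
      have : {x : Fin p → ℝ | ∀ j, |x j| ≤ q * D / √((nBlocks n q r * q : ℕ) : ℝ)} =
        ⋂ j, {x | |x j| ≤ q * D / √((nBlocks n q r * q : ℕ) : ℝ)} := by ext; simp
      rw [this]
      exact MeasurableSet.iInter fun j => measurableSet_le (measurable_pi_apply j).abs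
        measurable_const)]
    filter_upwards [h.cSum_bdd] with ω hω j
    show |_ / _| ≤ _
    rw [abs_div, abs_of_nonneg hs0]
    refine div_le_div_of_nonneg_right ?_ hs0
    have := hω (l * (q + r)) (l * (q + r) + q) j
    rwa [Nat.add_sub_cancel_left] at this
  · rw [hsq]
    exact div_le_div_of_nonneg_right (h.var_q _ _ (by omega)) (by positivity)
  · rw [hsq]
    exact div_le_div_of_nonneg_right (h.var_lo _ _ (by omega)) (by positivity)
  · have hm3 : Measurable fun x : Fin p → ℝ => x j * x k * x i :=
      ((measurable_pi_apply j).mul (measurable_pi_apply k)).mul (measurable_pi_apply i)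
    rw [integral_map hm hm3.aestronglyMeasurable]
    have e : ∀ ω, bigBlk n p q r μ l ω j * bigBlk n p q r μ l ω k * bigBlk n p q r μ l ω i =
        cSum n p μ (l * (q + r)) (l * (q + r) + q) j ω * cSum n p μ (l * (q + r)) (l * (q + r) + q) k ω
          * cSum n p μ (l * (q + r)) (l * (q + r) + q) i ω / √((nBlocks n q r * q : ℕ) : ℝ) ^ 3 :=
      fun ω => by unfold bigBlk; ring
    simp only [e]
    rw [integral_div, abs_div, abs_of_nonneg (pow_nonneg hs0 3)]
    exact div_le_div_of_nonneg_right (h.block_third hC hr hq (by omega) j k i) (pow_nonneg hs0 3)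

/-- Tail bound for sums over the small blocks. -/
lemma DataHyp.smallBlk_tail (h : DataHyp n p q r Pm μ D c₁ C₁) (hr : 1 ≤ r) (hrq : r < q)
    {lam u : ℝ} (hl : 0 ≤ lam) (hlb : lam * (r * D / √(n : ℝ)) ≤ 1) :
    Pm.real {ω | ∃ j, u ≤ |∑ l, smallBlk n p q r μ l ω j|} ≤
      2 * p * Real.exp (nBlocks n q r * (lam ^ 2 * (C₁ * r / n)) - lam * u) +
        2 * nBlocks n q r * bmix n p Pm r := by
  have hm := fun l => (measurable_smallBlk (p := p) (μ := μ) (n := n) (q := q) (r := r) l).aemeasurable (μ := Pm)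
  have pP : ∀ l, IsProbabilityMeasure (Pm.map (smallBlk n p q r μ l)) := fun l =>
    Measure.isProbabilityMeasure_map (hm l)
  have hs2 : √(n : ℝ) ^ 2 = n := Real.sq_sqrt (by positivity)
  have hs0 : 0 ≤ √(n : ℝ) := Real.sqrt_nonneg _
  have hA : MeasurableSet {x : Fin (nBlocks n q r) → Fin p → ℝ | ∃ j, u ≤ |∑ l, x l j|} := by
    have : {x : Fin (nBlocks n q r) → Fin p → ℝ | ∃ j, u ≤ |∑ l, x l j|} =
        ⋃ j, {x | u ≤ |∑ l, x l j|} := by ext; simp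
    rw [this]
    refine MeasurableSet.iUnion fun j => measurableSet_le measurable_const (Measurable.abs ?_)
    fun_prop
  have hc := (abs_le.1 (smallBlk_coupling (Pm := Pm) (μ := μ) hr hrq _ hA)).2
  have ht := sum_tail (P := fun l => Pm.map (smallBlk n p q r μ l)) (b := r * D / √(n : ℝ))
    (v := C₁ * r / n) (fun l j => ?_) (fun l => ?_) (fun l j => ?_) hl hlb (u := u)
  · have : Pm.real {ω | (fun l => smallBlk n p q r μ l ω) ∈
        {x : Fin (nBlocks n q r) → Fin p → ℝ | ∃ j, u ≤ |∑ l, x l j|}} =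
        Pm.real {ω | ∃ j, u ≤ |∑ l, smallBlk n p q r μ l ω j|} := rfl
    rw [this] at hc
    linarith
  · rw [integral_map (hm l) (measurable_pi_apply j).aestronglyMeasurable]
    show ∫ ω, _ / _ ∂Pm = 0
    rw [integral_div, h.cSum_mean, zero_div]
  · rw [ae_map_iff (hm l) (by
      have : {x : Fin p → ℝ | ∀ j, |x j| ≤ r * D / √(n : ℝ)} =
        ⋂ j, {x | |x j| ≤ r * D / √(n : ℝ)} := by ext; simp
      rw [this]
      exact MeasurableSet.iInter fun j => measurableSet_le (measurable_pi_apply j).abs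
        measurable_const)]
    filter_upwards [h.cSum_bdd] with ω hω j
    show |_ / _| ≤ _
    rw [abs_div, abs_of_nonneg hs0]
    refine div_le_div_of_nonneg_right ?_ hs0
    have := hω (l * (q + r) + q) (l * (q + r) + q + r) j
    rwa [Nat.add_sub_cancel_left] at this
  · rw [integral_map (hm l) ((measurable_pi_apply j).pow_const 2).aestronglyMeasurable]
    have e : ∀ ω, smallBlk n p q r μ l ω j ^ 2 =
        cSum n p μ (l * (q + r) + q) (l * (q + r) + q + r) j ω ^ 2 / n := fun ω => by
      unfold smallBlk; rw [div_pow, hs2]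
    simp only [e]
    rw [integral_div]
    exact div_le_div_of_nonneg_right (h.var_r _ _ (block_end_le l)) (by positivity)

/-- Tail bound for sums over the large blocks. -/
lemma DataHyp.bigBlk_tail (h : DataHyp n p q r Pm μ D c₁ C₁) (hC : 0 ≤ C₁) (hr : 1 ≤ r)
    (hq : 5 * r ≤ q) {lam u : ℝ} (hl : 0 ≤ lam)
    (hlb : lam * (q * D / √((nBlocks n q r * q : ℕ) : ℝ)) ≤ 1) :
    Pm.real {ω | ∃ j, u ≤ |∑ l, bigBlk n p q r μ l ω j|} ≤
      2 * p * Real.exp (nBlocks n q r * (lam ^ 2 * (C₁ * q / ((nBlocks n q r * q : ℕ) : ℝ))) - lam * u) +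
        2 * nBlocks n q r * bmix n p Pm r := by
  have pP : ∀ l, IsProbabilityMeasure (Pm.map (bigBlk n p q r μ l)) := fun l =>
    Measure.isProbabilityMeasure_map (measurable_bigBlk l).aemeasurable
  have hA : MeasurableSet {x : Fin (nBlocks n q r) → Fin p → ℝ | ∃ j, u ≤ |∑ l, x l j|} := by
    have : {x : Fin (nBlocks n q r) → Fin p → ℝ | ∃ j, u ≤ |∑ l, x l j|} =
        ⋃ j, {x | u ≤ |∑ l, x l j|} := by ext; simp
    rw [this]
    refine MeasurableSet.iUnion fun j => measurableSet_le measurable_const (Measurable.abs ?_)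
    fun_prop
  have hc := (abs_le.1 (bigBlk_coupling (Pm := Pm) (μ := μ) hr _ hA)).2
  have hlaw := fun l => h.bigBlk_law hC hr hq l
  have ht := sum_tail (P := fun l => Pm.map (bigBlk n p q r μ l)) (u := u)
    (fun l => (hlaw l).mean) (fun l => (hlaw l).bdd) (fun l => (hlaw l).le_v) hl hlb
  have : Pm.real {ω | (fun l => bigBlk n p q r μ l ω) ∈
        {x : Fin (nBlocks n q r) → Fin p → ℝ | ∃ j, u ≤ |∑ l, x l j|}} =
        Pm.real {ω | ∃ j, u ≤ |∑ l, bigBlk n p q r μ l ω j|} := rfl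
  rw [this] at hc
  linarith

/-- The centred statistic. -/
def Tcent (n p : ℕ) (μ : Fin p → ℝ) (ω : Fin n → Fin p → ℝ) (j : Fin p) : ℝ :=
  √(n : ℝ) * (muHatD n ω j - μ j)

lemma Tcent_eq (hn : 0 < n) (ω : Fin n → Fin p → ℝ) (j : Fin p) :
    Tcent n p μ ω j = cSum n p μ 0 n j ω / √(n : ℝ) := by
  have hn' : (0 : ℝ) < n := by exact_mod_cast hn
  have e : cSum n p μ 0 n j ω = n * (muHatD n ω j - μ j) := by
    unfold cSum muHatD
    simp only [zero_le, Fin.is_lt, and_self, if_true, Finset.sum_sub_distrib, Finset.sum_const,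
      Finset.card_univ, Fintype.card_fin, nsmul_eq_mul]
    field_simp
  rw [e, Tcent, eq_div_iff (Real.sqrt_pos.2 hn').ne']
  rw [mul_right_comm, Real.mul_self_sqrt hn'.le]

/-- The centred statistic splits into large blocks, small blocks and a remainder. -/
lemma Tcent_decomp (hn : 0 < n) (hq : 0 < q) (hm : 0 < nBlocks n q r) (ω : Fin n → Fin p → ℝ)
    (j : Fin p) :
    Tcent n p μ ω j = √((nBlocks n q r * q : ℕ) : ℝ) / √(n : ℝ) * ∑ l, bigBlk n p q r μ l ω j +
      ∑ l, smallBlk n p q r μ l ω j +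
      cSum n p μ (nBlocks n q r * (q + r)) n j ω / √(n : ℝ) := by
  have hsplit : ∀ m : ℕ, cSum n p μ 0 (m * (q + r)) j ω = ∑ l : Fin m,
      (cSum n p μ (l * (q + r)) (l * (q + r) + q) j ω +
        cSum n p μ (l * (q + r) + q) (l * (q + r) + q + r) j ω) := by
    intro m
    induction m with
    | zero => simp [cSum_empty]
    | succ m ih =>
      rw [Fin.sum_univ_castSucc]
      simp only [Fin.val_castSucc, Fin.val_last]
      rw [← ih, cSum_add (y := m * (q + r)) (by omega) (Nat.mul_le_mul_right _ (by omega)),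
        cSum_add (x := m * (q + r)) (y := m * (q + r) + q) (by omega) (by nlinarith),
        show (m + 1) * (q + r) = m * (q + r) + q + r by ring]
  have hle : nBlocks n q r * (q + r) ≤ n := Nat.div_mul_le_self _ _
  have hs : √((nBlocks n q r * q : ℕ) : ℝ) ≠ 0 :=
    (Real.sqrt_pos.2 (by exact_mod_cast Nat.mul_pos hm hq)).ne'
  have e1 : √((nBlocks n q r * q : ℕ) : ℝ) / √(n : ℝ) * ∑ l, bigBlk n p q r μ l ω j =
      (∑ l : Fin (nBlocks n q r), cSum n p μ (l * (q + r)) (l * (q + r) + q) j ω) / √(n : ℝ) := by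
    unfold bigBlk
    rw [← Finset.sum_div]
    field_simp
  have e2 : ∑ l, smallBlk n p q r μ l ω j =
      (∑ l : Fin (nBlocks n q r), cSum n p μ (l * (q + r) + q) (l * (q + r) + q + r) j ω) /
        √(n : ℝ) := by
    unfold smallBlk
    rw [← Finset.sum_div]
  rw [Tcent_eq hn, cSum_add (y := nBlocks n q r * (q + r)) (by omega) hle, hsplit, e1, e2,
    Finset.sum_add_distrib]
  ring
end

end

section

/-! ### The conditional law of the bootstrap statistic -/

section
variable {n p q r : ℕ} {μ : Fin p → ℝ}

lemma window_const {a : ℕ} (ha : a + q ≤ n) (c : ℝ) :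
    (∑ i : Fin n, if a ≤ (i : ℕ) ∧ (i : ℕ) < a + q then c else 0) = q * c := by
  rw [Fin.sum_univ_eq_sum_range (fun i => if a ≤ i ∧ i < a + q then c else 0) n,
    ← Finset.sum_filter, Finset.sum_const, nsmul_eq_mul]
  congr 2
  have : (Finset.range n).filter (fun i => a ≤ i ∧ i < a + q) = Finset.Ico a (a + q) := by
    ext i; simp; omega
  rw [this, Nat.card_Ico, Nat.add_sub_cancel_left]

lemma blockSumC_eq {a : ℕ} (ha : a + q ≤ n) (j : Fin p) (ω : Fin n → Fin p → ℝ) :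
    blockSumC n p a q j ω = cSum n p μ a (a + q) j ω - q * (muHatD n ω j - μ j) := by
  rw [← window_const ha, blockSumC, cSum, ← Finset.sum_sub_distrib]
  refine Finset.sum_congr rfl fun i _ => ?_
  split_ifs <;> ring

/-- The coordinates of the bootstrap statistic: block multiplier sums with the true centring,
and a correction for centring at the sample mean. -/
lemma WBMB_coord (j : Fin p) (ω : Fin n → Fin p → ℝ) (e : Fin (nBlocks n q r) → ℝ) :
    (∑ l : Fin (nBlocks n q r), e l * blockSumC n p ((l : ℕ) * (q + r)) q j ω) /
      Real.sqrt ((nBlocks n q r * q : ℕ)) =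
    ∑ l, e l * bigBlk n p q r μ l ω j -
      q * (muHatD n ω j - μ j) / √((nBlocks n q r * q : ℕ) : ℝ) * ∑ l, e l := by
  rw [Finset.sum_div, Finset.mul_sum, ← Finset.sum_sub_distrib]
  refine Finset.sum_congr rfl fun l _ => ?_
  rw [blockSumC_eq (μ := μ) (by have := block_end_le l; omega), bigBlk]
  ring

lemma measurable_WBMB [NeZero p] (ω : Fin n → Fin p → ℝ) : Measurable (WBMB n p q r ω) := by
  unfold WBMB
  exact measurable_ciSup_fin (f := fun (e : Fin (nBlocks n q r) → ℝ) (j : Fin p) =>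
    (∑ l : Fin (nBlocks n q r), e l * blockSumC n p ((l : ℕ) * (q + r)) q j ω) /
      Real.sqrt ((nBlocks n q r * q : ℕ))) fun j => by fun_prop

/-- Gaussian tail of the sum of the multipliers. -/
lemma gaussPi_sum_tail {m : ℕ} (hm : 0 < m) {u : ℝ} (hu : 0 < u) :
    (gaussPi m).real {e | u ≤ |∑ l, e l|} ≤ 4 * m / u ^ 2 := by
  have hm' : (0 : ℝ) < m := by exact_mod_cast hm
  have hs : 0 < √(m : ℝ) := Real.sqrt_pos.2 hm'
  have hs2 : √(m : ℝ) ^ 2 = m := Real.sq_sqrt hm'.le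
  have key : ∀ s : ℝ, s ^ 2 = 1 → (gaussPi m).real {e | u ≤ s * ∑ l, e l} ≤ 2 * m / u ^ 2 := by
    intro s h1
    have ht := gaussPi_tail (m := m) (fun _ => s / √(m : ℝ)) (by
      rw [Finset.sum_const, Finset.card_univ, Fintype.card_fin, nsmul_eq_mul, div_pow, h1, hs2]
      field_simp) (H := u / √(m : ℝ)) (by positivity)
    have e : {e : Fin m → ℝ | u / √(m : ℝ) ≤ ∑ l, e l * (s / √(m : ℝ))} =
        {e | u ≤ s * ∑ l, e l} := by
      ext e
      rw [Set.mem_ofPred_eq, Set.mem_ofPred_eq, ← Finset.sum_mul, mul_div_assoc',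
        div_le_div_iff_of_pos_right hs, mul_comm]
    rw [e, div_pow, hs2, Real.exp_neg] at ht
    refine ht.trans ?_
    have hx : 0 < u ^ 2 / m / 2 := by positivity
    have : u ^ 2 / m / 2 ≤ Real.exp (u ^ 2 / m / 2) := by
      linarith [Real.add_one_le_exp (u ^ 2 / m / 2)]
    refine (inv_anti₀ hx this).trans (le_of_eq ?_)
    field_simp
  have hsub : {e : Fin m → ℝ | u ≤ |∑ l, e l|} ⊆
      {e | u ≤ 1 * ∑ l, e l} ∪ {e | u ≤ (-1) * ∑ l, e l} := by
    intro e he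
    rcases le_abs.1 (show u ≤ |∑ l, e l| from he) with h | h
    · left; show u ≤ 1 * _; linarith
    · right; show u ≤ (-1) * _; linarith
  refine (measureReal_mono hsub (measure_ne_top _ _)).trans ((measureReal_union_le _ _).trans ?_)
  have h1 := key 1 (by norm_num)
  have h2 := key (-1) (by norm_num)
  calc _ ≤ 2 * m / u ^ 2 + 2 * m / u ^ 2 := add_le_add h1 h2
    _ = _ := by ring

/-- Sandwich of the bootstrap distribution function by the one with exact centring. -/
lemma boot_sandwich [NeZero p] (hn : 0 < n) (hq : 0 < q) (hm : 0 < nBlocks n q r) {M δ : ℝ}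
    (hM : 0 < M) (hδ : 0 < δ) {ω : Fin n → Fin p → ℝ} (hT : ∀ j, |Tcent n p μ ω j| ≤ M) (t : ℝ) :
    condCdf (t - δ) (fun l => bigBlk n p q r μ l ω) - 4 * (q * M ^ 2 / (n * δ ^ 2)) ≤
      (gaussPi (nBlocks n q r)).real {e | WBMB n p q r ω e ≤ t} ∧
    (gaussPi (nBlocks n q r)).real {e | WBMB n p q r ω e ≤ t} ≤
      condCdf (t + δ) (fun l => bigBlk n p q r μ l ω) + 4 * (q * M ^ 2 / (n * δ ^ 2)) := by
  set m := nBlocks n q r with hm_def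
  have hn' : (0 : ℝ) < n := by exact_mod_cast hn
  have hq' : (0 : ℝ) < q := by exact_mod_cast hq
  have hm' : (0 : ℝ) < m := by exact_mod_cast hm
  have hsn : 0 < √(n : ℝ) := Real.sqrt_pos.2 hn'
  have hmq : (0 : ℝ) < ((m * q : ℕ) : ℝ) := by exact_mod_cast Nat.mul_pos hm hq
  have hs : 0 < √((m * q : ℕ) : ℝ) := Real.sqrt_pos.2 hmq
  set κ : ℝ := q * M / (√(n : ℝ) * √((m * q : ℕ) : ℝ)) with hκ
  have hκ0 : 0 < κ := by positivity
  have hκj : ∀ j, |q * (muHatD n ω j - μ j) / √((m * q : ℕ) : ℝ)| ≤ κ := by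
    intro j
    have : q * (muHatD n ω j - μ j) / √((m * q : ℕ) : ℝ) =
        q * Tcent n p μ ω j / (√(n : ℝ) * √((m * q : ℕ) : ℝ)) := by
      unfold Tcent; field_simp
    rw [this, abs_div, abs_mul, abs_of_pos hq', abs_of_pos (mul_pos hsn hs), hκ]
    gcongr
    exact hT j
  have htail := gaussPi_sum_tail hm (u := δ / κ) (by positivity)
  have hz : 4 * (m : ℝ) / (δ / κ) ^ 2 = 4 * (q * M ^ 2 / (n * δ ^ 2)) := by
    have h1 : √(n : ℝ) ^ 2 = n := Real.sq_sqrt hn'.le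
    have h2 : √((m * q : ℕ) : ℝ) ^ 2 = m * q := by rw [Real.sq_sqrt hmq.le]; push_cast; ring
    rw [hκ, div_pow, div_pow, mul_pow, mul_pow, h1, h2]
    field_simp
  rw [hz] at htail
  have hle : ∀ e, WBMB n p q r ω e ≤ t ↔ ∀ j, ∑ l, e l * bigBlk n p q r μ l ω j -
      q * (muHatD n ω j - μ j) / √((m * q : ℕ) : ℝ) * ∑ l, e l ≤ t := by
    intro e
    unfold WBMB
    rw [ciSup_le_iff (Set.finite_range _).bddAbove]
    exact forall_congr' fun j => by rw [WBMB_coord (μ := μ)]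
  have hclose : ∀ e : Fin m → ℝ, ¬ δ / κ ≤ |∑ l, e l| → ∀ j,
      |q * (muHatD n ω j - μ j) / √((m * q : ℕ) : ℝ) * ∑ l, e l| ≤ δ := by
    intro e he j
    push Not at he
    rw [abs_mul]
    calc _ ≤ κ * (δ / κ) := mul_le_mul (hκj j) he.le (abs_nonneg _) hκ0.le
      _ = δ := by field_simp
  constructor
  · have hsub : {e : Fin m → ℝ | ∀ j, ∑ l, e l * bigBlk n p q r μ l ω j ≤ t - δ} ⊆
        {e | WBMB n p q r ω e ≤ t} ∪ {e | δ / κ ≤ |∑ l, e l|} := by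
      intro e he
      by_cases h : δ / κ ≤ |∑ l, e l|
      · exact Or.inr h
      · refine Or.inl ((hle e).2 fun j => ?_)
        have h1 := (abs_le.1 (hclose e h j)).1
        have h2 := he j
        linarith
    have := (measureReal_mono (μ := gaussPi m) hsub (measure_ne_top _ _)).trans
      (measureReal_union_le _ _)
    unfold condCdf
    linarith
  · have hsub : {e : Fin m → ℝ | WBMB n p q r ω e ≤ t} ⊆
        {e | ∀ j, ∑ l, e l * bigBlk n p q r μ l ω j ≤ t + δ} ∪ {e | δ / κ ≤ |∑ l, e l|} := by
      intro e he
      by_cases h : δ / κ ≤ |∑ l, e l|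
      · exact Or.inr h
      · refine Or.inl fun j => ?_
        have h1 := (abs_le.1 (hclose e h j)).2
        have h2 := (hle e).1 he j
        linarith
    have := (measureReal_mono (μ := gaussPi m) hsub (measure_ne_top _ _)).trans
      (measureReal_union_le _ _)
    unfold condCdf
    linarith
end

/-! ### Assembling the approximations for given parameters -/

/-- The conditions on the tuning parameters under which the data satisfy `CoreHyp` with error `ε`:
`β` is the smoothing parameter (`δ = L / β`), `u₁`, `u₂` bound the sums over large and small blocks,
`lam₁`, `lam₂` are the corresponding exponential tilts and `H` truncates Gaussian maxima. -/
structure ParamHyp (n p q r : ℕ) (bm D c₁ C₁ L β u₁ u₂ lam₁ lam₂ H ε : ℝ) : Prop where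
  hr : 1 ≤ r
  hq : 5 * r ≤ q
  hm : 0 < nBlocks n q r
  hD : 0 < D
  hc₁ : 0 < c₁
  hcC : c₁ ≤ C₁
  hL : 1 ≤ L
  hp : Real.log (2 * p) ≤ L
  hβ : 0 < β
  hβb : β * (q * D / √((nBlocks n q r * q : ℕ) : ℝ)) ≤ 1
  hu₁ : 0 < u₁
  hl₁ : 0 ≤ lam₁
  hl₂ : 0 ≤ lam₂
  hlb₁ : lam₁ * (q * D / √((nBlocks n q r * q : ℕ) : ℝ)) ≤ 1
  hlb₂ : lam₂ * (r * D / √(n : ℝ)) ≤ 1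
  hH : 0 ≤ H
  hε : 0 < ε
  approx : (1 - √((nBlocks n q r * q : ℕ) : ℝ) / √(n : ℝ)) * u₁ + u₂ + (q + r) * D / √(n : ℝ) ≤ L / β
  recentre : 4 * (q * (u₁ + L / β) ^ 2 / (n * (L / β) ^ 2)) ≤ ε
  tails : 2 * p * Real.exp (nBlocks n q r * (lam₁ ^ 2 * (C₁ * q / ((nBlocks n q r * q : ℕ) : ℝ))) -
      lam₁ * u₁) + 2 * p * Real.exp (nBlocks n q r * (lam₂ ^ 2 * (C₁ * r / n)) - lam₂ * u₂) +
      4 * (nBlocks n q r * bm) ≤ ε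
  conc : (2 * acErr (nBlocks n q r) p (q * D / √((nBlocks n q r * q : ℕ) : ℝ))
      (C₁ * q / ((nBlocks n q r * q : ℕ) : ℝ)) (c₁ * q / ((nBlocks n q r * q : ℕ) : ℝ)) H
      (2 * (L / β)) + lindErr (nBlocks n q r) L β (q * D / √((nBlocks n q r * q : ℕ) : ℝ))
      (C₁ * q / ((nBlocks n q r * q : ℕ) : ℝ))
      (q * (43 * (D * (C₁ * r)) + 8 * (4 * bm * (q ^ 2 * D ^ 3))) /
        √((nBlocks n q r * q : ℕ) : ℝ) ^ 3)) / ε ^ 2 ≤ ε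
  hε1 : ε ≤ 1

section
variable {n p q r : ℕ} {μ : Fin p → ℝ} {Pm : Measure (Fin n → Fin p → ℝ)} [IsProbabilityMeasure Pm]
  {D c₁ C₁ L β u₁ u₂ lam₁ lam₂ H ε : ℝ}

lemma acErr_mono {m : ℕ} {b v lo H δ δ' : ℝ} (hH : 0 ≤ H) (h : δ ≤ δ') :
    acErr m p b v lo H δ ≤ acErr m p b v lo H δ' := by
  unfold acErr
  gcongr

lemma core_of_data [NeZero p] (h : DataHyp n p q r Pm μ D c₁ C₁)
    (K : ParamHyp n p q r (bmix n p Pm r) D c₁ C₁ L β u₁ u₂ lam₁ lam₂ H ε) :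
    CoreHyp Pm (fun l => Pm.map (bigBlk n p q r μ l)) (fun ω l => bigBlk n p q r μ l ω)
      (Tcent n p μ) (fun ω t => (gaussPi (nBlocks n q r)).real {e | WBMB n p q r ω e ≤ t})
      (L / β) ε := by
  have hr := K.hr
  have hq5 := K.hq
  have hm := K.hm
  have hc₁ := K.hc₁
  have hC : 0 < C₁ := K.hc₁.trans_le K.hcC
  have hq0 : 0 < q := by omega
  have hn : 0 < n := by
    rcases Nat.eq_zero_or_pos n with h0 | h0
    · have : nBlocks n q r = 0 := by rw [h0]; exact Nat.zero_div _
      omega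
    · exact h0
  have hn' : (0 : ℝ) < n := by exact_mod_cast hn
  have hq' : (0 : ℝ) < q := by exact_mod_cast hq0
  have hD := K.hD
  have hsn : 0 < √(n : ℝ) := Real.sqrt_pos.2 hn'
  have hmq : (0 : ℝ) < ((nBlocks n q r * q : ℕ) : ℝ) := by exact_mod_cast Nat.mul_pos hm hq0
  have hs : 0 < √((nBlocks n q r * q : ℕ) : ℝ) := Real.sqrt_pos.2 hmq
  have hδ : 0 < L / β := div_pos (by linarith [K.hL]) K.hβ
  have hε := K.hε
  have hbm := bmix_nonneg (Pm := Pm) (r := r)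
  have hmb : 0 ≤ nBlocks n q r * bmix n p Pm r := by positivity
  have pP : ∀ l, IsProbabilityMeasure (Pm.map (bigBlk n p q r μ l)) := fun l =>
    Measure.isProbabilityMeasure_map (measurable_bigBlk l).aemeasurable
  have hlaw := fun l => h.bigBlk_law hC.le hr hq5 l
  have Hy : LindHyp (fun l => Pm.map (bigBlk n p q r μ l)) _ _ _ _ β L :=
    ⟨hlaw, K.hL, K.hp, K.hβ, by positivity, by positivity, by positivity, K.hβb⟩
  have hb : 0 < q * D / √((nBlocks n q r * q : ℕ) : ℝ) := by positivity
  have hlo : 0 < c₁ * q / ((nBlocks n q r * q : ℕ) : ℝ) := by positivity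
  have hlv : c₁ * q / ((nBlocks n q r * q : ℕ) : ℝ) ≤ C₁ * q / ((nBlocks n q r * q : ℕ) : ℝ) := by
    have := K.hcC
    gcongr
  have hconc := K.conc
  set ac := acErr (nBlocks n q r) p (q * D / √((nBlocks n q r * q : ℕ) : ℝ))
      (C₁ * q / ((nBlocks n q r * q : ℕ) : ℝ)) (c₁ * q / ((nBlocks n q r * q : ℕ) : ℝ)) H
      (2 * (L / β)) with hac
  set le := lindErr (nBlocks n q r) L β (q * D / √((nBlocks n q r * q : ℕ) : ℝ))
      (C₁ * q / ((nBlocks n q r * q : ℕ) : ℝ))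
      (q * (43 * (D * (C₁ * r)) + 8 * (4 * bmix n p Pm r * (q ^ 2 * D ^ 3))) /
        √((nBlocks n q r * q : ℕ) : ℝ) ^ 3) with hle
  have hac0 : 0 ≤ ac := acErr_nonneg K.hH (by positivity)
  have hle0 : 0 ≤ le := by
    rw [hle, lindErr]
    have := K0_pos
    have := K.hL
    have := K.hβ
    positivity
  -- since `ε ≤ 1`, the concentration condition bounds the individual errors
  have hsum : 2 * ac + le ≤ ε := by
    have h1 : 2 * ac + le ≤ ε * ε ^ 2 := by
      rwa [div_le_iff₀ (by positivity)] at hconc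
    have h2 : ε * ε ^ 2 ≤ ε * 1 := by
      have := K.hε1
      gcongr
      exact pow_le_one₀ hε.le this
    linarith
  refine ⟨hδ, ?_, fun A hA => ?_, fun t => ?_, fun t => ?_, fun t => ?_, fun t => ?_, ?_, ?_, ?_⟩
  · -- off the tail events, all approximations hold
    have t1 := h.bigBlk_tail hC.le hr hq5 K.hl₁ K.hlb₁ (u := u₁)
    have t2 := h.smallBlk_tail hr (by omega) K.hl₂ K.hlb₂ (u := u₂)
    have hnull : Pm.real {ω | ¬ ∀ i j, |ω i j - μ j| ≤ D} = 0 := by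
      rw [measureReal_def, ENNReal.toReal_eq_zero_iff]; left; exact h.bdd
    have hsub : {ω | ¬ ((∀ j, |Tcent n p μ ω j - ∑ l, bigBlk n p q r μ l ω j| ≤ L / β) ∧
        ∀ t, condCdf (t - L / β) (fun l => bigBlk n p q r μ l ω) - ε ≤
          (gaussPi (nBlocks n q r)).real {e | WBMB n p q r ω e ≤ t} ∧
          (gaussPi (nBlocks n q r)).real {e | WBMB n p q r ω e ≤ t} ≤
          condCdf (t + L / β) (fun l => bigBlk n p q r μ l ω) + ε)} ⊆
        ({ω | ∃ j, u₁ ≤ |∑ l, bigBlk n p q r μ l ω j|} ∪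
          {ω | ∃ j, u₂ ≤ |∑ l, smallBlk n p q r μ l ω j|}) ∪
          {ω | ¬ ∀ i j, |ω i j - μ j| ≤ D} := by
      intro ω hω
      by_contra hc
      simp only [Set.mem_union, Set.mem_ofPred_eq, not_or, not_exists, not_le, not_not] at hc
      obtain ⟨⟨hc1, hc2⟩, hc3⟩ := hc
      have hTW : ∀ j, |Tcent n p μ ω j - ∑ l, bigBlk n p q r μ l ω j| ≤ L / β := by
        intro j
        have hrem : |cSum n p μ (nBlocks n q r * (q + r)) n j ω / √(n : ℝ)| ≤
            (q + r) * D / √(n : ℝ) := by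
          rw [abs_div, abs_of_pos hsn]
          refine div_le_div_of_nonneg_right ((cSum_abs_le (fun i => hc3 i j) h.hD).trans ?_) hsn.le
          refine mul_le_mul_of_nonneg_right ?_ h.hD
          have h1 : n < (q + r) * (n / (q + r) + 1) := Nat.lt_mul_div_succ n (by omega)
          have h2 : n - nBlocks n q r * (q + r) ≤ q + r := by
            unfold nBlocks
            rw [mul_add, mul_one, mul_comm] at h1
            omega
          exact_mod_cast h2
        have hrat : √((nBlocks n q r * q : ℕ) : ℝ) / √(n : ℝ) ≤ 1 := by
          rw [div_le_one hsn]
          refine Real.sqrt_le_sqrt ?_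
          have h1 : nBlocks n q r * (q + r) ≤ n := Nat.div_mul_le_self _ _
          have h2 : nBlocks n q r * q ≤ n := le_trans (Nat.mul_le_mul_left _ (by omega)) h1
          exact_mod_cast h2
        rw [Tcent_decomp (r := r) hn hq0 hm]
        refine le_trans ?_ K.approx
        have h1 := hc1 j
        have h2 := hc2 j
        set w := ∑ l, bigBlk n p q r μ l ω j
        set s := ∑ l, smallBlk n p q r μ l ω j
        set ρ := √((nBlocks n q r * q : ℕ) : ℝ) / √(n : ℝ)
        set z := cSum n p μ (nBlocks n q r * (q + r)) n j ω / √(n : ℝ)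
        have e : ρ * w + s + z - w = -((1 - ρ) * w) + s + z := by ring
        rw [e]
        have h3 : |-((1 - ρ) * w)| ≤ (1 - ρ) * u₁ := by
          rw [abs_neg, abs_mul, abs_of_nonneg (by linarith)]
          exact mul_le_mul_of_nonneg_left h1.le (by linarith)
        have h4 := abs_add_le (-((1 - ρ) * w) + s) z
        have h5 := abs_add_le (-((1 - ρ) * w)) s
        linarith
      have hT : ∀ j, |Tcent n p μ ω j| ≤ u₁ + L / β := fun j => by
        have h1 := abs_add_le (∑ l, bigBlk n p q r μ l ω j)
          (Tcent n p μ ω j - ∑ l, bigBlk n p q r μ l ω j)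
        rw [add_sub_cancel] at h1
        linarith [hTW j, hc1 j]
      refine hω ⟨hTW, fun t => ?_⟩
      have hsw := boot_sandwich (r := r) hn hq0 hm (by linarith [K.hu₁]) hδ hT t
      have := K.recentre
      exact ⟨by linarith [hsw.1], by linarith [hsw.2]⟩
    have h1 := (measureReal_mono (μ := Pm) hsub (measure_ne_top _ _)).trans
      ((measureReal_union_le _ _).trans (add_le_add_left (measureReal_union_le _ _) _))
    have h2 := K.tails
    refine h1.trans ?_
    rw [hnull]
    linarith
  · have h1 := bigBlk_coupling (Pm := Pm) (μ := μ) hr A hA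
    refine h1.trans ?_
    have h2 := K.tails
    have e1 : 0 ≤ 2 * (p : ℝ) * Real.exp (nBlocks n q r * (lam₁ ^ 2 *
      (C₁ * q / ((nBlocks n q r * q : ℕ) : ℝ))) - lam₁ * u₁) := by positivity
    have e2 : 0 ≤ 2 * (p : ℝ) * Real.exp (nBlocks n q r * (lam₂ ^ 2 * (C₁ * r / n)) - lam₂ * u₂) := by
      positivity
    linarith
  · exact (condCdf_concentration Hy hm hb hlo hlv K.hH hε t).trans hconc
  · have := sum_le_meanCdf Hy t
    linarith
  · have := meanCdf_le_sum Hy t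
    linarith
  · have h1 := meanCdf_add_le hlaw hm hb (hlo.trans_le hlv) hlo hlv K.hH hδ t
    have h2 : acErr (nBlocks n q r) p (q * D / √((nBlocks n q r * q : ℕ) : ℝ))
      (C₁ * q / ((nBlocks n q r * q : ℕ) : ℝ)) (c₁ * q / ((nBlocks n q r * q : ℕ) : ℝ)) H
      (L / β) ≤ ac := acErr_mono K.hH (by linarith)
    linarith
  · exact fun ω s t hst => measureReal_mono fun e he => le_trans he hst
  · exact fun ω => (cdf_facts (measurable_WBMB ω)).1
  · exact fun ω => (cdf_facts (measurable_WBMB ω)).2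

/-- Size of the bootstrap test under the parameter conditions. -/
lemma size_of_param [NeZero p] (h : DataHyp n p q r Pm μ D c₁ C₁)
    (K : ParamHyp n p q r (bmix n p Pm r) D c₁ C₁ L β u₁ u₂ lam₁ lam₂ H ε) {α : ℝ} (h0 : 0 < α)
    (h1 : α < 1) :
    ((∀ j, μ j ≤ 0) → (Pm {ω | cBMB n p q r α ω < TcheckD n p ω}).toReal ≤ α + 20 * ε) ∧
    ((∀ j, μ j = 0) → |(Pm {ω | cBMB n p q r α ω < TcheckD n p ω}).toReal - α| ≤ 20 * ε) := by
  have pP : ∀ l, IsProbabilityMeasure (Pm.map (bigBlk n p q r μ l)) := fun l =>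
    Measure.isProbabilityMeasure_map (measurable_bigBlk l).aemeasurable
  have hcore := core_of_data h K
  have hup := hcore.upper h0
  have hlow := hcore.lower h1
  have hlt : ∀ ω c, c < TcheckD n p ω ↔ ∃ j, c < √(n : ℝ) * muHatD n ω j := fun ω c =>
    lt_ciSup_iff (Set.finite_range _).bddAbove
  have key : (∀ j, μ j ≤ 0) →
      (Pm {ω | cBMB n p q r α ω < TcheckD n p ω}).toReal ≤ α + 20 * ε := by
    intro hμ
    refine le_trans (measureReal_mono (μ := Pm) ?_ (measure_ne_top _ _)) hup
    intro ω hω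
    obtain ⟨j, hj⟩ := (hlt ω _).1 hω
    refine ⟨j, lt_of_lt_of_le hj ?_⟩
    exact mul_le_mul_of_nonneg_left (by linarith [hμ j]) (Real.sqrt_nonneg _)
  refine ⟨key, fun hμ => ?_⟩
  have k1 := key fun j => (hμ j).le
  have k2 : α - 20 * ε ≤ (Pm {ω | cBMB n p q r α ω < TcheckD n p ω}).toReal := by
    refine le_trans hlow (measureReal_mono (μ := Pm) ?_ (measure_ne_top _ _))
    rintro ω ⟨j, hj⟩
    refine (hlt ω _).2 ⟨j, ?_⟩
    rw [Tcent, hμ j, sub_zero] at hj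
    exact hj
  exact abs_le.2 ⟨by linarith, by linarith⟩
end

end

section

/-! ### Choice of the parameters -/

/-- The quantitative content of the growth conditions, free of constants. Here `N` is the sample
size, `s = √N`, `S = √(m q)`, `ℓ = √(log (p N))`, and `y` is a small power of `N` which dominates
all constants; the fields `bias`, `ratio` and `mix` are the three growth conditions expressed
through `y`. -/
structure NumHyp (m p q r N s S ℓ y D bm c₁ C₁ : ℝ) : Prop where
  hm : 0 < m
  hp : 0 < p
  hr : 0 < r
  hrq : r ≤ q
  hs : 1 ≤ s
  hN : N = s ^ 2
  hS : 0 < S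
  hS2 : S ^ 2 = m * q
  hmN : m * q ≤ N
  hNm : N ≤ 3 * (m * q)
  gap : N - m * q ≤ m * r + 2 * q
  hy : 100 ≤ y
  hyN : y ^ 6 ≤ N
  hℓ : 1 ≤ ℓ
  hD : 1 ≤ D
  hbm : 0 ≤ bm
  hc₁ : 1 ≤ c₁ * y
  hcC : c₁ ≤ C₁
  hC₁ : C₁ + 2 ≤ y ^ 6
  hK0 : K0 ≤ y ^ 6
  hcE : 48 * cExp ^ 2 ≤ y ^ 6
  bias : q * D * ℓ ^ 5 * (y ^ 6) ^ 9 ≤ s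
  ratio : r * ℓ ^ 4 * (y ^ 6) ^ 7 ≤ q
  mix : m * bm * (y ^ 6) ^ 9 ≤ 1
  hexp : p * Real.exp (-ℓ ^ 2) ≤ 1 / N

namespace NumHyp
variable {m p q r N s S ℓ y D bm c₁ C₁ : ℝ}

lemma hx (h : NumHyp m p q r N s S ℓ y D bm c₁ C₁) : 100 ≤ y ^ 6 :=
  h.hy.trans (le_self_pow₀ (by linarith [h.hy]) (by norm_num))

lemma hx5 (h : NumHyp m p q r N s S ℓ y D bm c₁ C₁) : 100 * y ^ 5 ≤ y ^ 6 := by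
  have := h.hy
  have h5 : (0:ℝ) ≤ y ^ 5 := by positivity
  nlinarith

lemma hqpos (h : NumHyp m p q r N s S ℓ y D bm c₁ C₁) : 0 < q := h.hr.trans_le h.hrq

lemma hNpos (h : NumHyp m p q r N s S ℓ y D bm c₁ C₁) : 1 ≤ N := by
  rw [h.hN]; exact one_le_pow₀ h.hs

lemma hsN (h : NumHyp m p q r N s S ℓ y D bm c₁ C₁) : s ≤ N := by
  rw [h.hN]; exact le_self_pow₀ h.hs (by norm_num)

lemma hSs (h : NumHyp m p q r N s S ℓ y D bm c₁ C₁) : s ≤ 2 * S := by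
  have := h.hS; have := h.hs; have := h.hN; have := h.hNm; have := h.hS2
  exact abs_le_of_sq_le_sq' (by nlinarith) (by positivity) |>.2

lemma hSs' (h : NumHyp m p q r N s S ℓ y D bm c₁ C₁) : S ≤ s := by
  have := h.hS; have := h.hs; have := h.hN; have := h.hmN; have := h.hS2
  exact abs_le_of_sq_le_sq' (by nlinarith) (by positivity) |>.2

lemma le_of_mul_pow {a x : ℝ} (hx : 100 ≤ x) (k : ℕ) (h : a * x ^ (k + 1) ≤ 2) : a * x ^ k ≤ 1 := by
  have hk : (0:ℝ) < x ^ k := by positivity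
  by_contra! hc
  rw [pow_succ, ← mul_assoc] at h
  nlinarith

lemma block_bound (h : NumHyp m p q r N s S ℓ y D bm c₁ C₁) :
    q * D / S * ℓ ^ 5 * (y ^ 6) ^ 8 ≤ 1 := by
  apply le_of_mul_pow h.hx
  have := h.hS
  have h1 : q * D / S * ℓ ^ 5 * (y ^ 6) ^ (8 + 1) = q * D * ℓ ^ 5 * (y ^ 6) ^ 9 / S := by ring
  rw [h1, div_le_iff₀ this]
  exact h.bias.trans h.hSs

lemma small_bound (h : NumHyp m p q r N s S ℓ y D bm c₁ C₁) :
    r * D / s * ℓ ^ 5 * (y ^ 6) ^ 8 ≤ 1 := by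
  apply le_of_mul_pow h.hx
  have := h.hs; have := h.hD; have := h.hℓ; have := h.hx
  have h1 : r * D / s * ℓ ^ 5 * (y ^ 6) ^ (8 + 1) = r * D * ℓ ^ 5 * (y ^ 6) ^ 9 / s := by ring
  rw [h1, div_le_iff₀ (by linarith)]
  calc r * D * ℓ ^ 5 * (y ^ 6) ^ 9 ≤ q * D * ℓ ^ 5 * (y ^ 6) ^ 9 := by
        gcongr; exact h.hrq
    _ ≤ s := h.bias
    _ ≤ 2 * s := by linarith

/-- Monomials with smaller exponents inherit a bound by `1`. -/
lemma mono_le_one {a ℓ x : ℝ} (ha : 0 ≤ a) (hl : 1 ≤ ℓ) (hx : 1 ≤ x) {i j k l : ℕ} (hi : i ≤ j)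
    (hk : k ≤ l) (h : a * ℓ ^ j * x ^ l ≤ 1) : a * ℓ ^ i * x ^ k ≤ 1 := by
  refine le_trans ?_ h
  gcongr

lemma beta_block (h : NumHyp m p q r N s S ℓ y D bm c₁ C₁) :
    ℓ ^ 3 * y ^ 6 * (q * D / S) ≤ 1 := by
  have := h.hS; have := h.hqpos; have := h.hD
  have h1 := mono_le_one (i := 3) (k := 1) (by positivity) h.hℓ (by linarith [h.hx]) (by norm_num)
    (by norm_num) h.block_bound
  linarith

lemma lam_block (h : NumHyp m p q r N s S ℓ y D bm c₁ C₁) :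
    ℓ * (q * D / S) ≤ 1 := by
  have := h.hS; have := h.hqpos; have := h.hD
  have h1 := mono_le_one (i := 1) (k := 0) (by positivity) h.hℓ (by linarith [h.hx]) (by norm_num)
    (by norm_num) h.block_bound
  linarith

lemma lam_small (h : NumHyp m p q r N s S ℓ y D bm c₁ C₁) :
    9 * ℓ ^ 3 * y ^ 6 * (r * D / s) ≤ 1 := by
  have := h.hs; have := h.hr; have := h.hD; have := h.hℓ; have hx := h.hx
  have h1 := mono_le_one (i := 3) (k := 2) (by positivity) h.hℓ (by linarith [h.hx]) (by norm_num)
    (by norm_num) h.small_bound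
  have h2 : 0 ≤ r * D / s * ℓ ^ 3 * y ^ 6 := by positivity
  nlinarith

lemma q_div_N (h : NumHyp m p q r N s S ℓ y D bm c₁ C₁) :
    q / N * ℓ ^ 5 * (y ^ 6) ^ 9 ≤ 1 := by
  have hN := h.hNpos; have := h.hqpos; have hD := h.hD; have := h.hℓ; have hx := h.hx
  have h1 : q / N * ℓ ^ 5 * (y ^ 6) ^ 9 = q * 1 * ℓ ^ 5 * (y ^ 6) ^ 9 / N := by ring
  rw [h1, div_le_one (by linarith)]
  refine le_trans ?_ (h.bias.trans h.hsN)
  gcongr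

lemma r_div_q (h : NumHyp m p q r N s S ℓ y D bm c₁ C₁) :
    r / q * ℓ ^ 4 * (y ^ 6) ^ 7 ≤ 1 := by
  have := h.hqpos
  have h1 : r / q * ℓ ^ 4 * (y ^ 6) ^ 7 = r * ℓ ^ 4 * (y ^ 6) ^ 7 / q := by ring
  rw [h1, div_le_one (by linarith)]
  exact h.ratio

lemma delta_eq (h : NumHyp m p q r N s S ℓ y D bm c₁ C₁) :
    ℓ ^ 2 / (ℓ ^ 3 * y ^ 6) = 1 / (ℓ * y ^ 6) := by
  have := h.hℓ; have := h.hx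
  have : ℓ ≠ 0 := by linarith
  have : y ^ 6 ≠ 0 := by linarith
  field_simp

lemma ratio_sqrt (h : NumHyp m p q r N s S ℓ y D bm c₁ C₁) :
    1 - S / s ≤ r / q + 2 * (q / N) := by
  have hs := h.hs; have hq := h.hqpos; have hN := h.hNpos; have hS := h.hS; have hm := h.hm
  have hr := h.hr
  have h0 : S / s ≤ 1 := (div_le_one (by linarith)).2 h.hSs'
  have h1 : (S / s) ^ 2 ≤ S / s := by
    have : 0 ≤ S / s := by positivity
    nlinarith
  have h2 : (S / s) ^ 2 = m * q / N := by rw [div_pow, h.hS2, ← h.hN]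
  have h3 : 1 - m * q / N = (N - m * q) / N := by field_simp
  have h4 : (N - m * q) / N ≤ (m * r + 2 * q) / N := by
    gcongr; exact h.gap
  have h5 : m * r / N ≤ r / q := by
    rw [div_le_div_iff₀ (by linarith) hq]
    nlinarith [h.hmN]
  have h6 : (m * r + 2 * q) / N = m * r / N + 2 * (q / N) := by ring
  linarith

lemma approx (h : NumHyp m p q r N s S ℓ y D bm c₁ C₁) :
    (1 - S / s) * (ℓ * y ^ 6) + 1 / (3 * (ℓ * y ^ 6)) + (q + r) * D / s ≤
      ℓ ^ 2 / (ℓ ^ 3 * y ^ 6) := by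
  rw [h.delta_eq]
  have hs := h.hs; have hq := h.hqpos; have hN := h.hNpos; have hr := h.hr; have hD := h.hD
  have hℓ := h.hℓ; have hx := h.hx
  have h1 := mono_le_one (i := 2) (k := 3) (by positivity) h.hℓ (by linarith [h.hx]) (by norm_num)
    (by norm_num) h.r_div_q
  have h2 := mono_le_one (i := 2) (k := 3) (by positivity) h.hℓ (by linarith [h.hx]) (by norm_num)
    (by norm_num) h.q_div_N
  have h3 : (q + r) * D / s * ℓ ^ 1 * (y ^ 6) ^ 2 ≤ 2 := by
    have e : (q + r) * D / s * ℓ ^ 1 * (y ^ 6) ^ 2 = (q + r) * D * ℓ ^ 1 * (y ^ 6) ^ 2 / s := by ring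
    rw [e, div_le_iff₀ (by linarith)]
    calc (q + r) * D * ℓ ^ 1 * (y ^ 6) ^ 2 ≤ (q + q) * D * ℓ ^ 5 * (y ^ 6) ^ 9 := by
          gcongr
          · exact h.hrq
          · norm_num
          · linarith
          · norm_num
      _ ≤ 2 * s := by nlinarith [h.bias]
  set x := y ^ 6
  have hx0 : 0 < x := by linarith
  have hℓ0 : 0 < ℓ := by linarith
  rw [le_div_iff₀ (by positivity)]
  have e1 : 1 / (3 * (ℓ * x)) * (ℓ * x) = 1 / 3 := by field_simp
  have h4 := h.ratio_sqrt
  have h5 : (1 - S / s) * (ℓ ^ 2 * x ^ 2) ≤ (r / q + 2 * (q / N)) * (ℓ ^ 2 * x ^ 2) := by gcongr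
  have h6 : (r / q + 2 * (q / N)) * (ℓ ^ 2 * x ^ 2) ≤ 3 / 100 := by
    have a1 : r / q * ℓ ^ 2 * x ^ 2 * 100 ≤ r / q * ℓ ^ 2 * x ^ 2 * x := by gcongr
    have a2 : q / N * ℓ ^ 2 * x ^ 2 * 100 ≤ q / N * ℓ ^ 2 * x ^ 2 * x := by gcongr
    nlinarith
  have h7 : (q + r) * D / s * ℓ * x * 100 ≤ (q + r) * D / s * ℓ * x * x := by gcongr
  nlinarith

lemma recentre (h : NumHyp m p q r N s S ℓ y D bm c₁ C₁) :
    4 * (q * (ℓ * y ^ 6 + ℓ ^ 2 / (ℓ ^ 3 * y ^ 6)) ^ 2 / (N * (ℓ ^ 2 / (ℓ ^ 3 * y ^ 6)) ^ 2))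
      ≤ 1 / y := by
  rw [h.delta_eq]
  have hs := h.hs; have hq := h.hqpos; have hN := h.hNpos
  have hℓ := h.hℓ; have hx := h.hx; have hy := h.hy
  have h2 := mono_le_one (i := 4) (k := 6) (by positivity) h.hℓ (by linarith [h.hx]) (by norm_num)
    (by norm_num) h.q_div_N
  have hyx : y ≤ y ^ 6 := le_self_pow₀ (by linarith) (by norm_num)
  have hxy : 1 / y ^ 6 ≤ 1 / y := by gcongr
  refine le_trans ?_ hxy
  set x := y ^ 6
  have hx0 : 0 < x := by linarith
  have hℓ0 : 0 < ℓ := by linarith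
  have e : 4 * (q * (ℓ * x + 1 / (ℓ * x)) ^ 2 / (N * (1 / (ℓ * x)) ^ 2)) =
      4 * (q / N) * (ℓ ^ 2 * x ^ 2 + 1) ^ 2 := by field_simp
  rw [e, le_div_iff₀ hx0]
  have h1 : ℓ ^ 2 * x ^ 2 + 1 ≤ 2 * (ℓ ^ 2 * x ^ 2) := by
    have : 1 ≤ ℓ ^ 2 * x ^ 2 := one_le_mul_of_one_le_of_one_le (one_le_pow₀ hℓ)
      (one_le_pow₀ (by linarith))
    linarith
  calc 4 * (q / N) * (ℓ ^ 2 * x ^ 2 + 1) ^ 2 * x ≤ 4 * (q / N) * (2 * (ℓ ^ 2 * x ^ 2)) ^ 2 * x := by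
        gcongr
    _ = 16 * (q / N * ℓ ^ 4 * x ^ 5) := by ring
    _ ≤ x * (q / N * ℓ ^ 4 * x ^ 5) := by gcongr; linarith
    _ = q / N * ℓ ^ 4 * x ^ 6 := by ring
    _ ≤ 1 := h2

lemma exp_bound (h : NumHyp m p q r N s S ℓ y D bm c₁ C₁) {a : ℝ} (ha : a ≤ -(2 * ℓ ^ 2)) :
    p * Real.exp a ≤ 1 / y ^ 6 := by
  have hx := h.hx
  calc p * Real.exp a ≤ p * Real.exp (-ℓ ^ 2) := by
        have := h.hp
        gcongr
        nlinarith [sq_nonneg ℓ]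
    _ ≤ 1 / N := h.hexp
    _ ≤ 1 / y ^ 6 := by gcongr; exact h.hyN

lemma tails (h : NumHyp m p q r N s S ℓ y D bm c₁ C₁) :
    2 * p * Real.exp (m * (ℓ ^ 2 * (C₁ * q / (m * q))) - ℓ * (ℓ * y ^ 6)) +
      2 * p * Real.exp (m * ((9 * ℓ ^ 3 * y ^ 6) ^ 2 * (C₁ * r / N)) -
        9 * ℓ ^ 3 * y ^ 6 * (1 / (3 * (ℓ * y ^ 6)))) + 4 * (m * bm) ≤ 1 / y := by
  have hq := h.hqpos; have hN := h.hNpos; have hm := h.hm; have hr := h.hr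
  have hℓ := h.hℓ; have hx := h.hx; have hy := h.hy; have hbm := h.hbm
  have hC := h.hC₁
  have hC0 : 0 < C₁ := by
    have h1 := h.hc₁; have h2 := h.hcC
    by_contra! hc
    nlinarith
  have t1 : p * Real.exp (m * (ℓ ^ 2 * (C₁ * q / (m * q))) - ℓ * (ℓ * y ^ 6)) ≤ 1 / y ^ 6 := by
    apply h.exp_bound
    have e : m * (ℓ ^ 2 * (C₁ * q / (m * q))) = ℓ ^ 2 * C₁ := by field_simp
    rw [e]
    nlinarith [sq_nonneg ℓ]
  have t2 : p * Real.exp (m * ((9 * ℓ ^ 3 * y ^ 6) ^ 2 * (C₁ * r / N)) -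
        9 * ℓ ^ 3 * y ^ 6 * (1 / (3 * (ℓ * y ^ 6)))) ≤ 1 / y ^ 6 := by
    apply h.exp_bound
    have e : 9 * ℓ ^ 3 * y ^ 6 * (1 / (3 * (ℓ * y ^ 6))) = 3 * ℓ ^ 2 := by
      have : ℓ ≠ 0 := by linarith
      have : y ≠ 0 := by linarith
      field_simp; norm_num
    rw [e]
    have h5 : m * r / N ≤ r / q := by
      rw [div_le_div_iff₀ (by linarith) hq]
      nlinarith [h.hmN]
    have hk := mono_le_one (i := 4) (k := 4) (by positivity) h.hℓ (by linarith [h.hx]) (by norm_num)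
      (by norm_num) h.r_div_q
    set x := y ^ 6
    have : m * ((9 * ℓ ^ 3 * x) ^ 2 * (C₁ * r / N)) ≤ ℓ ^ 2 := by
      calc m * ((9 * ℓ ^ 3 * x) ^ 2 * (C₁ * r / N)) = 81 * C₁ * ℓ ^ 6 * x ^ 2 * (m * r / N) := by ring
        _ ≤ x * x * ℓ ^ 6 * x ^ 2 * (r / q) := by gcongr <;> linarith
        _ = ℓ ^ 2 * (r / q * ℓ ^ 4 * x ^ 4) := by ring
        _ ≤ ℓ ^ 2 * 1 := by gcongr
        _ = ℓ ^ 2 := mul_one _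
    linarith
  have t3 : m * bm ≤ 1 / y ^ 6 := by
    rw [le_div_iff₀ (by linarith)]
    refine le_trans ?_ h.mix
    gcongr
    exact le_self_pow₀ (by linarith) (by norm_num)
  have t4 : 8 * (1 / y ^ 6) ≤ 1 / y := by
    rw [mul_one_div, div_le_div_iff₀ (by linarith) (by linarith)]
    have h5 := h.hx5
    have : y ≤ y ^ 5 := le_self_pow₀ (by linarith) (by norm_num)
    linarith
  linarith

lemma lind (h : NumHyp m p q r N s S ℓ y D bm c₁ C₁) :
    100 * (K0 / ℓ ^ 2) * (m * ((ℓ ^ 3 * y ^ 6) ^ 3 *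
      (q * (43 * (D * (C₁ * r)) + 8 * (4 * bm * (q ^ 2 * D ^ 3))) / S ^ 3) +
      48 * cExp ^ 2 * ((ℓ ^ 3 * y ^ 6) ^ 4 * (q * D / S) ^ 2 * (C₁ * q / (m * q))))) ≤
      1 / y ^ 6 := by
  have hq := h.hqpos; have hN := h.hNpos; have hm := h.hm; have hr := h.hr; have hS := h.hS
  have hs := h.hs
  have hℓ := h.hℓ; have hx := h.hx; have hbm := h.hbm; have hD := h.hD
  have hC : C₁ ≤ y ^ 6 := by linarith [h.hC₁]
  have hC0 : 0 < C₁ := by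
    have h1 := h.hc₁; have h2 := h.hcC; have := h.hy
    by_contra! hc
    nlinarith
  have hK := h.hK0; have hK' := K0_pos; have hcE := h.hcE
  have hb := h.block_bound
  have hsm := h.small_bound
  have hrq := h.r_div_q
  have hmix := h.mix
  have hbias := h.bias
  have hSs := h.hSs
  have hNm := h.hNm
  have hN' := h.hN
  set x := y ^ 6
  have hx0 : 0 < x := by linarith
  have hℓ0 : 0 < ℓ := by linarith
  have hS2 := h.hS2
  -- cancellation through `m q = S ^ 2` leaves one power of `1 / S` in the third moment term
  have e1 : 100 * (K0 / ℓ ^ 2) * (m * ((ℓ ^ 3 * x) ^ 3 *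
      (q * (43 * (D * (C₁ * r)) + 8 * (4 * bm * (q ^ 2 * D ^ 3))) / S ^ 3) +
      48 * cExp ^ 2 * ((ℓ ^ 3 * x) ^ 4 * (q * D / S) ^ 2 * (C₁ * q / (m * q))))) =
      100 * K0 * (43 * C₁ * x ^ 3 * (D * r * ℓ ^ 7 / S) + 32 * x ^ 3 * (bm * q ^ 2 * D ^ 3 * ℓ ^ 7 / S) +
        48 * cExp ^ 2 * C₁ * x ^ 4 * (q * D / S) ^ 2 * ℓ ^ 10) := by
    have e : m * (q / S ^ 3) = 1 / S := by
      rw [← mul_div_assoc, ← hS2]; field_simp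
    have e' : m * (C₁ * q / (m * q)) = C₁ := by field_simp
    calc _ = 100 * (K0 / ℓ ^ 2) * ((ℓ ^ 3 * x) ^ 3 * (43 * (D * (C₁ * r)) +
          8 * (4 * bm * (q ^ 2 * D ^ 3))) * (m * (q / S ^ 3)) +
          48 * cExp ^ 2 * ((ℓ ^ 3 * x) ^ 4 * (q * D / S) ^ 2 * (m * (C₁ * q / (m * q))))) := by ring
      _ = _ := by rw [e, e']; field_simp; ring
  rw [e1]
  have a1 : D * r * ℓ ^ 7 / S * x ^ 15 ≤ 1 := by
    calc D * r * ℓ ^ 7 / S * x ^ 15 = (r / q * ℓ ^ 2 * x ^ 7) * (q * D / S * ℓ ^ 5 * x ^ 8) := by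
          field_simp
      _ ≤ 1 * 1 := by
          gcongr
          exact mono_le_one (by positivity) hℓ (by linarith) (by norm_num) le_rfl hrq
      _ = 1 := one_mul 1
  have a2 : bm * q ^ 2 * D ^ 3 * ℓ ^ 7 / S * x ^ 15 ≤ 1 := by
    calc bm * q ^ 2 * D ^ 3 * ℓ ^ 7 / S * x ^ 15
        = (m * bm * x ^ 7) * ((q * D / S) ^ 3 * ℓ ^ 7 * x ^ 8) := by
          have : m = S ^ 2 / q := by field_simp; linarith
          rw [this]; field_simp
      _ ≤ (m * bm * x ^ 9) * ((q * D / S) ^ 3 * ℓ ^ 15 * x ^ 24) := by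
          gcongr <;> linarith
      _ = (m * bm * x ^ 9) * (q * D / S * ℓ ^ 5 * x ^ 8) ^ 3 := by ring
      _ ≤ 1 * 1 ^ 3 := by gcongr
      _ = 1 := by norm_num
  have a3 : (q * D / S) ^ 2 * ℓ ^ 10 * x ^ 16 ≤ 1 := by
    calc (q * D / S) ^ 2 * ℓ ^ 10 * x ^ 16 = (q * D / S * ℓ ^ 5 * x ^ 8) ^ 2 := by ring
      _ ≤ 1 ^ 2 := by gcongr
      _ = 1 := by norm_num
  rw [le_div_iff₀ hx0]
  have b1 : D * r * ℓ ^ 7 / S ≤ 1 / x ^ 15 := by rwa [le_div_iff₀ (by positivity)]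
  have b2 : bm * q ^ 2 * D ^ 3 * ℓ ^ 7 / S ≤ 1 / x ^ 15 := by rwa [le_div_iff₀ (by positivity)]
  have b3 : (q * D / S) ^ 2 * ℓ ^ 10 ≤ 1 / x ^ 16 := by rwa [le_div_iff₀ (by positivity)]
  calc _ = 100 * K0 * (43 * C₁ * x ^ 3 * (D * r * ℓ ^ 7 / S) + 32 * x ^ 3 * (bm * q ^ 2 * D ^ 3 * ℓ ^ 7 / S) +
        48 * cExp ^ 2 * C₁ * x ^ 4 * ((q * D / S) ^ 2 * ℓ ^ 10)) * x := by ring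
    _ ≤ x * x * (x * x * x ^ 3 * (1 / x ^ 15) + x * x ^ 3 * (1 / x ^ 15) +
        x * x * x ^ 4 * (1 / x ^ 16)) * x := by
        gcongr <;> linarith
    _ = 1 / x ^ 7 + 1 / x ^ 8 + 1 / x ^ 7 := by field_simp
    _ ≤ 1 / x + 1 / x + 1 / x := by
        gcongr <;> exact le_self_pow₀ (by linarith) (by norm_num)
    _ ≤ 1 := by
        have : 1 / x ≤ 1 / 100 := by gcongr
        linarith

lemma anticonc (h : NumHyp m p q r N s S ℓ y D bm c₁ C₁) :
    5 * (2 * (ℓ ^ 2 / (ℓ ^ 3 * y ^ 6)) / √(m * (c₁ * q / (m * q)) / 2)) * (2 * ℓ + 1) +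
      p * Real.exp (-((2 * ℓ) ^ 2 / 2)) +
      p * Real.exp (-(m * (c₁ * q / (m * q)) ^ 2 / (16 * (q * D / S) ^ 2 * (C₁ * q / (m * q))))) ≤
      32 / y ^ 5 := by
  have hq := h.hqpos; have hN := h.hNpos; have hm := h.hm; have hS := h.hS
  have hℓ := h.hℓ; have hx := h.hx; have hD := h.hD; have hy := h.hy
  have hC : C₁ ≤ y ^ 6 := by linarith [h.hC₁]
  have hc0 : 0 < c₁ := by
    have h1 := h.hc₁
    by_contra! hc
    nlinarith
  have hC0 : 0 < C₁ := hc0.trans_le h.hcC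
  have hℓ0 : 0 < ℓ := by linarith
  have hy0 : 0 < y := by linarith
  have t1 : 5 * (2 * (ℓ ^ 2 / (ℓ ^ 3 * y ^ 6)) / √(m * (c₁ * q / (m * q)) / 2)) * (2 * ℓ + 1) ≤
      30 / y ^ 5 := by
    rw [h.delta_eq]
    have e : m * (c₁ * q / (m * q)) = c₁ := by field_simp
    have hsq : 1 / y ≤ √(c₁ / 2) := by
      apply Real.le_sqrt_of_sq_le
      have h1 := h.hc₁
      rw [div_pow, one_pow, div_le_div_iff₀ (by positivity) (by norm_num)]
      nlinarith
    rw [e]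
    calc 5 * (2 * (1 / (ℓ * y ^ 6)) / √(c₁ / 2)) * (2 * ℓ + 1) ≤
        5 * (2 * (1 / (ℓ * y ^ 6)) / (1 / y)) * (2 * ℓ + ℓ) := by gcongr
      _ = 30 / y ^ 5 := by field_simp; norm_num
  have t2 : p * Real.exp (-((2 * ℓ) ^ 2 / 2)) ≤ 1 / y ^ 6 := by
    apply h.exp_bound; nlinarith
  have t3 : p * Real.exp (-(m * (c₁ * q / (m * q)) ^ 2 /
      (16 * (q * D / S) ^ 2 * (C₁ * q / (m * q))))) ≤ 1 / y ^ 6 := by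
    apply h.exp_bound
    rw [neg_le_neg_iff]
    have e : m * (c₁ * q / (m * q)) ^ 2 / (16 * (q * D / S) ^ 2 * (C₁ * q / (m * q))) =
        c₁ ^ 2 / (16 * (q * D / S) ^ 2 * C₁) := by field_simp
    have hbb := mono_le_one (i := 1) (k := 2) (by positivity) h.hℓ (by linarith [h.hx]) (by norm_num)
      (by norm_num) h.block_bound
    rw [e, le_div_iff₀ (by positivity)]
    set x := y ^ 6
    have hyx : y ≤ x := le_self_pow₀ (by linarith) (by norm_num)
    have hcx : 1 ≤ c₁ * x := h.hc₁.trans (by gcongr)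
    have h2 : 1 ≤ c₁ ^ 2 * x ^ 2 := by
      rw [← mul_pow]; exact one_le_pow₀ hcx
    refine le_of_mul_le_mul_right (a := x ^ 2) ?_ (by positivity)
    refine le_trans ?_ h2
    calc 2 * ℓ ^ 2 * (16 * (q * D / S) ^ 2 * C₁) * x ^ 2 =
        32 * C₁ * ((q * D / S) ^ 2 * ℓ ^ 2 * x ^ 2) := by ring
      _ ≤ x * x * ((q * D / S) ^ 2 * ℓ ^ 2 * x ^ 2) := by gcongr; linarith
      _ = (q * D / S * ℓ ^ 1 * x ^ 2) ^ 2 := by ring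
      _ ≤ 1 ^ 2 := by gcongr
      _ = 1 := by norm_num
  have t4 : 1 / y ^ 6 ≤ 1 / y ^ 5 := by
    gcongr
    · linarith
    · norm_num
  have t5 : 32 / y ^ 5 = 30 / y ^ 5 + 1 / y ^ 5 + 1 / y ^ 5 := by ring
  linarith

end NumHyp

end

section

lemma paramHyp_of_num {n p q r : ℕ} {bm D c₁ C₁ ℓ y : ℝ} (hr : 1 ≤ r)
    (h : NumHyp (nBlocks n q r) p q r n (√(n : ℝ)) (√((nBlocks n q r * q : ℕ) : ℝ)) ℓ y D bm c₁ C₁)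
    (hp : Real.log (2 * p) ≤ ℓ ^ 2) :
    ParamHyp n p q r bm D c₁ C₁ (ℓ ^ 2) (ℓ ^ 3 * y ^ 6) (ℓ * y ^ 6) (1 / (3 * (ℓ * y ^ 6)))
      ℓ (9 * ℓ ^ 3 * y ^ 6) (2 * ℓ) (1 / y) := by
  have hℓ := h.hℓ
  have hy := h.hy
  have hx := h.hx
  have hD := h.hD
  have hc0 : 0 < c₁ := by
    have h1 := h.hc₁
    by_contra! hc
    nlinarith
  have hq : 5 * r ≤ q := by
    have h1 := h.ratio
    have h2 : (1:ℝ) ≤ ℓ ^ 4 := one_le_pow₀ hℓ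
    have h3 : y ^ 6 ≤ (y ^ 6) ^ 7 := le_self_pow₀ (by linarith) (by norm_num)
    have h4 : (5 : ℝ) * r ≤ q := by
      calc (5 : ℝ) * r = r * 1 * 5 := by ring
        _ ≤ r * ℓ ^ 4 * (y ^ 6) ^ 7 := by gcongr; linarith
        _ ≤ q := h1
    exact_mod_cast h4
  have hcast : ((nBlocks n q r * q : ℕ) : ℝ) = (nBlocks n q r : ℝ) * q := by push_cast; ring
  refine
    { hr := hr, hq := hq, hm := by exact_mod_cast h.hm, hD := by linarith, hc₁ := hc0, hcC := h.hcC,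
      hL := one_le_pow₀ hℓ, hp := hp, hβ := by positivity, hβb := h.beta_block, hu₁ := by positivity,
      hl₁ := by linarith, hl₂ := by positivity, hlb₁ := h.lam_block, hlb₂ := h.lam_small,
      hH := by linarith, hε := by positivity, approx := h.approx, recentre := h.recentre,
      tails := ?_, conc := ?_, hε1 := ?_ }
  · rw [hcast]; exact h.tails
  · have h1 := h.anticonc
    have h2 := h.lind
    rw [← hcast] at h1 h2
    unfold acErr lindErr
    rw [div_le_iff₀ (by positivity)]
    have h3 : 1 / y ^ 6 ≤ 1 / y ^ 5 := by
      gcongr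
      · linarith
      · norm_num
    have h4 : 65 / y ^ 5 ≤ 1 / y * (1 / y) ^ 2 := by
      have : 1 / y * (1 / y) ^ 2 = y ^ 2 / y ^ 5 := by field_simp
      rw [this]
      gcongr
      nlinarith
    have h5 : 65 / y ^ 5 = 2 * (32 / y ^ 5) + 1 / y ^ 5 := by ring
    linarith
  · rw [div_le_one (by linarith)]; linarith

/-- Lower bound on `y = n ^ (c₂ / 60)` which makes it dominate all the constants of the problem. -/
def yMin (c₁ C₁ c₂ : ℝ) : ℝ :=
  100 + 1 / c₁ + C₁ + 2 + K0 + 48 * cExp ^ 2 +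
    (2 * C₁ + 2 * C₁ / (Real.log 2 ^ 2 * (c₂ / 10) ^ 2))

set_option maxHeartbeats 1000000 in
lemma numHyp_of {n p q r : ℕ} {bm D c₁ C₁ c₂ : ℝ} (hc₁ : 0 < c₁) (hcC : c₁ ≤ C₁) (hc₂ : 0 < c₂)
    (hc₂' : c₂ < 1 / 4) (hp : 2 ≤ p) (hr : 1 ≤ r) (hrq : r < q) (hn : 2 * (q + r) ≤ n) (hD : 1 ≤ D)
    (hbm : 0 ≤ bm)
    (hmix : (nBlocks n q r : ℝ) * bm ≤ C₁ * (n : ℝ) ^ (-c₂))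
    (hratio : ((r : ℝ) / (q : ℝ)) * Real.log p ^ 2 ≤ C₁ * (n : ℝ) ^ (-c₂))
    (hbias : (q : ℝ) * D * Real.log ((p : ℝ) * (n : ℝ)) ^ ((5 : ℝ) / 2)
        ≤ C₁ * (n : ℝ) ^ ((1 : ℝ) / 2 - c₂))
    (hy : yMin c₁ C₁ c₂ ≤ (n : ℝ) ^ (c₂ / 60)) :
    NumHyp (nBlocks n q r) p q r n (√(n : ℝ)) (√((nBlocks n q r * q : ℕ) : ℝ))
      (√(Real.log (p * n))) ((n : ℝ) ^ (c₂ / 60)) D bm c₁ C₁ := by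
  have hC0 : 0 < C₁ := hc₁.trans_le hcC
  have hK := K0_pos
  have hn6 : 6 ≤ n := by omega
  have hnR : (6 : ℝ) ≤ n := by exact_mod_cast hn6
  have hpR : (2 : ℝ) ≤ p := by exact_mod_cast hp
  have hqR : (0 : ℝ) < q := by exact_mod_cast (by omega : 0 < q)
  have hrR : (1 : ℝ) ≤ r := by exact_mod_cast hr
  have hn0 : (0 : ℝ) < n := by linarith
  have hm2 : 2 ≤ nBlocks n q r := by
    unfold nBlocks
    exact (Nat.le_div_iff_mul_le (by omega)).2 hn
  have hmul : nBlocks n q r * (q + r) ≤ n := Nat.div_mul_le_self _ _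
  have hlt : n < (nBlocks n q r + 1) * (q + r) := by
    rw [mul_comm]
    exact Nat.lt_mul_div_succ n (by omega)
  have hmulR : (nBlocks n q r : ℝ) * (q + r) ≤ n := by exact_mod_cast hmul
  have hltR : (n : ℝ) ≤ (nBlocks n q r + 1) * (q + r) := by exact_mod_cast hlt.le
  have hmR : (2 : ℝ) ≤ nBlocks n q r := by exact_mod_cast hm2
  have hrqR : (r : ℝ) ≤ q := by exact_mod_cast hrq.le
  have hlog2 : 0 < Real.log 2 := Real.log_pos (by norm_num)
  have hlogp : Real.log 2 ≤ Real.log p := Real.log_le_log (by norm_num) hpR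
  have hlogn0 : 0 ≤ Real.log n := Real.log_nonneg (by linarith)
  have hLsum : Real.log (p * n) = Real.log p + Real.log n :=
    Real.log_mul (by linarith) (by linarith)
  have hL1 : 1 ≤ Real.log (p * n) := by
    rw [Real.le_log_iff_exp_le (by positivity)]
    have := Real.exp_one_lt_d9
    nlinarith
  set y := (n : ℝ) ^ (c₂ / 60) with hydef
  set L := Real.log (p * n) with hLdef
  set m := nBlocks n q r
  have hy6 : y ^ 6 = (n : ℝ) ^ (c₂ / 10) := by
    rw [hydef, ← Real.rpow_natCast, ← Real.rpow_mul hn0.le]; congr 1; push_cast; ring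
  have hx10 : (n : ℝ) ^ (-c₂) = 1 / (y ^ 6) ^ 10 := by
    rw [hy6, ← Real.rpow_natCast, ← Real.rpow_mul hn0.le, one_div, ← Real.rpow_neg hn0.le]
    congr 1; push_cast; ring
  have hpos : 0 < 2 * C₁ / (Real.log 2 ^ 2 * (c₂ / 10) ^ 2) := by positivity
  have hcE : 0 < 48 * cExp ^ 2 := by have := one_le_cExp; positivity
  have hinv : 0 < 1 / c₁ := by positivity
  unfold yMin at hy
  have hy100 : 100 ≤ y := by linarith
  have hyx : y ≤ y ^ 6 := le_self_pow₀ (by linarith) (by norm_num)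
  have hx0 : 0 < y ^ 6 := by linarith
  have hlogn : Real.log n ≤ y ^ 6 / (c₂ / 10) := by
    rw [hy6]; exact Real.log_le_rpow_div hn0.le (by positivity)
  have hsq5 : √L ^ 5 = L ^ ((5 : ℝ) / 2) := by
    rw [Real.sqrt_eq_rpow, ← Real.rpow_natCast, ← Real.rpow_mul (by linarith)]; norm_num
  have hℓ2 : √L ^ 2 = L := Real.sq_sqrt (by linarith)
  have hℓ4 : √L ^ 4 = L ^ 2 := by
    calc √L ^ 4 = (√L ^ 2) ^ 2 := by ring
      _ = L ^ 2 := by rw [hℓ2]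
  have hS2 : √((m * q : ℕ) : ℝ) ^ 2 = m * q := by
    rw [Real.sq_sqrt (by positivity)]; push_cast; ring
  refine
    { hm := by linarith, hp := by linarith, hr := by linarith, hrq := hrqR,
      hs := Real.one_le_sqrt.2 (by linarith), hN := (Real.sq_sqrt hn0.le).symm, hS := ?_, hS2 := hS2,
      hmN := by nlinarith, hNm := by nlinarith, gap := by nlinarith, hy := hy100, hyN := ?_,
      hℓ := Real.one_le_sqrt.2 hL1, hD := hD, hbm := hbm, hc₁ := ?_, hcC := hcC,
      hC₁ := by linarith, hK0 := by linarith, hcE := by linarith, bias := ?_, ratio := ?_, mix := ?_,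
      hexp := ?_ }
  · apply Real.sqrt_pos.2
    push_cast; positivity
  · rw [hy6]
    calc (n : ℝ) ^ (c₂ / 10) ≤ (n : ℝ) ^ (1 : ℝ) :=
          Real.rpow_le_rpow_of_exponent_le (by linarith) (by linarith)
      _ = n := Real.rpow_one _
  · have : 1 / c₁ ≤ y := by linarith
    rw [div_le_iff₀ hc₁] at this
    linarith
  · rw [hsq5]
    have e : (n : ℝ) ^ ((1 : ℝ) / 2 - c₂) = √(n : ℝ) * (1 / (y ^ 6) ^ 10) := by
      rw [← hx10, Real.sqrt_eq_rpow, ← Real.rpow_add hn0]; rfl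
    rw [e] at hbias
    have hs0 := Real.sqrt_nonneg (n : ℝ)
    calc (q : ℝ) * D * L ^ ((5 : ℝ) / 2) * (y ^ 6) ^ 9 ≤
        C₁ * (√(n : ℝ) * (1 / (y ^ 6) ^ 10)) * (y ^ 6) ^ 9 := by gcongr
      _ ≤ y ^ 6 * (√(n : ℝ) * (1 / (y ^ 6) ^ 10)) * (y ^ 6) ^ 9 := by gcongr; linarith
      _ = √(n : ℝ) := by generalize y ^ 6 = x at hx0; field_simp
  · rw [hℓ4, hLsum]
    rw [hx10] at hratio
    generalize y ^ 6 = x at *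
    have h1 : ((r : ℝ) / q) * Real.log 2 ^ 2 ≤ C₁ * (1 / x ^ 10) := le_trans (by gcongr) hratio
    have h2 : (r : ℝ) / q ≤ C₁ * (1 / x ^ 10) / Real.log 2 ^ 2 := by
      rwa [le_div_iff₀ (by positivity)]
    have h3 : (r : ℝ) / q * Real.log n ^ 2 ≤
        C₁ * (1 / x ^ 10) / Real.log 2 ^ 2 * (x / (c₂ / 10)) ^ 2 := by gcongr
    have hx1 : 1 ≤ x := by linarith
    have h4 : (r : ℝ) / q * (Real.log p + Real.log n) ^ 2 ≤
        (2 * C₁ + 2 * C₁ / (Real.log 2 ^ 2 * (c₂ / 10) ^ 2)) * (1 / x ^ 8) := by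
      have a1 : (Real.log p + Real.log n) ^ 2 ≤ 2 * Real.log p ^ 2 + 2 * Real.log n ^ 2 := by
        nlinarith [sq_nonneg (Real.log p - Real.log n)]
      have a2 : (r : ℝ) / q * (Real.log p + Real.log n) ^ 2 ≤
          (r : ℝ) / q * (2 * Real.log p ^ 2 + 2 * Real.log n ^ 2) := by gcongr
      have a3 : 1 / x ^ 10 ≤ 1 / x ^ 8 := by
        gcongr
        norm_num
      have a4 : C₁ * (1 / x ^ 10) / Real.log 2 ^ 2 * (x / (c₂ / 10)) ^ 2 =
          C₁ / (Real.log 2 ^ 2 * (c₂ / 10) ^ 2) * (1 / x ^ 8) := by field_simp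
      have a5 : C₁ * (1 / x ^ 10) ≤ C₁ * (1 / x ^ 8) := by gcongr
      have a6 : (2 * C₁ + 2 * C₁ / (Real.log 2 ^ 2 * (c₂ / 10) ^ 2)) * (1 / x ^ 8) =
        2 * (C₁ * (1 / x ^ 8)) + 2 * (C₁ / (Real.log 2 ^ 2 * (c₂ / 10) ^ 2) * (1 / x ^ 8)) := by ring
      linarith
    have h5 : (r : ℝ) / q * (Real.log p + Real.log n) ^ 2 ≤ x * (1 / x ^ 8) :=
      h4.trans (by gcongr; linarith)
    have h6 : (r : ℝ) = r / q * q := by field_simp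
    calc (r : ℝ) * (Real.log p + Real.log n) ^ 2 * x ^ 7 =
        (r / q * (Real.log p + Real.log n) ^ 2) * x ^ 7 * q := by field_simp
      _ ≤ (x * (1 / x ^ 8)) * x ^ 7 * q := by gcongr
      _ = q := by field_simp
  · rw [hx10] at hmix
    calc (m : ℝ) * bm * (y ^ 6) ^ 9 ≤ C₁ * (1 / (y ^ 6) ^ 10) * (y ^ 6) ^ 9 := by gcongr
      _ ≤ y ^ 6 * (1 / (y ^ 6) ^ 10) * (y ^ 6) ^ 9 := by gcongr; linarith
      _ = 1 := by generalize y ^ 6 = x at hx0; field_simp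
  · rw [hℓ2, hLdef, Real.exp_neg, Real.exp_log (by positivity)]
    apply le_of_eq; field_simp

/-- Error bounds `ρ ≥ 1` hold trivially, as both numbers compared lie in `[0, 1]`. -/
lemma trivial_bound {Ω : Type*} [MeasurableSpace Ω] {P : Measure Ω} [IsProbabilityMeasure P]
    {A : Set Ω} {α ρ : ℝ} (h0 : 0 < α) (h1 : α < 1) (hρ : 1 ≤ ρ) :
    (P A).toReal ≤ α + ρ ∧ |(P A).toReal - α| ≤ ρ := by
  have a := measureReal_le_one (μ := P) (s := A)
  have b := measureReal_nonneg (μ := P) (s := A)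
  unfold Measure.real at a b
  constructor
  · linarith
  · rw [abs_le]; constructor <;> linarith

end

end ManyMoment

namespace ManyMoment

/-- Theorem 7.1, validity of the block multiplier bootstrap for dependent
data: under the block-variance, mixing and boundedness conditions, there are constants
`c, C > 0` depending only on `c₁, c₂, C₁` such that (i) under `H₀ : μ_j ≤ 0` for all `j`,
`Pr(Ť > ĉ^{BMB}(α)) ≤ α + C n^{-c}`, and (ii) if all `μ_j = 0` then
`|Pr(Ť > ĉ^{BMB}(α)) - α| ≤ C n^{-c}`. -/
theorem statement12 :
    ∀ c₁ C₁ c₂ : ℝ, 0 < c₁ → c₁ ≤ C₁ → 0 < c₂ → c₂ < 1 / 4 →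
    ∃ c C : ℝ, 0 < c ∧ 0 < C ∧
      ∀ (n p q r : ℕ), 2 ≤ p → 1 ≤ r → r < q → 2 * (q + r) ≤ n →
      ∀ α : ℝ, 0 < α → α < 1 / 2 →
      ∀ D : ℝ, 1 ≤ D →
      ∀ Pm : Measure (Fin n → Fin p → ℝ), IsProbabilityMeasure Pm →
      ∀ ν₁ : Measure (Fin p → ℝ),
      (∀ i, Measure.map (fun ω => ω i) Pm = ν₁) →
      (∀ᵐ ω ∂Pm, ∀ i j, |ω i j - popMean ν₁ j| ≤ D) →
      c₁ ≤ sigmaLowSq n p Pm q →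
      sigmaBarSq n p Pm r ⊔ sigmaBarSq n p Pm q ≤ C₁ →
      ((nBlocks n q r : ℝ) * bmix n p Pm r) ⊔ (((r : ℝ) / (q : ℝ)) * Real.log p ^ 2)
        ≤ C₁ * (n : ℝ) ^ (-c₂) →
      (q : ℝ) * D * Real.log ((p : ℝ) * (n : ℝ)) ^ ((5 : ℝ) / 2)
        ≤ C₁ * (n : ℝ) ^ ((1 : ℝ) / 2 - c₂) →
      ((∀ j, popMean ν₁ j ≤ 0) →
        (Pm {ω | cBMB n p q r α ω < TcheckD n p ω}).toReal ≤ α + C * (n : ℝ) ^ (-c)) ∧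
      ((∀ j, popMean ν₁ j = 0) →
        |(Pm {ω | cBMB n p q r α ω < TcheckD n p ω}).toReal - α| ≤ C * (n : ℝ) ^ (-c)) := by
  intro c₁ C₁ c₂ hc₁ hcC hc₂ hc₂'
  have hC0 : 0 < C₁ := hc₁.trans_le hcC
  have hY : 100 ≤ yMin c₁ C₁ c₂ := by
    have := K0_pos
    have : 0 < 1 / c₁ + C₁ + 2 + K0 + 48 * cExp ^ 2 +
        (2 * C₁ + 2 * C₁ / (Real.log 2 ^ 2 * (c₂ / 10) ^ 2)) := by positivity
    unfold yMin
    linarith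
  refine ⟨c₂ / 60, yMin c₁ C₁ c₂, by positivity, by linarith, ?_⟩
  intro n p q r hp hr hrq hn α hα hα' D hD Pm hPm ν₁ hid hbdd hlo hup hgrow hbias
  have : NeZero p := ⟨by omega⟩
  have hn0 : (0 : ℝ) < n := by exact_mod_cast (by omega : 0 < n)
  have hy0 : 0 < (n : ℝ) ^ (c₂ / 60) := Real.rpow_pos_of_pos hn0 _
  have hinv : (n : ℝ) ^ (-(c₂ / 60)) = 1 / (n : ℝ) ^ (c₂ / 60) := by
    rw [Real.rpow_neg hn0.le, one_div]
  rw [hinv]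
  rcases le_or_gt (yMin c₁ C₁ c₂) ((n : ℝ) ^ (c₂ / 60)) with hy | hy
  · have hnum := numHyp_of hc₁ hcC hc₂ hc₂' hp hr hrq hn hD bmix_nonneg
      (le_sup_left.trans hgrow) (le_sup_right.trans hgrow) hbias hy
    have hlog : Real.log (2 * p) ≤ √(Real.log (p * n)) ^ 2 := by
      have hpR : (0 : ℝ) < p := by exact_mod_cast (by omega : 0 < p)
      have hnR : (2 : ℝ) ≤ n := by exact_mod_cast (by omega : 2 ≤ n)
      have h1 : Real.log (2 * p) ≤ Real.log (p * n) :=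
        Real.log_le_log (by positivity) (by nlinarith)
      have hpR' : (2 : ℝ) ≤ p := by exact_mod_cast hp
      rw [Real.sq_sqrt (Real.log_nonneg (by nlinarith))]
      exact h1
    have hres := size_of_param (dataHyp_of (by linarith) hr hrq hid hbdd hlo hup)
      (paramHyp_of_num hr hnum hlog) hα (by linarith)
    have hC20 : 20 * (1 / (n : ℝ) ^ (c₂ / 60)) ≤ yMin c₁ C₁ c₂ * (1 / (n : ℝ) ^ (c₂ / 60)) := by
      gcongr
      linarith
    exact ⟨fun h => (hres.1 h).trans (by linarith), fun h => (hres.2 h).trans hC20⟩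
  -- here `n` is bounded in terms of the constants, and the error bound exceeds `1`
  · have h1 : 1 ≤ yMin c₁ C₁ c₂ * (1 / (n : ℝ) ^ (c₂ / 60)) := by
      rw [mul_one_div, le_div_iff₀ hy0]; linarith
    have := trivial_bound (P := Pm) (A := {ω | cBMB n p q r α ω < TcheckD n p ω}) hα
      (by linarith) h1
    exact ⟨fun _ => this.1, fun _ => this.2⟩

end ManyMoment
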